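/- arXiv:2410.19186 — 2 statements merged into one kernel-verified Lean document; each statement's English description precedes it below -/
import Mathlib

section
/- The integral from 0 to e^{−2π/√10} of E(q^2)^8 E(q^5)^3 / E(q)^7 dq equals (√((10 + 4√5)/5) − 1)/4. -/
open Real

/-- Euler's product `E(q) = ∏_{j=1}^∞ (1 - q^j)`. -/
noncomputable def eulerE (q : ℝ) : ℝ := ∏' j : ℕ, (1 - q ^ (j + 1))


section PartA
open UpperHalfPlane ModularForm CongruenceSubgroup
open scoped MatrixGroups Manifold

structure IsMF (k : ℤ) (F : ℍ → ℂ) : Prop where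
  slash : ∀ γ ∈ Gamma0 10, F ∣[k] γ = F
  holo : MDiff F
  bdd : ∀ γ : SL(2, ℤ), IsBoundedAtImInfty (F ∣[k] γ)

noncomputable def IsMF.toMF {k : ℤ} {F : ℍ → ℂ} (h : IsMF k F) :
    ModularForm ((Gamma0 10 : Subgroup SL(2, ℤ)) : Subgroup (GL (Fin 2) ℝ)) k where
  toFun := F
  slash_action_eq' := by
    rintro γ ⟨g, hg, rfl⟩
    exact h.slash g hg
  holo' := h.holo
  bdd_at_cusps' := by
    intro c hc
    rw [Subgroup.IsArithmetic.isCusp_iff_isCusp_SL2Z] at hc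
    rw [OnePoint.isBoundedAt_iff_forall_SL2Z hc]
    intro γ _
    exact h.bdd γ

def colP (p : ℕ) (g : SL(2, ℤ)) : Option (ZMod p) :=
  if ((g 1 0 : ℤ) : ZMod p) = 0 then none else some (((g 0 0 : ℤ) : ZMod p) * ((g 1 0 : ℤ) : ZMod p)⁻¹)

lemma colP_eq {p : ℕ} [Fact p.Prime] {g h : SL(2, ℤ)} (e : colP p g = colP p h) :
    ((g 0 0 * h 1 0 - h 0 0 * g 1 0 : ℤ) : ZMod p) = 0 := by
  unfold colP at e
  push_cast
  split_ifs at e with h1 h2 h2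
  · simp [h1, h2]
  · have := Option.some_injective _ e
    field_simp at this
    linear_combination this

lemma index_le : (Gamma0 10).index ≤ 18 := by
  have hp2 : Fact (Nat.Prime 2) := ⟨by norm_num⟩
  have hp5 : Fact (Nat.Prime 5) := ⟨by norm_num⟩
  let φ : SL(2, ℤ) ⧸ Gamma0 10 → Option (ZMod 2) × Option (ZMod 5) :=
    fun x => (colP 2 x.out, colP 5 x.out)
  have hφ : Function.Injective φ := by
    intro x y hxy
    simp only [φ, Prod.mk.injEq] at hxy
    have h2 := colP_eq hxy.1
    have h5 := colP_eq hxy.2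
    rw [← QuotientGroup.out_eq' x, ← QuotientGroup.out_eq' y, QuotientGroup.eq, Gamma0_mem]
    rw [ZMod.intCast_zmod_eq_zero_iff_dvd] at h2 h5
    set g := x.out
    set h := y.out
    have : ((10 : ℕ) : ℤ) ∣ (g 0 0 * h 1 0 - h 0 0 * g 1 0 : ℤ) := by
      push_cast at h2 h5 ⊢
      omega
    have e : (g⁻¹ * h) 1 0 = (g 0 0 * h 1 0 - h 0 0 * g 1 0 : ℤ) := by
      rw [Matrix.SpecialLinearGroup.coe_mul, Matrix.SpecialLinearGroup.coe_inv, Matrix.adjugate_fin_two]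
      simp [Matrix.mul_apply, Fin.sum_univ_two]
      ring
    rw [e, ZMod.intCast_zmod_eq_zero_iff_dvd]
    exact this
  have := Nat.card_le_card_of_injective φ hφ
  simpa [Subgroup.index, Nat.card_prod] using this

lemma card_le : Nat.card (𝒮ℒ ⧸ ((Gamma0 10 : Subgroup SL(2, ℤ)) : Subgroup (GL (Fin 2) ℝ)).subgroupOf 𝒮ℒ) ≤ 18 := by
  change Subgroup.relIndex _ _ ≤ 18
  rw [MonoidHom.range_eq_map, Subgroup.relIndex_map_map_of_injective _ _ Matrix.SpecialLinearGroup.mapGL_injective, Subgroup.relIndex_top_right]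
  exact index_le


lemma order_ge_of_isBigO {f : ℂ → ℂ} (hf : AnalyticAt ℂ f 0) {n : ℕ}
    (h : f =O[nhdsWithin 0 {0}ᶜ] fun q => q ^ n) : (n : ℕ∞) ≤ analyticOrderAt f 0 := by
  by_contra! hlt
  have htop : analyticOrderAt f 0 ≠ ⊤ := ne_top_of_lt hlt
  obtain ⟨g, hg, hg0, hfg⟩ := (hf.analyticOrderAt_ne_top).1 htop
  set m := analyticOrderNatAt f 0
  have hm : (m : ℕ∞) = analyticOrderAt f 0 := Nat.cast_analyticOrderNatAt htop
  have hmn : m < n := by rw [← hm] at hlt; exact_mod_cast hlt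
  have h2 : g =O[nhdsWithin 0 {0}ᶜ] fun q => q ^ (n - m) := by
    obtain ⟨C, hC⟩ := h.bound
    refine Asymptotics.IsBigO.of_bound C ?_
    filter_upwards [hC, hfg.filter_mono nhdsWithin_le_nhds, self_mem_nhdsWithin] with q h1 h2 h3
    have h3' : 0 < ‖q‖ ^ m := by have : q ≠ 0 := h3; positivity
    rw [h2] at h1
    simp only [sub_zero, smul_eq_mul, norm_mul, norm_pow] at h1 ⊢
    have : ‖q‖ ^ n = ‖q‖ ^ m * ‖q‖ ^ (n - m) := by rw [← pow_add]; congr 1; omega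
    rw [this] at h1
    nlinarith
  have h3 : Filter.Tendsto g (nhdsWithin 0 {0}ᶜ) (nhds 0) := by
    refine h2.trans_tendsto ?_
    have : ContinuousAt (fun q : ℂ => q ^ (n - m)) 0 := by fun_prop
    have h := this.tendsto
    rw [zero_pow (by omega)] at h
    exact h.mono_left nhdsWithin_le_nhds
  have h4 := tendsto_nhds_unique h3 (hg.continuousAt.tendsto.mono_left nhdsWithin_le_nhds)
  exact hg0 h4.symm

lemma prod_bigO {ι : Type*} [Fintype ι] (G : ι → ℍ → ℂ) (φ : ℍ → ℂ) (i0 : ι)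
    (hb : ∀ i, G i =O[atImInfty] fun _ => (1 : ℂ)) (h1 : G i0 =O[atImInfty] φ) :
    (∏ i, G i) =O[atImInfty] φ := by
  classical
  have := h1.mul (Asymptotics.IsBigO.finsetProd (s := Finset.univ.erase i0) (fun i _ => hb i))
  simp only [Finset.prod_const_one, mul_one] at this
  refine this.congr_left ?_
  intro τ
  rw [← Finset.mul_prod_erase Finset.univ G (Finset.mem_univ i0)]
  simp [Finset.prod_apply]

lemma sturm10 {k : ℕ} {F : ℍ → ℂ} (h : IsMF k F) {n : ℕ} (hn : 18 * k / 12 < n)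
    (hO : F =O[atImInfty] fun τ => Function.Periodic.qParam 1 (τ : ℂ) ^ n) : F = 0 := by
  let f := h.toMF
  have key : ModularForm.norm 𝒮ℒ f = 0 := by
    apply sturm_bound_levelOne
    have hO2 : (ModularForm.norm 𝒮ℒ f : ℍ → ℂ) =O[atImInfty] fun τ => Function.Periodic.qParam 1 (τ : ℂ) ^ n := by
      classical
      rw [ModularForm.coe_norm]
      let := Fintype.ofFinite (𝒮ℒ ⧸ ((Gamma0 10 : Subgroup SL(2, ℤ)) : Subgroup (GL (Fin 2) ℝ)).subgroupOf 𝒮ℒ)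
      have hb : ∀ q, (SlashInvariantForm.quotientFunc (ℋ := 𝒮ℒ) f q) =O[atImInfty] fun τ => (1 : ℂ) := by
        refine Quotient.forall.mpr ?_
        rintro ⟨_, ⟨g, rfl⟩⟩
        have := h.bdd g⁻¹
        rw [UpperHalfPlane.IsBoundedAtImInfty, Filter.BoundedAtFilter] at this
        rw [SlashInvariantForm.quotientFunc_mk]
        simp only [← map_inv]
        refine Asymptotics.IsBigO.trans this ?_
        exact Asymptotics.isBigO_of_le _ (by simp)
      have h1 : (SlashInvariantForm.quotientFunc (ℋ := 𝒮ℒ) f ⟦1⟧) =O[atImInfty] fun τ => Function.Periodic.qParam 1 (τ : ℂ) ^ n := by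
        rw [SlashInvariantForm.quotientFunc_mk]
        have e : (f : ℍ → ℂ) = F := rfl
        simpa [e] using hO
      exact prod_bigO _ _ ⟦1⟧ hb h1
    have han : AnalyticAt ℂ (cuspFunction 1 (ModularForm.norm 𝒮ℒ f)) 0 :=
      ModularFormClass.analyticAt_cuspFunction_zero _ one_pos one_mem_strictPeriods_SL
    have hO3 : (cuspFunction 1 (ModularForm.norm 𝒮ℒ f)) =O[nhdsWithin 0 {0}ᶜ] fun q => q ^ n := by
      have h5 : Filter.Tendsto (fun q => ofComplex (Function.Periodic.invQParam 1 q)) (nhdsWithin 0 {0}ᶜ) atImInfty :=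
        tendsto_comap_im_ofComplex.comp (Function.Periodic.invQParam_tendsto one_pos)
      refine (hO2.comp_tendsto h5).congr' ?_ ?_
      · filter_upwards [self_mem_nhdsWithin] with q hq
        simp [cuspFunction, Function.Periodic.cuspFunction_eq_of_nonzero _ _ hq]
      · have hlt : ∀ᶠ q : ℂ in nhdsWithin 0 {0}ᶜ, ‖q‖ < 1 := by
          apply Filter.Eventually.filter_mono nhdsWithin_le_nhds
          have := Metric.ball_mem_nhds (0:ℂ) one_pos
          filter_upwards [this] with q hq
          simpa using hq
        filter_upwards [self_mem_nhdsWithin, hlt] with q hq hq1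
        have := Function.Periodic.im_invQParam_pos_of_norm_lt_one one_pos hq1 hq
        simp only [Function.comp_apply]
        rw [ofComplex_apply_of_im_pos this]
        simp only
        rw [Function.Periodic.qParam_right_inv one_ne_zero hq]
    have hord := order_ge_of_isBigO han hO3
    rw [natCast_le_analyticOrderAt_iff_iteratedDeriv_eq_zero han] at hord
    have h6 : (n : ℕ∞) ≤ (qExpansion 1 (ModularForm.norm 𝒮ℒ f)).order := by
      apply PowerSeries.nat_le_order
      intro i hi
      rw [qExpansion_coeff, hord i hi, mul_zero]
    refine lt_of_lt_of_le ?_ h6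
    have := card_le
    have h7 : (k : ℤ) * (Nat.card (𝒮ℒ ⧸ ((Gamma0 10 : Subgroup SL(2, ℤ)) : Subgroup (GL (Fin 2) ℝ)).subgroupOf 𝒮ℒ) : ℤ) ≤ k * 18 := by
      gcongr; exact_mod_cast this
    norm_cast at h7 ⊢
    exact lt_of_le_of_lt (Nat.div_le_div_right (h7.trans_eq (mul_comm _ _))) hn
  exact (ModularForm.norm_eq_zero_iff (f := f) 𝒮ℒ).1 key
end PartA


section PartB1
open UpperHalfPlane ModularForm CongruenceSubgroup
open scoped MatrixGroups Manifold

noncomputable def PQ : ℂ → ℂ := cuspFunction 1 EisensteinSeries.E2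

noncomputable def cE (m : ℕ) : ℂ := if m = 0 then 1 else -24 * ArithmeticFunction.sigma 1 m

noncomputable def qp (τ : ℂ) : ℂ := Function.Periodic.qParam 1 τ

lemma qp_eq (τ : ℂ) : qp τ = Complex.exp (2 * π * Complex.I * τ) := by
  simp [qp, Function.Periodic.qParam]

lemma E2_hasSum (τ : ℍ) : HasSum (fun m ↦ cE m • Function.Periodic.qParam 1 (τ : ℂ) ^ m) (EisensteinSeries.E2 τ) := by
  have := EisensteinSeries.hasSum_qExpansion_E2 (z := τ)
  rw [← qp_eq] at this
  exact this

lemma E2_periodic : Function.Periodic (EisensteinSeries.E2 ∘ ofComplex) ((1 : ℝ) : ℂ) := by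
  intro w
  by_cases hw : 0 < w.im
  · have h2 : 0 < (w + (1 : ℝ)).im := by simpa using hw
    simp only [Function.comp_apply]
    have e1 := E2_hasSum (ofComplex w)
    have e2 := E2_hasSum (ofComplex (w + (1:ℝ)))
    refine e2.unique ?_
    convert! e1 using 4
    simp only [ofComplex_apply_of_im_pos hw, ofComplex_apply_of_im_pos h2]
    change qp _ = qp _
    rw [qp_eq, qp_eq, mul_add, Complex.exp_add]
    simp
  · have h2 : ¬ 0 < (w + (1 : ℝ)).im := by simpa using hw
    simp only [Function.comp_apply]
    rw [ofComplex_apply_of_im_nonpos (not_lt.1 hw), ofComplex_apply_of_im_nonpos (not_lt.1 h2)]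

lemma PQ_qp (τ : ℍ) : PQ (qp τ) = EisensteinSeries.E2 τ :=
  eq_cuspFunction τ one_ne_zero E2_periodic

lemma PQ_fps : HasFPowerSeriesOnBall PQ (.ofScalars ℂ cE) 0 1 := by
  apply hasFPowerSeriesOnBall_cuspFunction one_pos _ E2_hasSum
  exact analyticAt_cuspFunction_zero one_pos E2_periodic E2_mdifferentiable
    EisensteinSeries.isBoundedAtImInfty_E2

lemma PQ_diff : DifferentiableOn ℂ PQ (Metric.ball 0 1) :=
  differentiableOn_cuspFunction_ball one_pos E2_periodic E2_mdifferentiable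
    EisensteinSeries.isBoundedAtImInfty_E2

lemma norm_qp (τ : ℂ) : ‖qp τ‖ = Real.exp (-2 * π * τ.im) := by
  simpa [qp] using Function.Periodic.norm_qParam 1 τ

noncomputable def E2s (z : ℍ) : ℂ := EisensteinSeries.E2 z - 3 / (π * z.im)

lemma E2s_smul (γ : SL(2, ℤ)) (z : ℍ) : E2s (γ • z) = denom γ z ^ 2 * E2s z := by
  have h := congrFun (EisensteinSeries.E2_slash_action γ) z
  rw [SL_slash_apply] at h
  simp only [Pi.sub_apply, Pi.smul_apply, EisensteinSeries.D2, riemannZeta_two, smul_eq_mul] at h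
  have hd : denom γ z ≠ 0 := denom_ne_zero _ _
  have hy : (z.im : ℂ) ≠ 0 := by exact_mod_cast z.im_ne_zero
  have hpi : (π : ℂ) ≠ 0 := by exact_mod_cast Real.pi_ne_zero
  have him : ((γ • z).im : ℂ) = z.im / (denom γ z * (denom γ z - 2 * Complex.I * (γ 1 0 : ℤ) * z.im)) := by
    have h1 : (γ • z).im = _ := ModularGroup.im_smul_eq_div_normSq γ z
    rw [h1]
    push_cast
    rw [Complex.normSq_eq_conj_mul_self, mul_comm]
    congr 2
    apply Complex.ext <;> simp [ModularGroup.denom_apply]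
    ring
  have hne : denom γ z - 2 * Complex.I * (γ 1 0 : ℤ) * z.im ≠ 0 := by
    intro h0
    rw [h0] at him
    simp at him
    exact (γ • z).im_ne_zero (by exact_mod_cast him)
  have e : EisensteinSeries.E2 (γ • z) = denom γ z ^ 2 * (EisensteinSeries.E2 z -  1 / (2 * (π ^ 2 / 6)) * (2 * π * Complex.I * (γ 1 0 : ℤ) / denom γ z)) := by
    rw [← h, zpow_neg]
    field_simp
  rw [E2s, E2s, e, him]
  field_simp
  ring

lemma E2s_inv (γ : SL(2, ℤ)) (z : ℍ) : ‖E2s (γ • z)‖ * (γ • z).im = ‖E2s z‖ * z.im := by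
  have h1 : (γ • z).im = _ := ModularGroup.im_smul_eq_div_normSq γ z
  have hd : ‖denom γ z‖ ≠ 0 := norm_ne_zero_iff.2 (denom_ne_zero γ z)
  rw [E2s_smul, h1, norm_mul, norm_pow, Complex.normSq_eq_norm_sq]
  field_simp

lemma E2s_bound : ∃ C : ℝ, 0 ≤ C ∧ ∀ z : ℍ, 1 / 2 ≤ z.im → ‖E2s z‖ ≤ C := by
  have hsub : Metric.closedBall (0:ℂ) (Real.exp (-π)) ⊆ Metric.ball 0 1 := by
    apply Metric.closedBall_subset_ball
    rw [Real.exp_lt_one_iff]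
    linarith [Real.pi_pos]
  obtain ⟨C, hC⟩ := (isCompact_closedBall (0:ℂ) (Real.exp (-π))).exists_bound_of_continuousOn
    (PQ_diff.continuousOn.mono hsub)
  refine ⟨C + 6 / π, ?_, ?_⟩
  · have h1 := hC 0 (by simp; positivity)
    have h2 := norm_nonneg (PQ 0)
    have h3 : 0 ≤ 6 / π := by have := Real.pi_pos; positivity
    linarith
  intro z hz
  rw [E2s]
  refine (norm_sub_le _ _).trans (add_le_add ?_ ?_)
  · rw [← PQ_qp]
    apply hC
    rw [mem_closedBall_zero_iff, norm_qp, Real.exp_le_exp]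
    have := Real.pi_pos
    have : (z : ℂ).im = z.im := rfl
    nlinarith
  · have := Real.pi_pos
    have := z.im_pos
    rw [norm_div, norm_mul, Complex.norm_real, Complex.norm_real, Real.norm_of_nonneg (by positivity),
      Real.norm_of_nonneg (by positivity)]
    simp
    rw [div_le_div_iff₀ (by positivity) (by positivity)]
    nlinarith

noncomputable def dm (d : ℕ) [NeZero d] (τ : ℍ) : ℍ :=
  ⟨d * τ, by have := τ.im_pos; have : 0 < d := Nat.pos_of_neZero d; simp; positivity⟩

lemma coe_dm (d : ℕ) [NeZero d] (τ : ℍ) : (dm d τ : ℂ) = d * τ := rfl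
lemma im_dm (d : ℕ) [NeZero d] (τ : ℍ) : (dm d τ).im = d * τ.im := by
  change (dm d τ : ℂ).im = _
  simp [coe_dm]

lemma E2s_dm_bound (C : ℝ) (hC : 0 ≤ C) (h : ∀ z : ℍ, 1 / 2 ≤ z.im → ‖E2s z‖ ≤ C) (d : ℕ) [NeZero d] (γ : SL(2, ℤ))
    (τ : ℍ) (hτ : 1 ≤ τ.im) : ‖E2s (dm d (γ • τ))‖ * (γ • τ).im ≤ C * τ.im := by
  set w := dm d (γ • τ) with hw
  have hd : (0:ℝ) < d := by exact_mod_cast Nat.pos_of_neZero d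
  obtain ⟨g, hg⟩ := ModularGroup.exists_one_half_le_im_smul w
  have h1 := E2s_inv g w
  have h2 := h _ hg
  have h3 : (g • w).im = _ := ModularGroup.im_smul_eq_div_normSq g w
  have h4 : (γ • τ).im = _ := ModularGroup.im_smul_eq_div_normSq γ τ
  have h5 : w.im = d * (γ • τ).im := im_dm _ _
  have h6 : denom g w * denom γ τ = ((g 1 0 * d * γ 0 0 + g 1 1 * γ 1 0 : ℤ) : ℂ) * τ + ((g 1 0 * d * γ 0 1 + g 1 1 * γ 1 1 : ℤ) : ℂ) := by
    have hne : denom γ τ ≠ 0 := denom_ne_zero _ _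
    have : (w : ℂ) * denom γ τ = d * ((γ 0 0 : ℤ) * (τ : ℂ) + (γ 0 1 : ℤ)) := by
      rw [hw, coe_dm, UpperHalfPlane.specialLinearGroup_apply]
      rw [ModularGroup.denom_apply] at hne ⊢
      simp at hne ⊢
      rw [mul_assoc, div_mul_cancel₀ _ hne]
    rw [ModularGroup.denom_apply g w, add_mul, mul_assoc, this, ModularGroup.denom_apply γ]
    push_cast
    ring
  have h7 : denom g w * denom γ τ ≠ 0 := mul_ne_zero (denom_ne_zero _ _) (denom_ne_zero _ _)
  have h8 : 1 ≤ ‖denom g w * denom γ τ‖ := by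
    rw [h6] at h7 ⊢
    generalize (g 1 0 * d * γ 0 0 + g 1 1 * γ 1 0 : ℤ) = A at *
    generalize (g 1 0 * d * γ 0 1 + g 1 1 * γ 1 1 : ℤ) = B at *
    by_cases hA : A = 0
    · subst hA
      simp at h7 ⊢
      exact_mod_cast Int.one_le_abs h7
    · refine le_trans ?_ (Complex.abs_im_le_norm _)
      have hA' : (1:ℝ) ≤ |(A:ℝ)| := by exact_mod_cast Int.one_le_abs hA
      simp [abs_mul]
      rw [abs_of_pos τ.im_pos]
      nlinarith
  have h9 : (g • w).im ≤ d * τ.im := by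
    rw [h3, h5, h4, mul_div_assoc', div_div, ← Complex.normSq_mul, Complex.normSq_eq_norm_sq, mul_comm (denom γ τ)]
    have := τ.im_pos
    apply div_le_self (by positivity)
    nlinarith
  have h10 : ‖E2s w‖ * (d * (γ • τ).im) ≤ C * (d * τ.im) := by
    rw [← h5, ← h1]
    have := (g • w).im_pos
    gcongr
  have : d * (‖E2s w‖ * (γ • τ).im) ≤ d * (C * τ.im) := by linarith
  exact le_of_mul_le_mul_left this hd
end PartB1


section PartB2
open UpperHalfPlane ModularForm CongruenceSubgroup
open scoped MatrixGroups Manifold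

lemma IsMF.add {k : ℤ} {F G : ℍ → ℂ} (hF : IsMF k F) (hG : IsMF k G) : IsMF k (F + G) where
  slash γ hγ := by rw [SlashAction.add_slash, hF.slash γ hγ, hG.slash γ hγ]
  holo := hF.holo.add hG.holo
  bdd γ := by rw [SlashAction.add_slash]; exact (hF.bdd γ).add (hG.bdd γ)

lemma IsMF.smul {k : ℤ} {F : ℍ → ℂ} (c : ℂ) (hF : IsMF k F) : IsMF k (c • F) where
  slash γ hγ := by rw [SL_smul_slash, hF.slash γ hγ]
  holo := hF.holo.const_smul c
  bdd γ := by rw [SL_smul_slash]; exact (hF.bdd γ).const_smul_left c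

lemma IsMF.mul {k l : ℤ} {F G : ℍ → ℂ} (hF : IsMF k F) (hG : IsMF l G) : IsMF (k + l) (F * G) where
  slash γ hγ := by rw [mul_slash_SL2, hF.slash γ hγ, hG.slash γ hγ]
  holo := hF.holo.mul hG.holo
  bdd γ := by rw [mul_slash_SL2]; exact (hF.bdd γ).mul (hG.bdd γ)

lemma bdd_D {G : ℍ → ℂ} (hG : MDiff G) (hb : IsBoundedAtImInfty G) :
    IsBoundedAtImInfty (Derivative.normalizedDerivOfComplex G) := by
  rw [isBoundedAtImInfty_iff] at hb ⊢
  obtain ⟨M, A, h⟩ := hb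
  refine ⟨‖(2 * π * Complex.I)⁻¹‖ * (M / 1), max A 0 + 2, fun z hz => ?_⟩
  rw [Derivative.normalizedDerivOfComplex, norm_mul]
  gcongr
  have hA : A + 2 ≤ z.im := le_trans (by gcongr; exact le_max_left _ _) hz
  have h0 : 0 + 2 ≤ z.im := le_trans (by gcongr; exact le_max_right _ _) hz
  have him : ∀ w ∈ Metric.closedBall (z:ℂ) 1, z.im - 1 ≤ w.im := by
    intro w hw
    rw [mem_closedBall_iff_norm'] at hw
    have := (Complex.abs_im_le_norm ((z:ℂ) - w)).trans hw
    rw [Complex.sub_im] at this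
    have := (abs_le.1 this).2
    have e : (z:ℂ).im = z.im := rfl
    linarith
  have hdiff : DifferentiableOn ℂ (G ∘ ofComplex) {z | 0 < z.im} :=
    UpperHalfPlane.mdifferentiable_iff.1 hG
  apply Complex.norm_deriv_le_of_forall_mem_sphere_norm_le one_pos
  · refine DifferentiableOn.diffContOnCl ?_
    refine hdiff.mono ?_
    rw [closure_ball _ one_ne_zero]
    intro w hw
    have := him w hw
    change 0 < w.im
    linarith
  · intro w hw
    have h1 := him w (Metric.sphere_subset_closedBall hw)
    have hw0 : 0 < w.im := by linarith
    rw [Function.comp_apply, ofComplex_apply_of_im_pos hw0]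
    apply h
    change A ≤ w.im
    linarith

lemma IsMF.serre {k : ℤ} {F : ℍ → ℂ} (hF : IsMF k F) : IsMF (k + 2) (Derivative.serreDerivative k F) where
  slash γ hγ := Derivative.serreDerivative_slash_invariant hF.holo (hF.slash γ hγ)
  holo := Derivative.serreDerivative_mdifferentiable _ hF.holo
  bdd γ := by
    rw [Derivative.serreDerivative_slash_equivariant hF.holo]
    have h1 := bdd_D (hF.holo.slash k γ) (hF.bdd γ)
    have h2 := ((EisensteinSeries.isBoundedAtImInfty_E2.mul (hF.bdd γ))).const_smul_left (k * 12⁻¹ : ℂ)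
    have h3 := Asymptotics.IsBigO.sub h1 h2
    refine h3.congr_left ?_
    intro z
    simp [ModularForm.SL_slash]
    ring

lemma E2s_dm_gamma {γ : SL(2, ℤ)} (hγ : γ ∈ Gamma0 10) (d : ℕ) [NeZero d] (hd : d ∣ 10) (τ : ℍ) :
    E2s (dm d (γ • τ)) = denom γ τ ^ 2 * E2s (dm d τ) := by
  rw [Gamma0_mem, ZMod.intCast_zmod_eq_zero_iff_dvd] at hγ
  have hdvd : (d : ℤ) ∣ γ 1 0 := dvd_trans (by exact_mod_cast hd) hγ
  obtain ⟨c, hc⟩ := hdvd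
  have hdet : γ 0 0 * γ 1 1 - γ 0 1 * γ 1 0 = 1 := by
    rw [← Matrix.det_fin_two]; exact γ.2
  let g : SL(2, ℤ) := ⟨!![γ 0 0, γ 0 1 * d; c, γ 1 1], by
    rw [Matrix.det_fin_two_of]
    rw [hc] at hdet
    linarith⟩
  have hden : denom g (dm d τ) = denom γ τ := by
    rw [ModularGroup.denom_apply, ModularGroup.denom_apply, hc, coe_dm]
    simp [g]
    ring
  have hg : dm d (γ • τ) = g • dm d τ := by
    apply UpperHalfPlane.ext
    rw [coe_dm, UpperHalfPlane.coe_specialLinearGroup_apply, UpperHalfPlane.coe_specialLinearGroup_apply]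
    simp only [hc, coe_dm, g]
    simp
    ring
  rw [hg, E2s_smul, hden]

noncomputable def Wt (x1 x2 x5 x10 : ℂ) (τ : ℍ) : ℂ :=
  x1 * EisensteinSeries.E2 (dm 1 τ) + 2 * x2 * EisensteinSeries.E2 (dm 2 τ) +
  5 * x5 * EisensteinSeries.E2 (dm 5 τ) + 10 * x10 * EisensteinSeries.E2 (dm 10 τ)

lemma Wt_eq {x1 x2 x5 x10 : ℂ} (h : x1 + x2 + x5 + x10 = 0) (τ : ℍ) : Wt x1 x2 x5 x10 τ =
  x1 * E2s (dm 1 τ) + 2 * x2 * E2s (dm 2 τ) +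
  5 * x5 * E2s (dm 5 τ) + 10 * x10 * E2s (dm 10 τ) := by
  have hy : (τ.im : ℂ) ≠ 0 := by exact_mod_cast τ.im_ne_zero
  have hpi : (π : ℂ) ≠ 0 := by exact_mod_cast Real.pi_ne_zero
  simp only [Wt, E2s, im_dm]
  push_cast
  field_simp
  linear_combination 3 * h

lemma qp_pow (τ : ℂ) (d : ℕ) : qp (d * τ) = qp τ ^ d := by
  rw [qp_eq, qp_eq, ← Complex.exp_nat_mul]
  congr 1
  ring

lemma E2_dm (d : ℕ) [NeZero d] (τ : ℍ) : EisensteinSeries.E2 (dm d τ) = PQ (qp τ ^ d) := by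
  rw [← PQ_qp, coe_dm, qp_pow]

lemma norm_qp_lt (τ : ℍ) : ‖qp τ‖ < 1 := by
  rw [norm_qp, Real.exp_lt_one_iff]
  have := Real.pi_pos
  have : 0 < (τ : ℂ).im := τ.im_pos
  nlinarith

lemma hasDerivAt_qp (z : ℂ) : HasDerivAt qp (2 * π * Complex.I * qp z) z := by
  have : qp = fun z => Complex.exp (2 * π * Complex.I * z) := funext qp_eq
  rw [this]
  have h := ((hasDerivAt_id z).const_mul (2 * π * Complex.I)).cexp
  simpa [mul_comm] using h

lemma hasDerivAt_q {φ : ℂ → ℂ} (hφ : DifferentiableOn ℂ φ (Metric.ball 0 1)) (τ : ℍ) :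
    HasDerivAt ((fun τ : ℍ => φ (qp τ)) ∘ ofComplex) (deriv φ (qp τ) * (2 * π * Complex.I * qp τ)) τ := by
  have h1 : HasDerivAt φ (deriv φ (qp τ)) (qp τ) := by
    apply (hφ.differentiableAt _).hasDerivAt
    apply Metric.isOpen_ball.mem_nhds
    simpa using norm_qp_lt τ
  have h2 := h1.comp (τ : ℂ) (hasDerivAt_qp τ)
  refine h2.congr_of_eventuallyEq ?_
  filter_upwards [isOpen_upperHalfPlaneSet.mem_nhds τ.im_pos] with w hw
  simp only [Function.comp_apply]
  rw [ofComplex_apply_of_im_pos hw]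

lemma mdiff_q {φ : ℂ → ℂ} (hφ : DifferentiableOn ℂ φ (Metric.ball 0 1)) :
    MDiff (fun τ : ℍ => φ (qp τ)) := by
  rw [UpperHalfPlane.mdifferentiable_iff]
  intro z hz
  exact (hasDerivAt_q hφ ⟨z, hz⟩).differentiableAt.differentiableWithinAt

lemma D_q {φ : ℂ → ℂ} (hφ : DifferentiableOn ℂ φ (Metric.ball 0 1)) (τ : ℍ) :
    Derivative.normalizedDerivOfComplex (fun τ : ℍ => φ (qp τ)) τ = qp τ * deriv φ (qp τ) := by
  rw [Derivative.normalizedDerivOfComplex, (hasDerivAt_q hφ τ).deriv]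
  have := Complex.two_pi_I_ne_zero
  field_simp

noncomputable def WtQ (x1 x2 x5 x10 : ℂ) (q : ℂ) : ℂ :=
  x1 * PQ (q ^ 1) + 2 * x2 * PQ (q ^ 2) + 5 * x5 * PQ (q ^ 5) + 10 * x10 * PQ (q ^ 10)

lemma Wt_q (x1 x2 x5 x10 : ℂ) : Wt x1 x2 x5 x10 = fun τ : ℍ => WtQ x1 x2 x5 x10 (qp τ) := by
  ext τ
  simp only [Wt, WtQ, E2_dm]

lemma PQ_pow_diff {d : ℕ} (hd : d ≠ 0) : DifferentiableOn ℂ (fun q => PQ (q ^ d)) (Metric.ball 0 1) := by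
  refine PQ_diff.comp (by fun_prop) ?_
  intro q hq
  simp only [Metric.mem_ball, dist_zero_right, norm_pow] at hq ⊢
  exact pow_lt_one₀ (norm_nonneg _) hq hd

lemma WtQ_diff (x1 x2 x5 x10 : ℂ) : DifferentiableOn ℂ (WtQ x1 x2 x5 x10) (Metric.ball 0 1) := by
  have h1 := PQ_pow_diff one_ne_zero
  have h2 := PQ_pow_diff two_ne_zero
  have h5 := PQ_pow_diff (d := 5) (by norm_num)
  have h10 := PQ_pow_diff (d := 10) (by norm_num)
  unfold WtQ
  fun_prop

lemma Wt_MF {x1 x2 x5 x10 : ℂ} (h : x1 + x2 + x5 + x10 = 0) : IsMF 2 (Wt x1 x2 x5 x10) where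
  slash γ hγ := by
    ext τ
    have hd : denom γ τ ≠ 0 := denom_ne_zero _ _
    rw [SL_slash_apply, Wt_eq h, Wt_eq h, E2s_dm_gamma hγ 1 (by norm_num), E2s_dm_gamma hγ 2 (by norm_num),
      E2s_dm_gamma hγ 5 (by norm_num), E2s_dm_gamma hγ 10 (by norm_num), zpow_neg]
    norm_cast
    field_simp
  holo := by
    rw [Wt_q]
    exact mdiff_q (WtQ_diff _ _ _ _)
  bdd γ := by
    obtain ⟨C, hC, hb⟩ := E2s_bound
    rw [isBoundedAtImInfty_iff]
    refine ⟨(‖x1‖ + 2 * ‖x2‖ + 5 * ‖x5‖ + 10 * ‖x10‖) * C, 1, fun τ hτ => ?_⟩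
    have hd : denom γ τ ≠ 0 := denom_ne_zero _ _
    have hy := τ.im_pos
    have h1 := E2s_dm_bound C hC hb 1 γ τ hτ
    have h2 := E2s_dm_bound C hC hb 2 γ τ hτ
    have h5 := E2s_dm_bound C hC hb 5 γ τ hτ
    have h10 := E2s_dm_bound C hC hb 10 γ τ hτ
    have h4 : (γ • τ).im = _ := ModularGroup.im_smul_eq_div_normSq γ τ
    have hi := (γ • τ).im_pos
    have e : ‖(Wt x1 x2 x5 x10 ∣[(2:ℤ)] γ) τ‖ = ‖Wt x1 x2 x5 x10 (γ • τ)‖ * (γ • τ).im / τ.im := by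
      rw [SL_slash_apply, norm_mul, zpow_neg, norm_inv, h4, Complex.normSq_eq_norm_sq]
      have : ‖denom γ τ‖ ≠ 0 := norm_ne_zero_iff.2 hd
      norm_cast
      rw [norm_pow]
      field_simp
    rw [e, div_le_iff₀ hy, Wt_eq h]
    have n : ‖x1 * E2s (dm 1 (γ • τ)) + 2 * x2 * E2s (dm 2 (γ • τ)) + 5 * x5 * E2s (dm 5 (γ • τ)) + 10 * x10 * E2s (dm 10 (γ • τ))‖ ≤ 
      ‖x1‖ * ‖E2s (dm 1 (γ • τ))‖ + 2 * ‖x2‖ * ‖E2s (dm 2 (γ • τ))‖ + 5 * ‖x5‖ * ‖E2s (dm 5 (γ • τ))‖ + 10 * ‖x10‖ * ‖E2s (dm 10 (γ • τ))‖ := by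
      refine (norm_add_le _ _).trans (add_le_add ((norm_add_le _ _).trans (add_le_add ((norm_add_le _ _).trans (add_le_add ?_ ?_)) ?_)) ?_) <;> simp
    refine (mul_le_mul_of_nonneg_right n hi.le).trans ?_
    have k1 := mul_le_mul_of_nonneg_left h1 (norm_nonneg x1)
    have k2 := mul_le_mul_of_nonneg_left h2 (norm_nonneg x2)
    have k5 := mul_le_mul_of_nonneg_left h5 (norm_nonneg x5)
    have k10 := mul_le_mul_of_nonneg_left h10 (norm_nonneg x10)
    linarith
end PartB2


section PartC
open Filter Topology

def Tr (f p : ℂ → ℂ) : Prop := ∃ r : ℂ → ℂ, AnalyticAt ℂ r 0 ∧ ∀ᶠ q in 𝓝 (0:ℂ), f q = p q + q ^ 13 * r q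

lemma Tr.congr' {f p p' : ℂ → ℂ} (h : Tr f p) (s : ℂ → ℂ) (hs : AnalyticAt ℂ s 0)
    (e : ∀ q, p q = p' q + q ^ 13 * s q) : Tr f p' := by
  obtain ⟨r, hr, h⟩ := h
  refine ⟨s + r, hs.add hr, ?_⟩
  filter_upwards [h] with q hq
  rw [hq, e, Pi.add_apply]
  ring

lemma Tr.add {f p g s : ℂ → ℂ} (h : Tr f p) (h' : Tr g s) : Tr (fun q => f q + g q) (fun q => p q + s q) := by
  obtain ⟨r, hr, h⟩ := h
  obtain ⟨r', hr', h'⟩ := h'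
  refine ⟨r + r', hr.add hr', ?_⟩
  filter_upwards [h, h'] with q hq hq'
  rw [hq, hq', Pi.add_apply]
  ring

lemma Tr.const_mul {f p : ℂ → ℂ} (c : ℂ) (h : Tr f p) : Tr (fun q => c * f q) (fun q => c * p q) := by
  obtain ⟨r, hr, h⟩ := h
  refine ⟨fun q => c * r q, by fun_prop, ?_⟩
  filter_upwards [h] with q hq
  rw [hq]
  ring

lemma Tr.sub {f p g s : ℂ → ℂ} (h : Tr f p) (h' : Tr g s) : Tr (fun q => f q - g q) (fun q => p q - s q) := by
  obtain ⟨r, hr, h⟩ := h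
  obtain ⟨r', hr', h'⟩ := h'
  refine ⟨r - r', hr.sub hr', ?_⟩
  filter_upwards [h, h'] with q hq hq'
  rw [hq, hq', Pi.sub_apply]
  ring

lemma Tr.mul {f p g s : ℂ → ℂ} (h : Tr f p) (h' : Tr g s) (hp : AnalyticAt ℂ p 0 := by fun_prop)
    (hs : AnalyticAt ℂ s 0 := by fun_prop) : Tr (fun q => f q * g q) (fun q => p q * s q) := by
  obtain ⟨r, hr, h⟩ := h
  obtain ⟨r', hr', h'⟩ := h'
  refine ⟨fun q => p q * r' q + r q * s q + q ^ 13 * r q * r' q, by fun_prop, ?_⟩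
  filter_upwards [h, h'] with q hq hq'
  rw [hq, hq']
  ring

lemma Tr.theta {f p : ℂ → ℂ} (h : Tr f p) (p' : ℂ → ℂ) (hp : ∀ q, HasDerivAt p (p' q) q) :
    Tr (fun q => q * deriv f q) (fun q => q * p' q) := by
  obtain ⟨r, hr, h⟩ := h
  refine ⟨fun q => 13 * r q + q * deriv r q, ?_, ?_⟩
  · have := hr.deriv
    fun_prop
  filter_upwards [h.eventually_nhds, hr.eventually_analyticAt] with q hq hrq
  have h1 := (hp q).add (((hasDerivAt_id q).pow 13).mul hrq.differentiableAt.hasDerivAt)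
  have h2 := h1.congr_of_eventuallyEq hq
  rw [h2.deriv]
  simp
  ring

lemma Tr.isBigO {f : ℂ → ℂ} (h : Tr f (fun _ => 0)) : f =O[𝓝 0] fun q => q ^ 13 := by
  obtain ⟨r, hr, h⟩ := h
  have h1 : r =O[𝓝 0] fun _ => (1:ℂ) := hr.continuousAt.isBigO_one ℂ
  have h2 := (Asymptotics.isBigO_refl (fun q : ℂ => q ^ 13) (𝓝 0)).mul h1
  refine h2.congr' ?_ ?_
  · filter_upwards [h] with q hq
    rw [hq]; simp
  · filter_upwards with q
    simp

def pP (q : ℂ) : ℂ := (1) + (-24)*q^1 + (-72)*q^2 + (-96)*q^3 + (-168)*q^4 + (-144)*q^5 + (-288)*q^6 + (-192)*q^7 + (-360)*q^8 + (-312)*q^9 + (-432)*q^10 + (-288)*q^11 + (-672)*q^12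

lemma tr_PQ : Tr PQ pP := by
  have h := PQ_fps.hasFPowerSeriesAt.isBigO_sub_partialSum_pow 13
  have hpart : ∀ y, (FormalMultilinearSeries.ofScalars ℂ cE).partialSum 13 y = pP y := by
    intro y
    simp only [FormalMultilinearSeries.partialSum, Finset.sum_range_succ, Finset.sum_range_zero,
      FormalMultilinearSeries.ofScalars_apply_eq, cE, pP]
    have s1 : ArithmeticFunction.sigma 1 1 = 1 := by decide
    have s2 : ArithmeticFunction.sigma 1 2 = 3 := by decide
    have s3 : ArithmeticFunction.sigma 1 3 = 4 := by decide
    have s4 : ArithmeticFunction.sigma 1 4 = 7 := by decide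
    have s5 : ArithmeticFunction.sigma 1 5 = 6 := by decide
    have s6 : ArithmeticFunction.sigma 1 6 = 12 := by decide
    have s7 : ArithmeticFunction.sigma 1 7 = 8 := by decide
    have s8 : ArithmeticFunction.sigma 1 8 = 15 := by decide
    have s9 : ArithmeticFunction.sigma 1 9 = 13 := by decide
    have s10 : ArithmeticFunction.sigma 1 10 = 18 := by decide
    have s11 : ArithmeticFunction.sigma 1 11 = 12 := by decide
    have s12 : ArithmeticFunction.sigma 1 12 = 28 := by decide
    simp [s1, s2, s3, s4, s5, s6, s7, s8, s9, s10, s11, s12]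
    ring
  have han : AnalyticAt ℂ (fun q => PQ q - pP q) 0 := by
    have h1 : AnalyticAt ℂ PQ 0 := PQ_fps.analyticAt
    have h2 : AnalyticAt ℂ pP 0 := by unfold pP; fun_prop
    fun_prop
  have ho : ((13 : ℕ) : ℕ∞) ≤ analyticOrderAt (fun q => PQ q - pP q) 0 := by
    apply order_ge_of_isBigO han
    refine Asymptotics.IsBigO.mono ?_ nhdsWithin_le_nhds
    have h' : (fun q => PQ q - pP q) =O[𝓝 0] fun y => ‖y‖ ^ 13 := by
      refine h.congr_left ?_
      intro q
      rw [hpart, zero_add]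
    refine h'.trans ?_
    exact Asymptotics.isBigO_of_le _ (by simp)
  obtain ⟨r, hr, h⟩ := (natCast_le_analyticOrderAt han).1 ho
  refine ⟨r, hr, ?_⟩
  filter_upwards [h] with q hq
  simp only [sub_zero, smul_eq_mul] at hq
  linear_combination hq

lemma tr_PQ_pow (d : ℕ) (hd : d ≠ 0) : Tr (fun q => PQ (q ^ d)) (fun q => pP (q ^ d)) := by
  obtain ⟨r, hr, h⟩ := tr_PQ
  have h0 : (0:ℂ) ^ d = 0 := zero_pow hd
  refine ⟨fun q => q ^ (13 * (d - 1)) * r (q ^ d), ?_, ?_⟩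
  · have : AnalyticAt ℂ (fun q : ℂ => r (q ^ d)) 0 := by
      apply AnalyticAt.fun_comp (g := r) _ (by fun_prop)
      rw [h0]; exact hr
    exact AnalyticAt.mul (by fun_prop) this
  · have ht : Tendsto (fun q : ℂ => q ^ d) (𝓝 0) (𝓝 0) := by
      have : ContinuousAt (fun q : ℂ => q ^ d) 0 := by fun_prop
      have := this.tendsto
      rwa [h0] at this
    filter_upwards [ht.eventually h] with q hq
    rw [hq, ← mul_assoc, ← pow_add, ← pow_mul]
    congr 3
    have : 1 ≤ d := Nat.one_le_iff_ne_zero.2 hd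
    zify [this]
    ring

lemma tr_WtQ (x1 x2 x5 x10 : ℂ) : Tr (WtQ x1 x2 x5 x10) (fun q =>
   x1 * pP (q ^ 1) + 2 * x2 * pP (q ^ 2) + 5 * x5 * pP (q ^ 5) + 10 * x10 * pP (q ^ 10)) :=
  ((((tr_PQ_pow 1 (by norm_num)).const_mul x1).add ((tr_PQ_pow 2 (by norm_num)).const_mul (2 * x2))).add
   ((tr_PQ_pow 5 (by norm_num)).const_mul (5 * x5))).add ((tr_PQ_pow 10 (by norm_num)).const_mul (10 * x10))

lemma hasDerivAt_poly {n : ℕ} (c : Fin n → ℂ) (q : ℂ) :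
    HasDerivAt (fun q => ∑ i : Fin n, c i * q ^ (i : ℕ)) (∑ i : Fin n, c i * ((i : ℕ) * q ^ ((i : ℕ) - 1))) q := by
  apply HasDerivAt.fun_sum
  intro i _
  exact (hasDerivAt_pow _ q).const_mul (c i)

noncomputable def aQ : ℂ → ℂ := WtQ (-1/8) (1/24) (-1/24) (1/8)

lemma tr_aQ : Tr aQ (fun q => (1) + (3)*q^1 + (7)*q^2 + (12)*q^3 + (15)*q^4 + (23)*q^5 + (28)*q^6 + (24)*q^7 + (31)*q^8 + (39)*q^9 + (27)*q^10 + (36)*q^11 + (60)*q^12) :=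
  (tr_WtQ (-1/8) (1/24) (-1/24) (1/8)).congr' (fun q => (-16)*q^1 + (20)*q^2 + (-30)*q^3 + (-26)*q^5 + (-91)*q^7 + (-24)*q^9 + (-56)*q^11 + (30)*q^12 + (-60)*q^17 + (40)*q^22 + (-135)*q^27 + (65)*q^32 + (-90)*q^37 + (60)*q^42 + (-220)*q^47 + (-240)*q^57 + (-450)*q^67 + (-390)*q^77 + (-540)*q^87 + (-360)*q^97 + (-840)*q^107) (by fun_prop) (by intro q; simp only [pP]; ring)

noncomputable def bQ : ℂ → ℂ := WtQ (-5/24) (5/24) (1/24) (-1/24)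

lemma tr_bQ : Tr bQ (fun q => (5)*q^1 + (5)*q^2 + (20)*q^3 + (5)*q^4 + (25)*q^5 + (20)*q^6 + (40)*q^7 + (5)*q^8 + (65)*q^9 + (25)*q^10 + (60)*q^11 + (20)*q^12) :=
  (tr_WtQ (-5/24) (5/24) (1/24) (-1/24)).congr' (fun q => (-80)*q^1 + (-20)*q^2 + (-150)*q^3 + (-130)*q^5 + (-185)*q^7 + (-120)*q^9 + (-280)*q^11 + (-30)*q^12 + (-20)*q^17 + (-40)*q^22 + (-5)*q^27 + (-65)*q^32 + (-30)*q^37 + (-60)*q^42 + (-20)*q^47 + (80)*q^57 + (150)*q^67 + (130)*q^77 + (180)*q^87 + (120)*q^97 + (280)*q^107) (by fun_prop) (by intro q; simp only [pP]; ring)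

noncomputable def lQ : ℂ → ℂ := WtQ (-7/24) (1/3) (1/8) (0/1)

lemma tr_lQ : Tr lQ (fun q => (1) + (7)*q^1 + (5)*q^2 + (28)*q^3 + (1)*q^4 + (27)*q^5 + (20)*q^6 + (56)*q^7 + (-7)*q^8 + (91)*q^9 + (-15)*q^10 + (84)*q^11 + (4)*q^12) :=
  (tr_WtQ (-7/24) (1/3) (1/8) (0/1)).congr' (fun q => (-128)*q^1 + (-60)*q^2 + (-240)*q^3 + (-208)*q^5 + (-393)*q^7 + (-192)*q^9 + (-448)*q^11 + (-90)*q^12 + (-180)*q^17 + (-120)*q^22 + (-225)*q^27 + (-195)*q^32 + (-270)*q^37 + (-180)*q^42 + (-420)*q^47) (by fun_prop) (by intro q; simp only [pP]; ring)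

lemma tr_ta : Tr (fun q => q * deriv aQ q) (fun q => (3)*q^1 + (14)*q^2 + (36)*q^3 + (60)*q^4 + (115)*q^5 + (168)*q^6 + (168)*q^7 + (248)*q^8 + (351)*q^9 + (270)*q^10 + (396)*q^11 + (720)*q^12) := by
  refine (tr_aQ.theta (fun q => (3) + (14)*q^1 + (36)*q^2 + (60)*q^3 + (115)*q^4 + (168)*q^5 + (168)*q^6 + (248)*q^7 + (351)*q^8 + (270)*q^9 + (396)*q^10 + (720)*q^11) ?_).congr' (fun q => 0) (by fun_prop) (by intro q; ring)
  intro q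
  have := hasDerivAt_poly ![1, 3, 7, 12, 15, 23, 28, 24, 31, 39, 27, 36, 60] q
  refine (this.congr_deriv (by simp [Fin.sum_univ_succ]; ring)).congr_of_eventuallyEq ?_
  filter_upwards with x
  simp [Fin.sum_univ_succ]
  ring

lemma tr_tb : Tr (fun q => q * deriv bQ q) (fun q => (5)*q^1 + (10)*q^2 + (60)*q^3 + (20)*q^4 + (125)*q^5 + (120)*q^6 + (280)*q^7 + (40)*q^8 + (585)*q^9 + (250)*q^10 + (660)*q^11 + (240)*q^12) := by
  refine (tr_bQ.theta (fun q => (5) + (10)*q^1 + (60)*q^2 + (20)*q^3 + (125)*q^4 + (120)*q^5 + (280)*q^6 + (40)*q^7 + (585)*q^8 + (250)*q^9 + (660)*q^10 + (240)*q^11) ?_).congr' (fun q => 0) (by fun_prop) (by intro q; ring)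
  intro q
  have := hasDerivAt_poly ![0, 5, 5, 20, 5, 25, 20, 40, 5, 65, 25, 60, 20] q
  refine (this.congr_deriv (by simp [Fin.sum_univ_succ]; ring)).congr_of_eventuallyEq ?_
  filter_upwards with x
  simp [Fin.sum_univ_succ]
  ring

lemma tr_aa : Tr (fun q => aQ q * aQ q) (fun q => (1) + (6)*q^1 + (23)*q^2 + (66)*q^3 + (151)*q^4 + (304)*q^5 + (548)*q^6 + (898)*q^7 + (1375)*q^8 + (1962)*q^9 + (2667)*q^10 + (3532)*q^11 + (4468)*q^12) :=
  (tr_aQ.mul tr_aQ).congr' (fun q => (5452) + (6620)*q^1 + (7434)*q^2 + (7801)*q^3 + (8490)*q^4 + (8283)*q^5 + (7218)*q^6 + (7257)*q^7 + (6624)*q^8 + (4536)*q^9 + (4320)*q^10 + (3600)*q^11) (by fun_prop) (by intro q; ring)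

lemma tr_ab : Tr (fun q => aQ q * bQ q) (fun q => (5)*q^1 + (20)*q^2 + (70)*q^3 + (160)*q^4 + (315)*q^5 + (560)*q^6 + (890)*q^7 + (1360)*q^8 + (1925)*q^9 + (2580)*q^10 + (3480)*q^11 + (4560)*q^12) :=
  (tr_aQ.mul tr_bQ).congr' (fun q => (5460) + (6580)*q^1 + (7730)*q^2 + (7395)*q^3 + (8250)*q^4 + (8085)*q^5 + (7650)*q^6 + (6275)*q^7 + (7200)*q^8 + (4200)*q^9 + (4320)*q^10 + (1200)*q^11) (by fun_prop) (by intro q; ring)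

lemma tr_bb : Tr (fun q => bQ q * bQ q) (fun q => (25)*q^2 + (50)*q^3 + (225)*q^4 + (250)*q^5 + (700)*q^6 + (650)*q^7 + (1625)*q^8 + (1500)*q^9 + (3125)*q^10 + (2500)*q^11 + (5900)*q^12) :=
  (tr_bQ.mul tr_bQ).congr' (fun q => (4300) + (7900)*q^1 + (5650)*q^2 + (9425)*q^3 + (6050)*q^4 + (10075)*q^5 + (5450)*q^6 + (8625)*q^7 + (5600)*q^8 + (4600)*q^9 + (2400)*q^10 + (400)*q^11) (by fun_prop) (by intro q; ring)

lemma tr_adb : Tr (fun q => aQ q * (q * deriv bQ q)) (fun q => (5)*q^1 + (25)*q^2 + (125)*q^3 + (330)*q^4 + (800)*q^5 + (1620)*q^6 + (3025)*q^7 + (5300)*q^8 + (8515)*q^9 + (12825)*q^10 + (19310)*q^11 + (27800)*q^12) :=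
  (tr_aQ.mul tr_tb).congr' (fun q => (35690) + (46540)*q^1 + (56925)*q^2 + (60920)*q^3 + (69075)*q^4 + (71485)*q^5 + (70005)*q^6 + (63390)*q^7 + (71280)*q^8 + (45240)*q^9 + (48240)*q^10 + (14400)*q^11) (by fun_prop) (by intro q; ring)

lemma tr_bda : Tr (fun q => bQ q * (q * deriv aQ q)) (fun q => (15)*q^2 + (85)*q^3 + (310)*q^4 + (775)*q^5 + (1740)*q^6 + (3205)*q^7 + (5580)*q^8 + (8810)*q^9 + (12975)*q^10 + (18970)*q^11 + (26920)*q^12) :=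
  (tr_bQ.mul tr_ta).congr' (fun q => (35290) + (45580)*q^1 + (59025)*q^2 + (57400)*q^3 + (71175)*q^4 + (74045)*q^5 + (75345)*q^6 + (62110)*q^7 + (79920)*q^8 + (47160)*q^9 + (51120)*q^10 + (14400)*q^11) (by fun_prop) (by intro q; ring)

lemma tr_amb : Tr (fun q => aQ q - bQ q) (fun q => (1) + (-2)*q^1 + (2)*q^2 + (-8)*q^3 + (10)*q^4 + (-2)*q^5 + (8)*q^6 + (-16)*q^7 + (26)*q^8 + (-26)*q^9 + (2)*q^10 + (-24)*q^11 + (40)*q^12) :=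
  (tr_aQ.sub tr_bQ).congr' (fun q => 0) (by fun_prop) (by intro q; ring)

lemma tr_ab3 : Tr (fun q => (aQ q * bQ q) * (aQ q - bQ q)) (fun q => (5)*q^1 + (10)*q^2 + (40)*q^3 + (20)*q^4 + (25)*q^5 + (-120)*q^6 + (-180)*q^7 + (-280)*q^8 + (-295)*q^9 + (-150)*q^10 + (340)*q^11 + (880)*q^12) :=
  (tr_ab.mul tr_amb).congr' (fun q => (-4220) + (5680)*q^1 + (-5030)*q^2 + (40660)*q^3 + (-6930)*q^4 + (1590)*q^5 + (-42750)*q^6 + (41440)*q^7 + (-96520)*q^8 + (28800)*q^9 + (29760)*q^10 + (182400)*q^11) (by fun_prop) (by intro q; ring)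

lemma tr_g6 : Tr (fun q => aQ q * (q * deriv bQ q) - bQ q * (q * deriv aQ q) - (aQ q * bQ q) * (aQ q - bQ q)) (fun q => 0) :=
  ((tr_adb.sub tr_bda).sub tr_ab3).congr' (fun q => 0) (by fun_prop) (by intro q; ring)

lemma tr_lab : Tr (fun q => lQ q - aQ q - bQ q) (fun q => (-1)*q^1 + (-7)*q^2 + (-4)*q^3 + (-19)*q^4 + (-21)*q^5 + (-28)*q^6 + (-8)*q^7 + (-43)*q^8 + (-13)*q^9 + (-67)*q^10 + (-12)*q^11 + (-76)*q^12) :=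
  ((tr_lQ.sub tr_aQ).sub tr_bQ).congr' (fun q => 0) (by fun_prop) (by intro q; ring)

lemma tr_al : Tr (fun q => aQ q * (lQ q - aQ q - bQ q)) (fun q => (-1)*q^1 + (-10)*q^2 + (-32)*q^3 + (-92)*q^4 + (-205)*q^5 + (-400)*q^6 + (-716)*q^7 + (-1112)*q^8 + (-1597)*q^9 + (-2290)*q^10 + (-3052)*q^11 + (-3824)*q^12) :=
  (tr_aQ.mul tr_lab).congr' (fun q => (-5008) + (-6140)*q^1 + (-6860)*q^2 + (-7901)*q^3 + (-8256)*q^4 + (-8129)*q^5 + (-7188)*q^6 + (-7681)*q^7 + (-6480)*q^8 + (-6504)*q^9 + (-3456)*q^10 + (-4560)*q^11) (by fun_prop) (by intro q; ring)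

lemma tr_m : Tr (fun q => (q * deriv aQ q) - aQ q * (lQ q - aQ q - bQ q)) (fun q => (4)*q^1 + (24)*q^2 + (68)*q^3 + (152)*q^4 + (320)*q^5 + (568)*q^6 + (884)*q^7 + (1360)*q^8 + (1948)*q^9 + (2560)*q^10 + (3448)*q^11 + (4544)*q^12) :=
  (tr_ta.sub tr_al).congr' (fun q => 0) (by fun_prop) (by intro q; ring)

lemma tr_qd : Tr (fun q => 5 * (aQ q * aQ q) - 2 * (aQ q * bQ q) + bQ q * bQ q) (fun q => (5) + (20)*q^1 + (100)*q^2 + (240)*q^3 + (660)*q^4 + (1140)*q^5 + (2320)*q^6 + (3360)*q^7 + (5780)*q^8 + (7460)*q^9 + (11300)*q^10 + (13200)*q^11 + (19120)*q^12) :=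
  (((tr_aa.const_mul 5).sub (tr_ab.const_mul 2)).add tr_bb).congr' (fun q => 0) (by fun_prop) (by intro q; ring)

lemma tr_mq : Tr (fun q => ((q * deriv aQ q) - aQ q * (lQ q - aQ q - bQ q)) * (5 * (aQ q * aQ q) - 2 * (aQ q * bQ q) + bQ q * bQ q)) (fun q => (20)*q^1 + (200)*q^2 + (1220)*q^3 + (5480)*q^4 + (19840)*q^5 + (61160)*q^6 + (165780)*q^7 + (405040)*q^8 + (907660)*q^9 + (1889280)*q^10 + (3691000)*q^11 + (6823360)*q^12) :=
  (tr_m.mul tr_qd).congr' (fun q => (11990720) + (20062000)*q^1 + (31642960)*q^2 + (47418320)*q^3 + (66791360)*q^4 + (89353200)*q^5 + (111161360)*q^6 + (132631200)*q^7 + (143898400)*q^8 + (145808000)*q^9 + (125906560)*q^10 + (86881280)*q^11) (by fun_prop) (by intro q; ring)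

lemma tr_a3b : Tr (fun q => (aQ q * aQ q) * (aQ q * bQ q)) (fun q => (5)*q^1 + (50)*q^2 + (305)*q^3 + (1370)*q^4 + (4960)*q^5 + (15290)*q^6 + (41445)*q^7 + (101260)*q^8 + (226915)*q^9 + (472320)*q^10 + (922750)*q^11 + (1705840)*q^12) :=
  (tr_aa.mul tr_ab).congr' (fun q => (2999110) + (5005190)*q^1 + (7927395)*q^2 + (11826130)*q^3 + (16684285)*q^4 + (22220950)*q^5 + (27855855)*q^6 + (32854200)*q^7 + (35941340)*q^8 + (35980320)*q^9 + (31654560)*q^10 + (20374080)*q^11) (by fun_prop) (by intro q; ring)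

lemma tr_g8 : Tr (fun q => ((q * deriv aQ q) - aQ q * (lQ q - aQ q - bQ q)) * (5 * (aQ q * aQ q) - 2 * (aQ q * bQ q) + bQ q * bQ q) - 4 * ((aQ q * aQ q) * (aQ q * bQ q))) (fun q => 0) :=
  (tr_mq.sub (tr_a3b.const_mul 4)).congr' (fun q => 0) (by fun_prop) (by intro q; ring)
end PartC


section PartC2
open UpperHalfPlane ModularForm CongruenceSubgroup
open scoped MatrixGroups Manifold

noncomputable def G6 (q : ℂ) : ℂ := aQ q * (q * deriv bQ q) - bQ q * (q * deriv aQ q) - (aQ q * bQ q) * (aQ q - bQ q)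
noncomputable def G8 (q : ℂ) : ℂ := ((q * deriv aQ q) - aQ q * (lQ q - aQ q - bQ q)) * (5 * (aQ q * aQ q) - 2 * (aQ q * bQ q) + bQ q * bQ q) - 4 * ((aQ q * aQ q) * (aQ q * bQ q))

lemma mf_of_eq {k l : ℤ} {F G : ℍ → ℂ} (h : IsMF k F) (e : k = l) (e2 : ∀ τ, G τ = F τ) : IsMF l G := by
  have : G = F := funext e2
  rw [this, ← e]; exact h

lemma aMF : IsMF 2 (fun τ : ℍ => aQ (qp τ)) :=
  mf_of_eq (Wt_MF (x1 := -3/24) (x2 := 1/24) (x5 := -1/24) (x10 := 3/24) (by norm_num)) rfl (by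
    intro τ; rw [Wt_q]; unfold aQ; norm_num)

lemma bMF : IsMF 2 (fun τ : ℍ => bQ (qp τ)) :=
  mf_of_eq (Wt_MF (x1 := -5/24) (x2 := 5/24) (x5 := 1/24) (x10 := -1/24) (by norm_num)) rfl (by
    intro τ; rw [Wt_q]; unfold bQ; norm_num)

lemma nMF : IsMF 2 (fun τ : ℍ => EisensteinSeries.E2 τ / 6 - lQ (qp τ)) :=
  mf_of_eq (Wt_MF (x1 := 11/24) (x2 := -8/24) (x5 := -3/24) (x10 := 0) (by norm_num)) rfl (by
    intro τ; rw [Wt_q, ← PQ_qp]; unfold lQ WtQ; rw [pow_one]; ring)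

lemma aQ_diff : DifferentiableOn ℂ aQ (Metric.ball 0 1) := WtQ_diff _ _ _ _
lemma bQ_diff : DifferentiableOn ℂ bQ (Metric.ball 0 1) := WtQ_diff _ _ _ _

lemma G6_MF : IsMF 6 (fun τ : ℍ => G6 (qp τ)) := by
  have ha := aMF
  have hb := bMF
  have h1 := ha.mul hb.serre
  have h2 := (hb.mul ha.serre).smul (-1)
  have h3 := ((ha.mul hb).mul (ha.add (hb.smul (-1)))).smul (-1)
  have h4 : IsMF (2 + (2 + 2)) _ := (h1.add h2).add h3
  refine mf_of_eq h4 (by norm_num) ?_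
  intro τ
  simp only [Pi.add_apply, Pi.mul_apply, Pi.smul_apply, smul_eq_mul, Derivative.serreDerivative_apply,
    D_q aQ_diff, D_q bQ_diff, G6]
  ring

lemma G8_MF : IsMF 8 (fun τ : ℍ => G8 (qp τ)) := by
  have ha := aMF
  have hb := bMF
  have hm := ha.serre.add (ha.mul ((nMF.add ha).add hb))
  have hq := (((ha.mul ha).smul 5).add ((ha.mul hb).smul (-2))).add (hb.mul hb)
  have h4 : IsMF (2 + 2 + (2 + 2)) _ := (hm.mul hq).add (((ha.mul ha).mul (ha.mul hb)).smul (-4))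
  refine mf_of_eq h4 (by norm_num) ?_
  intro τ
  simp only [Pi.add_apply, Pi.mul_apply, Pi.smul_apply, smul_eq_mul, Derivative.serreDerivative_apply,
    D_q aQ_diff, G8]
  push_cast
  ring

lemma vanish {k : ℕ} (hk : k ≤ 8) {G : ℂ → ℂ} (h : IsMF k (fun τ : ℍ => G (qp τ))) (ht : Tr G (fun _ => 0))
    {q : ℂ} (hq : q ≠ 0) (hq1 : ‖q‖ < 1) : G q = 0 := by
  have h0 : (fun τ : ℍ => G (qp τ)) = 0 := by
    apply sturm10 h (n := 13) (by omega)
    exact ht.isBigO.comp_tendsto (qParam_tendsto_atImInfty one_pos)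
  have him := Function.Periodic.im_invQParam_pos_of_norm_lt_one one_pos hq1 hq
  have := congrFun h0 ⟨_, him⟩
  simp only [Pi.zero_apply] at this
  change G (Function.Periodic.qParam 1 (Function.Periodic.invQParam 1 q)) = 0 at this
  rwa [Function.Periodic.qParam_right_inv one_ne_zero hq] at this

lemma I1 {q : ℂ} (hq : q ≠ 0) (hq1 : ‖q‖ < 1) : G6 q = 0 :=
  vanish (k := 6) (by norm_num) G6_MF tr_g6 hq hq1
lemma I2 {q : ℂ} (hq : q ≠ 0) (hq1 : ‖q‖ < 1) : G8 q = 0 :=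
  vanish (k := 8) (by norm_num) G8_MF tr_g8 hq hq1
end PartC2


section PartD1
open UpperHalfPlane ModularForm
open scoped Topology

noncomputable def EQ (q : ℂ) : ℂ := ∏' j : ℕ, (1 - q ^ (j + 1))

lemma EQ_diff : DifferentiableOn ℂ EQ (Metric.ball 0 1) := differentiableOn_tprod_one_sub_pow

lemma EQ_zero : EQ 0 = 1 := by simp [EQ]

lemma EQ_ne {q : ℂ} (hq1 : ‖q‖ < 1) : EQ q ≠ 0 := by
  by_cases hq : q = 0
  · rw [hq, EQ_zero]; exact one_ne_zero
  have him := Function.Periodic.im_invQParam_pos_of_norm_lt_one one_pos hq1 hq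
  have := eta_tprod_ne_zero (z := Function.Periodic.invQParam 1 q) him
  simp only [eta_q, Function.Periodic.qParam_right_inv one_ne_zero hq] at this
  exact this

lemma eta_EQ (z : ℂ) : eta z = Function.Periodic.qParam 24 z * EQ (qp z) := rfl

lemma EQ_deriv {q : ℂ} (hq : q ≠ 0) (hq1 : ‖q‖ < 1) :
    HasDerivAt EQ (EQ q * ((PQ q - 1) / 24) / q) q := by
  have hd : DifferentiableAt ℂ EQ q := EQ_diff.differentiableAt (Metric.isOpen_ball.mem_nhds (by simpa using hq1))
  have him := Function.Periodic.im_invQParam_pos_of_norm_lt_one one_pos hq1 hq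
  set τ : ℍ := ⟨Function.Periodic.invQParam 1 q, him⟩ with hτ
  have hqt : qp τ = q := Function.Periodic.qParam_right_inv one_ne_zero hq
  have h1 := logDeriv_eta_eq_E2 τ
  have h2 : HasDerivAt (fun z => EQ (qp z)) (deriv EQ q * (2 * π * Complex.I * q)) (τ : ℂ) := by
    have h := hasDerivAt_qp (τ : ℂ)
    rw [hqt] at h
    exact HasDerivAt.comp (h₂ := EQ) (τ : ℂ) (by rw [hqt]; exact hd.hasDerivAt) h
  have h3 : logDeriv eta (τ : ℂ) = 2 * π * Complex.I / 24 + deriv EQ q * (2 * π * Complex.I * q) / EQ q := by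
    have e : eta = fun z => Function.Periodic.qParam 24 z * (fun z => EQ (qp z)) z := funext eta_EQ
    rw [e, logDeriv_mul _ (Function.Periodic.qParam_ne_zero _) _ (by fun_prop) h2.differentiableAt, logDeriv_qParam,
      logDeriv_apply, h2.deriv]
    · simp only [hqt]; norm_num
    · simp only [hqt]; exact EQ_ne hq1
  rw [h1, ← PQ_qp, hqt] at h3
  have hE := EQ_ne hq1
  have h4 : deriv EQ q = EQ q * ((PQ q - 1) / 24) / q := by
    have hpi : (π : ℂ) * Complex.I ≠ 0 := mul_ne_zero (by exact_mod_cast Real.pi_ne_zero) Complex.I_ne_zero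
    have h5 : π * Complex.I * (PQ q / 12) = π * Complex.I * (1 / 12 + 2 * (deriv EQ q * q / EQ q)) := by
      linear_combination h3
    have h6 := mul_left_cancel₀ hpi h5
    have h7 : deriv EQ q * q / EQ q = (PQ q - 1) / 24 := by linear_combination -h6 / 2
    rw [div_eq_iff hE] at h7
    rw [eq_div_iff hq, h7]; ring
  rw [← h4]; exact hd.hasDerivAt

lemma norm_pow_lt {q : ℂ} (hq1 : ‖q‖ < 1) {d : ℕ} (hd : d ≠ 0) : ‖q ^ d‖ < 1 := by
  rw [norm_pow]; exact pow_lt_one₀ (norm_nonneg _) hq1 hd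

lemma EQ_pow_deriv {q : ℂ} (hq : q ≠ 0) (hq1 : ‖q‖ < 1) {d : ℕ} (hd : d ≠ 0) :
    HasDerivAt (fun q => EQ (q ^ d)) (EQ (q ^ d) * (d * (PQ (q ^ d) - 1) / 24) / q) q := by
  have h := EQ_deriv (pow_ne_zero d hq) (norm_pow_lt hq1 hd)
  have h2 := HasDerivAt.comp (h₂ := EQ) q h (hasDerivAt_pow d q)
  refine HasDerivAt.congr_deriv (f := fun q => EQ (q ^ d)) h2 ?_
  clear h h2
  obtain ⟨e, rfl⟩ := Nat.exists_eq_succ_of_ne_zero hd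
  rw [show e.succ - 1 = e from rfl, show q ^ e.succ = q ^ e * q from pow_succ q e]
  field_simp

lemma EQ_pow_diffAt {q : ℂ} (hq1 : ‖q‖ < 1) {d : ℕ} (hd : d ≠ 0) :
    DifferentiableAt ℂ (fun q => EQ (q ^ d)) q := by
  have hd : DifferentiableAt ℂ EQ (q ^ d) := EQ_diff.differentiableAt (Metric.isOpen_ball.mem_nhds
    (by simpa using norm_pow_lt hq1 hd))
  exact DifferentiableAt.comp (g := EQ) q hd (by fun_prop)

noncomputable def tQ (q : ℂ) : ℂ := EQ (q ^ 2) * EQ (q ^ 10) ^ 3 / (EQ (q ^ 1) ^ 3 * EQ (q ^ 5))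
noncomputable def gQ (q : ℂ) : ℂ := EQ (q ^ 2) ^ 7 * EQ (q ^ 5) ^ 4 / (EQ (q ^ 1) ^ 4 * EQ (q ^ 10) ^ 3)
noncomputable def TQ (q : ℂ) : ℂ := q * tQ q

lemma tQ_diff : DifferentiableOn ℂ tQ (Metric.ball 0 1) := by
  intro q hq
  have hq1 : ‖q‖ < 1 := by simpa using hq
  have h1 := EQ_pow_diffAt hq1 (d := 1) (by norm_num)
  have h2 := EQ_pow_diffAt hq1 (d := 2) (by norm_num)
  have h5 := EQ_pow_diffAt hq1 (d := 5) (by norm_num)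
  have h10 := EQ_pow_diffAt hq1 (d := 10) (by norm_num)
  have n1 := EQ_ne (norm_pow_lt hq1 (d := 1) (by norm_num))
  have n5 := EQ_ne (norm_pow_lt hq1 (d := 5) (by norm_num))
  exact ((h2.mul (h10.pow 3)).div ((h1.pow 3).mul h5) (mul_ne_zero (pow_ne_zero _ n1) n5)).differentiableWithinAt

lemma gQ_diff : DifferentiableOn ℂ gQ (Metric.ball 0 1) := by
  intro q hq
  have hq1 : ‖q‖ < 1 := by simpa using hq
  have h1 := EQ_pow_diffAt hq1 (d := 1) (by norm_num)
  have h2 := EQ_pow_diffAt hq1 (d := 2) (by norm_num)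
  have h5 := EQ_pow_diffAt hq1 (d := 5) (by norm_num)
  have h10 := EQ_pow_diffAt hq1 (d := 10) (by norm_num)
  have n1 := EQ_ne (norm_pow_lt hq1 (d := 1) (by norm_num))
  have n10 := EQ_ne (norm_pow_lt hq1 (d := 10) (by norm_num))
  exact (((h2.pow 7).mul (h5.pow 4)).div ((h1.pow 4).mul (h10.pow 3)) (mul_ne_zero (pow_ne_zero _ n1) (pow_ne_zero _ n10))).differentiableWithinAt

lemma TQ_diff : DifferentiableOn ℂ TQ (Metric.ball 0 1) := by
  have := tQ_diff
  unfold TQ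
  fun_prop

lemma TQ_deriv {q : ℂ} (hq : q ≠ 0) (hq1 : ‖q‖ < 1) : HasDerivAt TQ (aQ q * TQ q / q) q := by
  have h1 := EQ_pow_deriv hq hq1 (d := 1) (by norm_num)
  have h2 := EQ_pow_deriv hq hq1 (d := 2) (by norm_num)
  have h5 := EQ_pow_deriv hq hq1 (d := 5) (by norm_num)
  have h10 := EQ_pow_deriv hq hq1 (d := 10) (by norm_num)
  have n1 := EQ_ne (norm_pow_lt hq1 (d := 1) (by norm_num))
  have n5 := EQ_ne (norm_pow_lt hq1 (d := 5) (by norm_num))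
  have h := (hasDerivAt_id q).mul ((h2.mul (h10.pow 3)).div ((h1.pow 3).mul h5) (mul_ne_zero (pow_ne_zero _ n1) n5))
  refine HasDerivAt.congr_deriv (f := TQ) h ?_
  simp only [TQ, tQ, aQ, WtQ, Pi.mul_apply, Pi.pow_apply, Pi.div_apply, id]
  generalize EQ (q ^ 1) = e1 at *
  generalize EQ (q ^ 2) = e2 at *
  generalize EQ (q ^ 5) = e5 at *
  generalize EQ (q ^ 10) = e10 at *
  generalize PQ (q ^ 1) = p1 at *
  generalize PQ (q ^ 2) = p2 at *
  generalize PQ (q ^ 5) = p5 at *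
  generalize PQ (q ^ 10) = p10 at *
  clear h h1 h2 h5 h10
  push_cast
  field_simp
  ring

lemma gQ_deriv {q : ℂ} (hq : q ≠ 0) (hq1 : ‖q‖ < 1) : HasDerivAt gQ ((lQ q - aQ q) * gQ q / q) q := by
  have h1 := EQ_pow_deriv hq hq1 (d := 1) (by norm_num)
  have h2 := EQ_pow_deriv hq hq1 (d := 2) (by norm_num)
  have h5 := EQ_pow_deriv hq hq1 (d := 5) (by norm_num)
  have h10 := EQ_pow_deriv hq hq1 (d := 10) (by norm_num)
  have n1 := EQ_ne (norm_pow_lt hq1 (d := 1) (by norm_num))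
  have n10 := EQ_ne (norm_pow_lt hq1 (d := 10) (by norm_num))
  have h := (((h2.pow 7).mul (h5.pow 4)).div ((h1.pow 4).mul (h10.pow 3)) (mul_ne_zero (pow_ne_zero _ n1) (pow_ne_zero _ n10)))
  refine HasDerivAt.congr_deriv (f := gQ) h ?_
  simp only [gQ, lQ, aQ, WtQ, Pi.mul_apply, Pi.pow_apply]
  generalize EQ (q ^ 1) = e1 at *
  generalize EQ (q ^ 2) = e2 at *
  generalize EQ (q ^ 5) = e5 at *
  generalize EQ (q ^ 10) = e10 at *
  generalize PQ (q ^ 1) = p1 at *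
  generalize PQ (q ^ 2) = p2 at *
  generalize PQ (q ^ 5) = p5 at *
  generalize PQ (q ^ 10) = p10 at *
  clear h h1 h2 h5 h10
  push_cast
  field_simp
  ring
end PartD1


section PartD2
open scoped Topology
open Filter

lemma const_near {K : ℂ → ℂ} (hK : AnalyticAt ℂ K 0) (h : ∀ᶠ q in 𝓝[≠] (0:ℂ), deriv K q = 0) :
    ∀ᶠ q in 𝓝 (0:ℂ), K q = K 0 := by
  have h1 : ∀ᶠ q in 𝓝 (0:ℂ), deriv K q = 0 :=
    (hK.deriv.frequently_zero_iff_eventually_zero).1 h.frequently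
  obtain ⟨ε, hε, hb⟩ := Metric.eventually_nhds_iff_ball.1 (h1.and hK.eventually_analyticAt)
  refine Metric.eventually_nhds_iff_ball.2 ⟨ε, hε, fun q hq => ?_⟩
  exact (convex_ball (0:ℂ) ε).is_const_of_fderivWithin_eq_zero (𝕜 := ℂ) (f := K)
    (fun x hx => (hb x hx).2.differentiableAt.differentiableWithinAt)
    (fun x hx => by
      rw [fderivWithin_of_isOpen Metric.isOpen_ball hx]
      ext
      simpa using (hb x hx).1) hq (Metric.mem_ball_self hε)

lemma ident {F : ℂ → ℂ} (hF : DifferentiableOn ℂ F (Metric.ball 0 1)) (h : ∀ᶠ q in 𝓝 (0:ℂ), F q = 0)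
    {q : ℂ} (hq : ‖q‖ < 1) : F q = 0 := by
  have := (hF.analyticOnNhd Metric.isOpen_ball).eqOn_zero_of_preconnected_of_eventuallyEq_zero
    (convex_ball (0:ℂ) 1).isPreconnected (Metric.mem_ball_self one_pos) h
  exact this (by simpa using hq)

lemma anal {F : ℂ → ℂ} (hF : DifferentiableOn ℂ F (Metric.ball 0 1)) : AnalyticAt ℂ F 0 :=
  hF.analyticAt (Metric.ball_mem_nhds _ one_pos)

lemma ev_ball : ∀ᶠ q in 𝓝 (0:ℂ), ‖q‖ < 1 := by
  filter_upwards [Metric.ball_mem_nhds (0:ℂ) one_pos] with q hq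
  simpa using hq

lemma hasD {F : ℂ → ℂ} (hF : DifferentiableOn ℂ F (Metric.ball 0 1)) {q : ℂ} (hq : ‖q‖ < 1) :
    HasDerivAt F (deriv F q) q :=
  (hF.differentiableAt (Metric.isOpen_ball.mem_nhds (by simpa using hq))).hasDerivAt

lemma tQ_zero : tQ 0 = 1 := by simp [tQ, EQ_zero]
lemma gQ_zero : gQ 0 = 1 := by simp [gQ, EQ_zero]
lemma TQ_zero : TQ 0 = 0 := by simp [TQ]
lemma aQ_zero : aQ 0 = 1 := by
  obtain ⟨r, _, h⟩ := tr_aQ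
  have := h.self_of_nhds
  simpa using this

lemma bQ_fac : ∃ β : ℂ → ℂ, AnalyticAt ℂ β 0 ∧ β 0 = 5 ∧ ∀ᶠ q in 𝓝 (0:ℂ), bQ q = q * β q := by
  obtain ⟨r, hr, h⟩ := tr_bQ
  refine ⟨fun q => (5) + (5)*q^1 + (20)*q^2 + (5)*q^3 + (25)*q^4 + (20)*q^5 + (40)*q^6 + (5)*q^7 + (65)*q^8 + (25)*q^9 + (60)*q^10 + (20)*q^11 + q ^ 12 * r q, ?_, ?_, ?_⟩
  · fun_prop
  · simp
  · filter_upwards [h] with q hq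
    rw [hq]; ring

lemma bQ_zero : bQ 0 = 0 := by
  obtain ⟨r, _, _, h⟩ := bQ_fac
  simpa using h.self_of_nhds

lemma J1 {q : ℂ} (hq1 : ‖q‖ < 1) : 5 * TQ q * (aQ q - bQ q) - bQ q = 0 := by
  obtain ⟨β, hβ, hβ0, hb⟩ := bQ_fac
  refine ident (F := fun q => 5 * TQ q * (aQ q - bQ q) - bQ q) ?_ ?_ hq1
  · have h1 := TQ_diff; have h2 := aQ_diff; have h3 := bQ_diff
    fun_prop
  have hβn : ∀ᶠ q in 𝓝 (0:ℂ), β q ≠ 0 := hβ.continuousAt.eventually_ne (by rw [hβ0]; norm_num)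
  have hK : AnalyticAt ℂ (fun q => (aQ q - bQ q) * tQ q / β q) 0 :=
    (((anal aQ_diff).sub (anal bQ_diff)).mul (anal tQ_diff)).div hβ (by rw [hβ0]; norm_num)
  have hc := const_near hK ?_
  · filter_upwards [hc, hb, hβn] with q h1 h2 h3
    simp only [hβ0, aQ_zero, bQ_zero, tQ_zero] at h1
    rw [div_eq_iff h3] at h1
    have : TQ q = q * tQ q := rfl
    rw [this]
    have e : 5 * (q * tQ q) * (aQ q - bQ q) - bQ q = 5 * q * ((aQ q - bQ q) * tQ q) - bQ q := by ring
    rw [e, h1, h2]; ring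
  · have hev : ∀ᶠ q in 𝓝[≠] (0:ℂ), (fun q => (aQ q - bQ q) * tQ q / β q) =ᶠ[𝓝 q] (fun q => (aQ q - bQ q) * TQ q / bQ q) := by
      filter_upwards [hb.eventually_nhds.filter_mono nhdsWithin_le_nhds, self_mem_nhdsWithin] with q h1 h2
      filter_upwards [h1, isOpen_ne.mem_nhds h2] with x hx hx0
      rw [hx, TQ, mul_left_comm, mul_div_mul_left _ _ hx0]
    filter_upwards [hev, hb.filter_mono nhdsWithin_le_nhds, hβn.filter_mono nhdsWithin_le_nhds,
      ev_ball.filter_mono nhdsWithin_le_nhds, self_mem_nhdsWithin] with q h1 h2 h3 h4 h5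
    have h5 : q ≠ 0 := h5
    have hbn : bQ q ≠ 0 := by rw [h2]; exact mul_ne_zero h5 h3
    rw [h1.deriv_eq]
    have hda := hasD aQ_diff h4
    have hdb := hasD bQ_diff h4
    have hdT := TQ_deriv h5 h4
    have hI := I1 h5 h4
    unfold G6 at hI
    have hD := ((hda.sub hdb).mul hdT).div hdb hbn
    refine (HasDerivAt.deriv (f := fun q => (aQ q - bQ q) * TQ q / bQ q) hD).trans ?_
    simp only [Pi.mul_apply, Pi.sub_apply]
    rw [div_eq_zero_iff]; left
    field_simp
    linear_combination (-TQ q) * hI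

lemma gen_id {a b T u H A l : ℂ} (ha : a ≠ 0) (hu : u ≠ 0) (hu' : u = 1 + 5 * T) (hH : H = 1 + 8 * T + 20 * T ^ 2)
    (h1 : 5 * T * (a - b) - b = 0)
    (h2 : (A - a * (l - a - b)) * (5 * (a * a) - 2 * (a * b) + b * b) - 4 * ((a * a) * (a * b)) = 0) :
    (A - a * (l - a - b)) * H = 4 * a ^ 2 * T * u := by
  have hb : b = 5 * T * a / u := by
    rw [eq_div_iff hu, hu']; linear_combination -h1
  have h3 : a ^ 2 * 5 * ((A - a * (l - a - b)) * H - 4 * a ^ 2 * T * u) = 0 := by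
    have e : 5 * (a * a) - 2 * (a * b) + b * b = 5 * a ^ 2 * H / u ^ 2 := by
      rw [hb, hH]; field_simp; rw [hu']; ring
    have e2 : a * b = 5 * T * a ^ 2 / u := by rw [hb]; ring
    rw [e, e2] at h2
    field_simp at h2
    linear_combination h2
  have := (mul_eq_zero.1 h3).resolve_left (by simpa using ha)
  linear_combination this

lemma J2 {q : ℂ} (hq1 : ‖q‖ < 1) :
    gQ q ^ 2 * (1 + 8 * TQ q + 20 * TQ q ^ 2) - ((1 + 5 * TQ q) * aQ q) ^ 2 = 0 := by
  refine ident (F := fun q => gQ q ^ 2 * (1 + 8 * TQ q + 20 * TQ q ^ 2) - ((1 + 5 * TQ q) * aQ q) ^ 2) ?_ ?_ hq1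
  · have h1 := TQ_diff; have h2 := aQ_diff; have h3 := gQ_diff
    fun_prop
  have hua : AnalyticAt ℂ (fun q => ((1 + 5 * TQ q) * aQ q) ^ 2) 0 :=
    ((analyticAt_const.add (analyticAt_const.mul (anal TQ_diff))).mul (anal aQ_diff)).pow 2
  have hua0 : ((1 + 5 * TQ 0) * aQ 0) ^ 2 ≠ 0 := by simp [TQ_zero, aQ_zero]
  have hn : ∀ᶠ q in 𝓝 (0:ℂ), ((1 + 5 * TQ q) * aQ q) ^ 2 ≠ 0 := hua.continuousAt.eventually_ne hua0
  have hK : AnalyticAt ℂ (fun q => gQ q ^ 2 * (1 + 8 * TQ q + 20 * TQ q ^ 2) / ((1 + 5 * TQ q) * aQ q) ^ 2) 0 := by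
    refine AnalyticAt.fun_div ?_ hua hua0
    have h1 := anal TQ_diff; have h3 := anal gQ_diff
    fun_prop
  have hc := const_near hK ?_
  · filter_upwards [hc, hn] with q h1 h3
    simp only [gQ_zero, TQ_zero, aQ_zero] at h1
    rw [div_eq_iff h3] at h1
    rw [h1]; ring
  · filter_upwards [hn.filter_mono nhdsWithin_le_nhds,
      ev_ball.filter_mono nhdsWithin_le_nhds, self_mem_nhdsWithin] with q h3 h4 h5
    have h5 : q ≠ 0 := h5
    have hda := hasD aQ_diff h4
    have hdT := TQ_deriv h5 h4
    have hdg := gQ_deriv h5 h4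
    have hI := I2 h5 h4
    have hJ := J1 h4
    unfold G8 at hI
    have hu : 1 + 5 * TQ q ≠ 0 := fun h => h3 (by rw [h]; ring)
    have ha : aQ q ≠ 0 := fun h => h3 (by rw [h]; ring)
    have hM := gen_id ha hu rfl rfl hJ hI
    have hD := ((hdg.pow 2).mul (((hdT.const_mul 8).const_add 1).add ((hdT.pow 2).const_mul 20))).div
      ((((hdT.const_mul 5).const_add 1).mul hda).pow 2) h3
    refine (HasDerivAt.deriv (f := fun q => gQ q ^ 2 * (1 + 8 * TQ q + 20 * TQ q ^ 2) / ((1 + 5 * TQ q) * aQ q) ^ 2) hD).trans ?_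
    simp only [Pi.mul_apply, Pi.add_apply, Pi.pow_apply]
    rw [div_eq_zero_iff]; left
    generalize TQ q = T at *
    generalize aQ q = a at *
    generalize bQ q = b at *
    generalize lQ q = l at *
    generalize gQ q = g at *
    generalize deriv aQ q = A at *
    clear hD hdg hdT hda
    push_cast
    field_simp
    linear_combination (-2 * g^2 * (1+5*T)^2 * a) * hM - 2 * g^2 * (1+5*T) * a^2 * (1+8*T+20*T^2) * hJ
end PartD2


section PartD3
open scoped Topology
open Filter

lemma ofReal_eulerE (x : ℝ) : ((eulerE x : ℝ) : ℂ) = EQ x := by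
  unfold eulerE EQ
  have h := Function.LeftInverse.map_tprod (g := Complex.ofRealHom) (g' := Complex.re) (L := SummationFilter.unconditional ℕ)
    (fun j : ℕ => (1 - x ^ (j + 1) : ℝ)) Complex.continuous_ofReal Complex.continuous_re (fun x => Complex.ofReal_re x)
  simpa using h

lemma norm_ofReal_lt {x : ℝ} (h0 : 0 ≤ x) (h1 : x < 1) : ‖(x : ℂ)‖ < 1 := by
  rw [Complex.norm_real, Real.norm_of_nonneg h0]; exact h1

lemma pos_of_cont {φ : ℝ → ℝ} (hc : ContinuousOn φ (Set.Ico 0 1)) (h0 : 0 < φ 0)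
    (hn : ∀ x ∈ Set.Ico (0:ℝ) 1, φ x ≠ 0) {x : ℝ} (hx0 : 0 ≤ x) (hx1 : x < 1) : 0 < φ x := by
  by_contra! h
  have hs : Set.Icc 0 x ⊆ Set.Ico (0:ℝ) 1 := fun y hy => ⟨hy.1, hy.2.trans_lt hx1⟩
  have := intermediate_value_Icc' hx0 (hc.mono hs) (Set.mem_Icc.2 ⟨h, h0.le⟩)
  obtain ⟨y, hy, hy0⟩ := this
  exact hn y (hs hy) hy0

lemma re_cont {F : ℂ → ℂ} (hF : DifferentiableOn ℂ F (Metric.ball 0 1)) :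
    ContinuousOn (fun x : ℝ => (F x).re) (Set.Ico 0 1) := by
  refine Complex.continuous_re.comp_continuousOn (hF.continuousOn.comp Complex.continuous_ofReal.continuousOn ?_)
  intro x hx
  simpa using norm_ofReal_lt hx.1 hx.2

lemma eulerE_re (x : ℝ) : eulerE x = (EQ x).re := by rw [← ofReal_eulerE, Complex.ofReal_re]

lemma eulerE_cont : ContinuousOn eulerE (Set.Ico 0 1) :=
  (re_cont EQ_diff).congr (fun x _ => eulerE_re x)

lemma eulerE_zero : eulerE 0 = 1 := by simp [eulerE]

lemma eulerE_pos {x : ℝ} (hx0 : 0 ≤ x) (hx1 : x < 1) : 0 < eulerE x := by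
  refine pos_of_cont eulerE_cont (by rw [eulerE_zero]; norm_num) (fun y hy h => ?_) hx0 hx1
  have := EQ_ne (norm_ofReal_lt hy.1 hy.2)
  rw [← ofReal_eulerE, h] at this
  simp at this

noncomputable def TR (q : ℝ) : ℝ := q * (eulerE (q ^ 2) * eulerE (q ^ 10) ^ 3 / (eulerE (q ^ 1) ^ 3 * eulerE (q ^ 5)))
noncomputable def gR (q : ℝ) : ℝ := eulerE (q ^ 2) ^ 7 * eulerE (q ^ 5) ^ 4 / (eulerE (q ^ 1) ^ 4 * eulerE (q ^ 10) ^ 3)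
noncomputable def aR (q : ℝ) : ℝ := (aQ q).re

lemma ofReal_TR (q : ℝ) : (TR q : ℂ) = TQ q := by
  simp [TR, TQ, tQ, ofReal_eulerE]
lemma ofReal_gR (q : ℝ) : (gR q : ℂ) = gQ q := by
  simp [gR, gQ, ofReal_eulerE]

lemma ePos {q : ℝ} (h0 : 0 ≤ q) (h1 : q < 1) (d : ℕ) (hd : d ≠ 0) : 0 < eulerE (q ^ d) :=
  eulerE_pos (pow_nonneg h0 d) (pow_lt_one₀ h0 h1 hd)

lemma TR_pos {q : ℝ} (h0 : 0 < q) (h1 : q < 1) : 0 < TR q := by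
  have e1 := ePos h0.le h1 1 (by norm_num)
  have e2 := ePos h0.le h1 2 (by norm_num)
  have e5 := ePos h0.le h1 5 (by norm_num)
  have e10 := ePos h0.le h1 10 (by norm_num)
  unfold TR; positivity

lemma gR_pos {q : ℝ} (h0 : 0 ≤ q) (h1 : q < 1) : 0 < gR q := by
  have e1 := ePos h0 h1 1 (by norm_num)
  have e2 := ePos h0 h1 2 (by norm_num)
  have e5 := ePos h0 h1 5 (by norm_num)
  have e10 := ePos h0 h1 10 (by norm_num)
  unfold gR; positivity

lemma TR_zero : TR 0 = 0 := by simp [TR]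
lemma TR_nonneg {q : ℝ} (h0 : 0 ≤ q) (h1 : q < 1) : 0 ≤ TR q := by
  rcases h0.eq_or_lt with h | h
  · rw [← h, TR_zero]
  · exact (TR_pos h h1).le

lemma TR_cont : ContinuousOn TR (Set.Ico 0 1) :=
  (re_cont TQ_diff).congr (fun x _ => by simp only [← ofReal_TR, Complex.ofReal_re])

lemma TR_deriv {q : ℝ} (h0 : 0 < q) (h1 : q < 1) : HasDerivAt TR (aR q * TR q / q) q := by
  have h := (TQ_deriv (q := (q:ℂ)) (by exact_mod_cast h0.ne') (norm_ofReal_lt h0.le h1)).real_of_complex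
  have e : (fun x : ℝ => (TQ x).re) = TR := by
    funext x; rw [← ofReal_TR, Complex.ofReal_re]
  rw [e] at h
  refine h.congr_deriv ?_
  rw [← ofReal_TR, Complex.div_ofReal_re, Complex.re_mul_ofReal, aR]

lemma ofReal_aR {q : ℝ} (h0 : 0 < q) (h1 : q < 1) : (aR q : ℂ) = aQ q := by
  have h := (TQ_deriv (q := (q:ℂ)) (by exact_mod_cast h0.ne') (norm_ofReal_lt h0.le h1)).comp_ofReal
  have h2 := (TR_deriv h0 h1).ofReal_comp
  simp only [ofReal_TR] at h2
  have h3 := h2.unique h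
  rw [← ofReal_TR] at h3
  have hT : (TR q : ℂ) ≠ 0 := by exact_mod_cast (TR_pos h0 h1).ne'
  have hq : (q : ℂ) ≠ 0 := by exact_mod_cast h0.ne'
  push_cast at h3
  field_simp at h3
  exact h3

lemma R2 {q : ℝ} (h0 : 0 < q) (h1 : q < 1) :
    gR q ^ 2 * (1 + 8 * TR q + 20 * TR q ^ 2) = ((1 + 5 * TR q) * aR q) ^ 2 := by
  have h := J2 (norm_ofReal_lt h0.le h1)
  rw [← ofReal_TR, ← ofReal_gR, ← ofReal_aR h0 h1] at h
  have : gR q ^ 2 * (1 + 8 * TR q + 20 * TR q ^ 2) - ((1 + 5 * TR q) * aR q) ^ 2 = 0 := by exact_mod_cast h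
  linarith

lemma aR_pos {q : ℝ} (h0 : 0 ≤ q) (h1 : q < 1) : 0 < aR q := by
  have ha0 : aR 0 = 1 := by simp [aR, aQ_zero]
  refine pos_of_cont (re_cont aQ_diff) (by change 0 < aR 0; rw [ha0]; norm_num) (fun y hy h => ?_) h0 h1
  change aR y = 0 at h
  rcases hy.1.eq_or_lt with h2 | h2
  · rw [← h2, ha0] at h; norm_num at h
  have h3 := R2 h2 hy.2
  have h4 := TR_pos h2 hy.2
  have h5 := gR_pos h2.le hy.2
  rw [h] at h3
  have : 0 < gR y ^ 2 * (1 + 8 * TR y + 20 * TR y ^ 2) := by positivity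
  rw [h3] at this
  norm_num at this

noncomputable def WR (q : ℝ) : ℝ := Real.sqrt (1 + 8 * TR q + 20 * TR q ^ 2)

lemma R3 {q : ℝ} (h0 : 0 < q) (h1 : q < 1) : gR q * WR q = (1 + 5 * TR q) * aR q := by
  have h2 := TR_pos h0 h1
  have h3 := gR_pos h0.le h1
  have h4 := aR_pos h0.le h1
  have hW : 0 ≤ WR q := Real.sqrt_nonneg _
  refine (pow_left_inj₀ (by positivity) (by positivity) (n := 2) (by norm_num)).1 ?_
  rw [← R2 h0 h1, mul_pow, WR, Real.sq_sqrt (by positivity)]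

noncomputable def hR (q : ℝ) : ℝ := eulerE (q ^ 2) ^ 8 * eulerE (q ^ 5) ^ 3 / eulerE q ^ 7

lemma WR_deriv {q : ℝ} (h0 : 0 < q) (h1 : q < 1) : HasDerivAt WR (4 * hR q) q := by
  have h2 := TR_pos h0 h1
  have hd := TR_deriv h0 h1
  have hH : 0 < 1 + 8 * TR q + 20 * TR q ^ 2 := by positivity
  have h := (((hd.const_mul 8).const_add 1).add ((hd.pow 2).const_mul 20)).sqrt hH.ne'
  refine HasDerivAt.congr_deriv (f := WR) h ?_
  have hW : 0 < WR q := Real.sqrt_pos.2 hH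
  have e : Real.sqrt (((fun x => 1 + 8 * TR x) + fun x => 20 * (TR ^ 2) x) q) = WR q := rfl
  rw [e, div_eq_iff (by positivity)]
  have hf : hR q = gR q * TR q / q := by
    have e1 := ePos h0.le h1 1 (by norm_num)
    have e5 := ePos h0.le h1 5 (by norm_num)
    have e10 := ePos h0.le h1 10 (by norm_num)
    unfold hR gR TR
    rw [pow_one] at *
    field_simp
  rw [hf]
  have := R3 h0 h1
  push_cast
  linear_combination (-8 * TR q / q) * this

lemma hR_cont : ContinuousOn hR (Set.Ico 0 1) := by
  have h (d : ℕ) (hd : d ≠ 0) : ContinuousOn (fun q : ℝ => eulerE (q ^ d)) (Set.Ico 0 1) := by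
    refine eulerE_cont.comp (by fun_prop) ?_
    intro x hx
    exact ⟨pow_nonneg hx.1 d, pow_lt_one₀ hx.1 hx.2 hd⟩
  exact (((h 2 (by norm_num)).pow 8).mul ((h 5 (by norm_num)).pow 3)).div (eulerE_cont.pow 7)
    (fun x hx => pow_ne_zero _ (eulerE_pos hx.1 hx.2).ne')

lemma int_hR {b : ℝ} (h0 : 0 ≤ b) (h1 : b < 1) : ∫ q in (0:ℝ)..b, hR q = (WR b - 1) / 4 := by
  have hs : Set.Icc 0 b ⊆ Set.Ico (0:ℝ) 1 := fun y hy => ⟨hy.1, hy.2.trans_lt h1⟩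
  have hi : IntervalIntegrable (fun q => 4 * hR q) MeasureTheory.volume 0 b := by
    apply ContinuousOn.intervalIntegrable
    rw [Set.uIcc_of_le h0]
    exact continuousOn_const.mul (hR_cont.mono hs)
  have hc : ContinuousOn WR (Set.Icc 0 b) := by
    have := TR_cont.mono hs
    unfold WR
    fun_prop
  have := intervalIntegral.integral_eq_sub_of_hasDerivAt_of_le h0 hc
    (fun x hx => WR_deriv hx.1 (hx.2.trans h1)) hi
  rw [intervalIntegral.integral_const_mul] at this
  have hW0 : WR 0 = 1 := by simp [WR, TR_zero]
  rw [hW0] at this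
  linarith

noncomputable def etaR (s : ℝ) : ℝ := Real.exp (-2 * π * s / 24) * eulerE (Real.exp (-2 * π * s))

lemma ofReal_etaR (s : ℝ) : (etaR s : ℂ) = ModularForm.eta (Complex.I * s) := by
  rw [eta_EQ, etaR]
  push_cast
  rw [ofReal_eulerE, qp_eq, Function.Periodic.qParam]
  push_cast
  have e1 : (-2 * (π:ℂ) * s) = 2 * π * Complex.I * (Complex.I * s) := by
    linear_combination (-2 * (π : ℂ) * s) * Complex.I_mul_I
  rw [e1]

lemma etaR_inv {s : ℝ} (hs : 0 < s) : etaR s⁻¹ = Real.sqrt s * etaR s := by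
  have h := ModularForm.eta_comp_eq_csqrt_I_inv (x := Complex.I * s) (by
    simp [UpperHalfPlane.upperHalfPlaneSet, hs])
  simp only [Function.comp_apply, Pi.smul_apply, Pi.mul_apply, smul_eq_mul] at h
  have e1 : -1 / (Complex.I * s) = Complex.I * ((s⁻¹ : ℝ) : ℂ) := by
    have : (s:ℂ) ≠ 0 := by exact_mod_cast hs.ne'
    push_cast
    field_simp
    rw [Complex.I_sq]
  have e2 : Complex.sqrt (Complex.I * s) = Complex.sqrt Complex.I * (Real.sqrt s : ℝ) := by
    have hs' : (s:ℂ) ≠ 0 := by exact_mod_cast hs.ne'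
    rw [mul_comm Complex.I, _root_.sqrt_eq_exp (mul_ne_zero hs' Complex.I_ne_zero), _root_.sqrt_eq_exp Complex.I_ne_zero,
      Complex.log_ofReal_mul hs Complex.I_ne_zero]
    have : Real.sqrt s = Real.exp (Real.log s / 2) := by rw [Real.exp_half, Real.exp_log hs]
    rw [this]
    push_cast
    rw [← Complex.exp_add]
    congr 1; ring
  rw [e1, e2, ← ofReal_etaR, ← ofReal_etaR] at h
  have hI : Complex.sqrt Complex.I ≠ 0 := by simp [Complex.sqrt]
  rw [mul_assoc, inv_mul_cancel_left₀ hI] at h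
  exact_mod_cast h

lemma etaR_pos {s : ℝ} (hs : 0 < s) : 0 < etaR s := by
  have : 0 < eulerE (Real.exp (-2 * π * s)) := eulerE_pos (Real.exp_pos _).le (by
    rw [Real.exp_lt_one_iff]; have := Real.pi_pos; nlinarith [mul_pos this hs])
  unfold etaR; positivity

lemma TR_eta {s : ℝ} (hs : 0 < s) : TR (Real.exp (-2 * π * s)) =
    etaR (2 * s) * etaR (10 * s) ^ 3 / (etaR s ^ 3 * etaR (5 * s)) := by
  have h1 := etaR_pos hs
  have h5 := etaR_pos (s := 5 * s) (by positivity)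
  rw [eq_div_iff (by positivity)]
  unfold TR
  have ex (d : ℕ) : Real.exp (-2 * π * s) ^ d = Real.exp (-2 * π * (d * s)) := by
    rw [← Real.exp_nat_mul]; congr 1; ring
  have e1 : 0 < eulerE (Real.exp (-2 * π * s)) := by
    unfold etaR at h1; exact pos_of_mul_pos_right h1 (Real.exp_pos _).le
  have e5 : 0 < eulerE (Real.exp (-2 * π * (5 * s))) := by
    unfold etaR at h5; exact pos_of_mul_pos_right h5 (Real.exp_pos _).le
  rw [pow_one, ex 2, ex 5, ex 10]
  push_cast
  unfold etaR
  have hx (d : ℕ) : Real.exp (-2 * π * (d * s) / 24) = Real.exp (-2 * π * s / 24) ^ d := by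
    rw [← Real.exp_nat_mul]; congr 1; ring
  have hx24 : Real.exp (-2 * π * s) = Real.exp (-2 * π * s / 24) ^ 24 := by
    rw [← Real.exp_nat_mul]; congr 1; push_cast; ring
  have x2 := hx 2
  have x5 := hx 5
  have x10 := hx 10
  push_cast at x2 x5 x10
  rw [x2, x5, x10]
  generalize eulerE (Real.exp (-2 * π * s)) = c1 at *
  generalize eulerE (Real.exp (-2 * π * (5 * s))) = c5 at *
  rw [hx24]
  generalize Real.exp (-2 * π * s / 24) = x
  have e1' := e1.ne'
  have e5' := e5.ne'
  field_simp

lemma TR_val : TR (Real.exp (-2 * π / Real.sqrt 10)) = 1 / Real.sqrt 20 := by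
  set s : ℝ := (Real.sqrt 10)⁻¹ with hs
  have hs0 : 0 < s := by positivity
  have hss : s * s = 1 / 10 := by
    rw [hs, ← mul_inv, Real.mul_self_sqrt (by norm_num)]; norm_num
  rw [div_eq_mul_inv, TR_eta hs0]
  have e10 : 10 * s = s⁻¹ := by
    refine eq_inv_of_mul_eq_one_left ?_; linarith
  have e5 : 5 * s = (2 * s)⁻¹ := by
    refine eq_inv_of_mul_eq_one_left ?_; linarith
  rw [e10, e5, etaR_inv hs0, etaR_inv (s := 2 * s) (by positivity)]
  have p1 := etaR_pos hs0
  have p2 := etaR_pos (s := 2 * s) (by positivity)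
  rw [Real.sqrt_mul (by norm_num)]
  have q1 : 0 < Real.sqrt s := Real.sqrt_pos.2 hs0
  have q2 : Real.sqrt s ^ 2 = s := Real.sq_sqrt hs0.le
  have h20 : Real.sqrt 20 = Real.sqrt 2 * Real.sqrt 10 := by
    rw [← Real.sqrt_mul (by norm_num)]; norm_num
  rw [h20]
  field_simp
  rw [q2, hs]
  field_simp
end PartD3

theorem stmt_8 :
    (∫ q in (0:ℝ)..Real.exp (-2 * Real.pi / Real.sqrt 10),
        eulerE (q ^ 2) ^ 8 * eulerE (q ^ 5) ^ 3 / eulerE q ^ 7)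
      = (Real.sqrt ((10 + 4 * Real.sqrt 5) / 5) - 1) / 4 := by
  have h1 : Real.exp (-2 * Real.pi / Real.sqrt 10) < 1 := by
    rw [Real.exp_lt_one_iff]
    have := Real.pi_pos
    have h10 : 0 < Real.sqrt 10 := by positivity
    exact div_neg_of_neg_of_pos (by linarith) h10
  have h := int_hR (Real.exp_pos _).le h1
  refine h.trans ?_
  have e : 1 + 8 * (1 / Real.sqrt 20) + 20 * (1 / Real.sqrt 20) ^ 2 = (10 + 4 * Real.sqrt 5) / 5 := by
    have h20 : Real.sqrt 20 = 2 * Real.sqrt 5 := by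
      rw [show (20:ℝ) = 2 ^ 2 * 5 by norm_num, Real.sqrt_mul (by norm_num), Real.sqrt_sq (by norm_num)]
    have h5 : 0 < Real.sqrt 5 := by positivity
    have h5s : Real.sqrt 5 ^ 2 = 5 := Real.sq_sqrt (by norm_num)
    rw [h20]
    field_simp
    nlinarith
  rw [WR, TR_val, e]
end

section
/- There exists a sequence of integers a(1), a(2), a(3), … such that for every real number q with 0 < q < 1, the series ∑_{n=1}^∞ n·a(n)·q^n converges absolutely and q · E(q)^8 E(q^{10})^3 / E(q^2)^7 = ∑_{n=1}^∞ n·a(n)·q^n; in particular a(1) = 1, a(2) = −4, a(3) = 9, a(4) = −14. -/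
open Real

open Filter Topology

namespace RK

/-- triangular numbers -/
def tri (j : ℤ) : ℤ := j * (j - 1) / 2

lemma two_tri (j : ℤ) : 2 * tri j = j * (j - 1) := by
  unfold tri
  exact Int.mul_ediv_cancel' (Int.even_mul_pred_self j).two_dvd

lemma tri_succ (j : ℤ) : tri (j + 1) = tri j + j := by
  have h1 := two_tri j
  have h2 := two_tri (j + 1)
  have : 2 * tri (j + 1) = 2 * (tri j + j) := by linear_combination h2 - h1
  omega

lemma tri_pred (j : ℤ) : tri (j - 1) = tri j - j + 1 := by
  have h1 := two_tri j
  have h2 := two_tri (j - 1)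
  have : 2 * tri (j - 1) = 2 * (tri j - j + 1) := by linear_combination h2 - h1
  omega

lemma summable_real (ρ z : ℝ) (h0 : 0 < ρ) (h1 : ρ < 1) (hz : 0 < z) (p : ℕ) :
    Summable (fun j : ℤ => |(j : ℝ)| ^ p * (ρ ^ (tri j) * z ^ j)) := by
  have hl : Real.log ρ < 0 := Real.log_neg h0 h1
  have hpi := Real.pi_pos
  have hT : 0 < -Real.log ρ / (2 * Real.pi) := by
    apply div_pos <;> linarith
  have := summable_pow_mul_jacobiTheta₂_term_bound
    ((|Real.log z| + |Real.log ρ| / 2) / (2 * Real.pi)) hT p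
  refine this.of_nonneg_of_le (fun j => by positivity) (fun j => ?_)
  have e : ρ ^ (tri j) * z ^ j = Real.exp ((tri j : ℝ) * Real.log ρ + j * Real.log z) := by
    rw [Real.exp_add, mul_comm (tri j : ℝ), mul_comm (j : ℝ), Real.exp_mul, Real.exp_mul,
      Real.exp_log h0, Real.exp_log hz, Real.rpow_intCast, Real.rpow_intCast]
  rw [e]
  push_cast
  gcongr
  have h2 : 2 * (tri j : ℝ) = j * (j - 1) := by exact_mod_cast two_tri j
  have h3 : (tri j : ℝ) = (j : ℝ) ^ 2 / 2 - j / 2 := by linarith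
  rw [h3]
  have e2 : -Real.pi * (-Real.log ρ / (2 * Real.pi) * (j : ℝ) ^ 2 -
      2 * ((|Real.log z| + |Real.log ρ| / 2) / (2 * Real.pi)) * |(j : ℝ)|)
      = Real.log ρ * (j : ℝ) ^ 2 / 2 + |Real.log z| * |(j : ℝ)|
        + |Real.log ρ| * |(j : ℝ)| / 2 := by
    field_simp
    ring
  rw [e2, ← abs_mul, ← abs_mul]
  have a1 := le_abs_self (Real.log z * j)
  have a2 := neg_abs_le (Real.log ρ * j)
  linarith

variable {Q z : ℂ}

/-- finite q-Pochhammer -/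
noncomputable def poch (Q : ℂ) (n : ℕ) : ℂ := ∏ k ∈ Finset.range n, (1 - Q ^ (k + 1))

/-- complex Euler product -/
noncomputable def EC (q : ℂ) : ℂ := ∏' j : ℕ, (1 - q ^ (j + 1))

lemma one_sub_pow_ne (h1 : ‖Q‖ < 1) (n : ℕ) (hn : n ≠ 0) : 1 - Q ^ n ≠ 0 := by
  intro h
  have : Q ^ n = 1 := by linear_combination -h
  have h2 : ‖Q‖ ^ n = 1 := by rw [← norm_pow, this, norm_one]
  have := pow_lt_one₀ (norm_nonneg Q) h1 hn
  linarith

lemma poch_ne (h1 : ‖Q‖ < 1) (n : ℕ) : poch Q n ≠ 0 :=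
  Finset.prod_ne_zero_iff.2 fun k _ => one_sub_pow_ne h1 _ (by omega)

lemma summ_pow (h1 : ‖Q‖ < 1) (c : ℂ) (m a : ℕ) (hm : 0 < m) :
    Summable (fun k : ℕ => ‖c * Q ^ (m * k + a)‖) := by
  simp only [pow_add, pow_mul, norm_mul, norm_pow]
  apply Summable.mul_left
  apply Summable.mul_right
  apply summable_geometric_of_lt_one (by positivity)
  exact pow_lt_one₀ (norm_nonneg Q) h1 (by omega)

lemma multipliable_pp (h1 : ‖Q‖ < 1) (c : ℂ) (m a : ℕ) (hm : 0 < m) :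
    Multipliable (fun k : ℕ => 1 + c * Q ^ (m * k + a)) :=
  multipliable_one_add_of_summable (summ_pow h1 c m a hm)

lemma multipliable_EC (h1 : ‖Q‖ < 1) : Multipliable (fun k : ℕ => 1 - Q ^ (k + 1)) := by
  have := multipliable_pp h1 (-1) 1 1 one_pos
  refine this.congr fun k => by ring

lemma EC_ne (h1 : ‖Q‖ < 1) : EC Q ≠ 0 := by
  have := tprod_one_add_ne_zero_of_summable (f := fun k : ℕ => (-1) * Q ^ (1 * k + 1))
    (fun k => by
      have := one_sub_pow_ne h1 (1 * k + 1) (by omega)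
      intro h; apply this; linear_combination h) (summ_pow h1 (-1) 1 1 one_pos)
  intro h; apply this; rw [← h, EC]
  exact tprod_congr fun k => by ring

lemma poch_tendsto (h1 : ‖Q‖ < 1) : Tendsto (poch Q) atTop (𝓝 (EC Q)) :=
  (multipliable_EC h1).hasProd.tendsto_prod_nat

/-- reciprocal Pochhammer extended by zero -/
noncomputable def ip (Q : ℂ) (m : ℤ) : ℂ := if 0 ≤ m then (poch Q m.toNat)⁻¹ else 0

lemma ip_rec (h1 : ‖Q‖ < 1) (m : ℤ) : ip Q (m - 1) = (1 - Q ^ m) * ip Q m := by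
  unfold ip
  rcases lt_trichotomy m 0 with h | h | h
  · rw [if_neg (by omega), if_neg (by omega)]; simp
  · subst h; simp
  · rw [if_pos (by omega), if_pos (by omega)]
    obtain ⟨n, rfl⟩ : ∃ n : ℕ, m = n + 1 := ⟨(m - 1).toNat, by omega⟩
    have e1 : ((n : ℤ) + 1 - 1).toNat = n := by omega
    have e2 : ((n : ℤ) + 1).toNat = n + 1 := by omega
    rw [e1, e2]
    have : poch Q (n + 1) = poch Q n * (1 - Q ^ (n + 1)) := by
      rw [poch, Finset.prod_range_succ]; rfl
    rw [this]
    have a := poch_ne h1 n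
    have b := one_sub_pow_ne h1 (n + 1) (by omega)
    have c : Q ^ ((n : ℤ) + 1) = Q ^ (n + 1) := by exact_mod_cast zpow_natCast Q (n + 1)
    rw [c]; field_simp

/-- coefficients of the finite Jacobi triple product -/
noncomputable def cc (Q : ℂ) (n : ℕ) (j : ℤ) : ℂ :=
  poch Q (2 * n) * ip Q (n - j) * ip Q (n + j) * Q ^ (tri j)

lemma cc_rec (h0 : Q ≠ 0) (h1 : ‖Q‖ < 1) (n : ℕ) (j : ℤ) :
    cc Q (n + 1) j = (1 + Q ^ (2 * n + 1)) * cc Q n j + Q ^ n * cc Q n (j - 1)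
      + Q ^ (n + 1) * cc Q n (j + 1) := by
  unfold cc
  have p : poch Q (2 * (n + 1)) = poch Q (2 * n) * (1 - Q ^ (2 * n + 1)) * (1 - Q ^ (2 * n + 2)) := by
    rw [poch, show 2 * (n + 1) = 2 * n + 1 + 1 by ring, Finset.prod_range_succ,
      Finset.prod_range_succ]; rfl
  rw [p, tri_succ, tri_pred]
  have a1 : ip Q (n - j) = (1 - Q ^ ((n : ℤ) - j + 1)) * ip Q (n - j + 1) := by
    rw [← ip_rec h1]; congr 1; ring
  have a2 : ip Q (n - (j + 1)) = (1 - Q ^ ((n : ℤ) - j)) * ip Q (n - j) := by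
    rw [← ip_rec h1]; congr 1; ring
  have a3 : ip Q (n + j) = (1 - Q ^ ((n : ℤ) + j + 1)) * ip Q (n + j + 1) := by
    rw [← ip_rec h1]; congr 1; ring
  have a4 : ip Q (n + (j - 1)) = (1 - Q ^ ((n : ℤ) + j)) * ip Q (n + j) := by
    rw [← ip_rec h1]; congr 1; ring
  have a5 : ip Q (n - (j - 1)) = ip Q (n - j + 1) := by congr 1; ring
  have a6 : ip Q (n + (j + 1)) = ip Q (n + j + 1) := by congr 1; ring
  have a7 : ip Q (((n + 1 : ℕ) : ℤ) - j) = ip Q (n - j + 1) := by congr 1; push_cast; ring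
  have a8 : ip Q (((n + 1 : ℕ) : ℤ) + j) = ip Q (n + j + 1) := by congr 1; push_cast; ring
  rw [a2, a4, a5, a6, a7, a8, a1, a3]
  simp only [zpow_add₀ h0, zpow_sub₀ h0, zpow_natCast, zpow_one]
  have hj : Q ^ j ≠ 0 := zpow_ne_zero _ h0
  field_simp
  ring

lemma cc_supp (n : ℕ) (j : ℤ) (hj : j ∉ Finset.Icc (-(n : ℤ)) n) : cc Q n j = 0 := by
  unfold cc ip
  rw [Finset.mem_Icc] at hj
  by_cases h : (n : ℤ) < j
  · rw [if_neg (show ¬ (0 ≤ (n : ℤ) - j) by omega)]; simp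
  · rw [if_neg (show ¬ (0 ≤ (n : ℤ) + j) by omega)]; simp

lemma cc_summable (n : ℕ) (w : ℤ → ℂ) : Summable (fun j => w j * cc Q n j) :=
  summable_of_ne_finset_zero (s := Finset.Icc (-(n : ℤ)) n)
    (fun j hj => by rw [cc_supp n j hj, mul_zero])

lemma cc_step (h0 : Q ≠ 0) (h1 : ‖Q‖ < 1) (n : ℕ) (w : ℤ → ℂ) :
    ∑' j, w j * cc Q (n + 1) j = (1 + Q ^ (2 * n + 1)) * ∑' j, w j * cc Q n j
      + Q ^ n * ∑' j, w (j + 1) * cc Q n j + Q ^ (n + 1) * ∑' j, w (j - 1) * cc Q n j := by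
  have e1 : ∑' j, w (j + 1) * cc Q n j = ∑' j, w j * cc Q n (j - 1) := by
    rw [← (Equiv.subRight (1 : ℤ)).tsum_eq]
    simp
  have e2 : ∑' j, w (j - 1) * cc Q n j = ∑' j, w j * cc Q n (j + 1) := by
    rw [← (Equiv.addRight (1 : ℤ)).tsum_eq]
    simp
  have s1 : Summable fun j => w j * cc Q n (j - 1) := by
    have := (Equiv.subRight (1 : ℤ)).summable_iff.2 (cc_summable (Q := Q) n (fun j => w (j + 1)))
    simpa [Function.comp_def] using this
  have s2 : Summable fun j => w j * cc Q n (j + 1) := by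
    have := (Equiv.addRight (1 : ℤ)).summable_iff.2 (cc_summable (Q := Q) n (fun j => w (j - 1)))
    simpa [Function.comp_def] using this
  have s0 := cc_summable (Q := Q) n w
  rw [e1, e2, ← tsum_mul_left, ← tsum_mul_left, ← tsum_mul_left,
    ← (s0.mul_left _).tsum_add (s1.mul_left _),
    ← ((s0.mul_left _).add (s1.mul_left _)).tsum_add (s2.mul_left _)]
  refine tsum_congr fun j => ?_
  rw [cc_rec h0 h1]; ring

lemma cc_zero (w : ℤ → ℂ) : ∑' j, w j * cc Q 0 j = w 0 := by
  rw [tsum_eq_single 0]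
  · simp [cc, ip, poch, tri]
  · intro j hj
    rw [cc_supp 0 j (by simpa using hj), mul_zero]

lemma finite_jtp (h0 : Q ≠ 0) (h1 : ‖Q‖ < 1) (hz : z ≠ 0) (n : ℕ) :
    ∑' j : ℤ, z ^ j * cc Q n j
      = ∏ k ∈ Finset.range n, ((1 + z * Q ^ k) * (1 + z⁻¹ * Q ^ (k + 1))) := by
  induction n with
  | zero => rw [cc_zero]; simp
  | succ n ih =>
    rw [cc_step h0 h1, Finset.prod_range_succ, ← ih]
    have e1 : ∑' j : ℤ, z ^ (j + 1) * cc Q n j = z * ∑' j : ℤ, z ^ j * cc Q n j := by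
      rw [← tsum_mul_left]
      exact tsum_congr fun j => by rw [zpow_add₀ hz, zpow_one]; ring
    have e2 : ∑' j : ℤ, z ^ (j - 1) * cc Q n j = z⁻¹ * ∑' j : ℤ, z ^ j * cc Q n j := by
      rw [← tsum_mul_left]
      exact tsum_congr fun j => by rw [zpow_sub₀ hz, zpow_one, div_eq_mul_inv]; ring
    rw [e1, e2]
    field_simp
    ring

lemma finite_jac (h0 : Q ≠ 0) (h1 : ‖Q‖ < 1) (n : ℕ) :
    ∑' j : ℤ, ((j : ℂ) * (-1) ^ j) * cc Q (n + 1) j = - (poch Q n * poch Q (n + 1)) := by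
  have m1 : ((-1 : ℂ)) ≠ 0 := by norm_num
  have T : ∀ n : ℕ, ∑' j : ℤ, ((j : ℂ) * (-1) ^ j) * cc Q (n + 1) j =
      (1 - Q ^ n) * (1 - Q ^ (n + 1)) * ∑' j : ℤ, ((j : ℂ) * (-1) ^ j) * cc Q n j
      + (Q ^ (n + 1) - Q ^ n) * ∑' j : ℤ, (-1) ^ j * cc Q n j := by
    intro n
    rw [cc_step h0 h1]
    have S0 := cc_summable (Q := Q) n (fun j => (j : ℂ) * (-1) ^ j)
    have S1 := cc_summable (Q := Q) n (fun j => (-1) ^ j)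
    have e1 : ∑' j : ℤ, (((j + 1 : ℤ) : ℂ) * (-1) ^ (j + 1)) * cc Q n j =
      - (∑' j : ℤ, ((j : ℂ) * (-1) ^ j) * cc Q n j + ∑' j : ℤ, (-1) ^ j * cc Q n j) := by
      rw [← S0.tsum_add S1, ← tsum_neg]
      exact tsum_congr fun j => by rw [zpow_add₀ m1, zpow_one]; push_cast; ring
    have e2 : ∑' j : ℤ, (((j - 1 : ℤ) : ℂ) * (-1) ^ (j - 1)) * cc Q n j =
      - (∑' j : ℤ, ((j : ℂ) * (-1) ^ j) * cc Q n j - ∑' j : ℤ, (-1) ^ j * cc Q n j) := by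
      rw [← S0.tsum_sub S1, ← tsum_neg]
      exact tsum_congr fun j => by rw [zpow_sub₀ m1, zpow_one]; push_cast; ring
    rw [e1, e2]
    ring
  induction n with
  | zero => rw [T, cc_zero, cc_zero]; simp [poch]
  | succ n ih =>
    rw [T, ih, finite_jtp h0 h1 m1, Finset.prod_range_succ']
    have : poch Q (n + 1 + 1) = poch Q (n + 1) * (1 - Q ^ (n + 1 + 1)) := by
      rw [poch, Finset.prod_range_succ]; rfl
    rw [this]
    have : poch Q (n + 1) = poch Q n * (1 - Q ^ (n + 1)) := by
      rw [poch, Finset.prod_range_succ]; rfl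
    rw [this]
    simp
    ring

lemma ip_tendsto (h1 : ‖Q‖ < 1) (j : ℤ) :
    Tendsto (fun n : ℕ => ip Q (n + j)) atTop (𝓝 (EC Q)⁻¹) := by
  have h := (poch_tendsto h1).inv₀ (EC_ne h1)
  have : Tendsto (fun n : ℕ => ((n : ℤ) + j).toNat) atTop atTop := by
    refine tendsto_atTop.2 fun b => ?_
    filter_upwards [eventually_ge_atTop (b + j.natAbs)] with n hn
    omega
  refine (h.comp this).congr' ?_
  filter_upwards [eventually_ge_atTop j.natAbs] with n hn
  simp only [ip, Function.comp]
  rw [if_pos (by omega)]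

lemma cc_tendsto (h1 : ‖Q‖ < 1) (j : ℤ) :
    Tendsto (fun n : ℕ => cc Q n j) atTop (𝓝 ((EC Q)⁻¹ * Q ^ tri j)) := by
  have a : Tendsto (fun n : ℕ => poch Q (2 * n)) atTop (𝓝 (EC Q)) :=
    (poch_tendsto h1).comp (tendsto_id.const_mul_atTop' (by norm_num))
  have b := ip_tendsto h1 j
  have c := ip_tendsto h1 (-j)
  have := ((a.mul c).mul b).mul_const (Q ^ tri j)
  refine (this.congr fun n => ?_).trans_eq ?_
  · simp [cc, sub_eq_add_neg]
  · congr 1; have := EC_ne h1; field_simp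

lemma cc_bound (h1 : ‖Q‖ < 1) : ∃ C : ℝ, ∀ (n : ℕ) (j : ℤ), ‖cc Q n j‖ ≤ C * ‖Q‖ ^ tri j := by
  obtain ⟨C1, hC1⟩ := (poch_tendsto h1).norm.bddAbove_range
  obtain ⟨C2, hC2⟩ := ((poch_tendsto h1).inv₀ (EC_ne h1)).norm.bddAbove_range
  have p1 : ∀ n, ‖poch Q n‖ ≤ C1 := fun n => hC1 ⟨n, rfl⟩
  have p2 : ∀ m, ‖ip Q m‖ ≤ C2 := by
    intro m
    unfold ip
    split_ifs
    · exact hC2 ⟨_, rfl⟩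
    · rw [norm_zero]; exact (norm_nonneg _).trans (hC2 ⟨0, rfl⟩)
  refine ⟨C1 * C2 * C2, fun n j => ?_⟩
  have q1 : 0 ≤ C1 := (norm_nonneg _).trans (p1 0)
  have q2 : 0 ≤ C2 := (norm_nonneg _).trans (p2 0)
  unfold cc
  rw [norm_mul, norm_mul, norm_mul, norm_zpow]
  gcongr
  · exact p1 _
  · exact p2 _
  · exact p2 _

lemma cc_lim (h1 : ‖Q‖ < 1) (w : ℤ → ℂ) (hw : Summable fun j => ‖w j‖ * ‖Q‖ ^ tri j) :
    Tendsto (fun n : ℕ => ∑' j, w j * cc Q n j) atTop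
      (𝓝 (∑' j, w j * ((EC Q)⁻¹ * Q ^ tri j))) := by
  obtain ⟨C, hC⟩ := cc_bound h1
  refine tendsto_tsum_of_dominated_convergence (hw.mul_left C) (fun j => ?_) ?_
  · exact (cc_tendsto h1 j).const_mul _
  · refine Eventually.of_forall fun n j => ?_
    rw [norm_mul]
    have := hC n j
    have h2 := norm_nonneg (w j)
    nlinarith

lemma jtp (h0 : Q ≠ 0) (h1 : ‖Q‖ < 1) (hz : z ≠ 0) :
    ∑' j : ℤ, z ^ j * Q ^ tri j
      = EC Q * (∏' k : ℕ, (1 + z * Q ^ k)) * ∏' k : ℕ, (1 + z⁻¹ * Q ^ (k + 1)) := by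
  have s := summable_real ‖Q‖ ‖z‖ (norm_pos_iff.2 h0) h1 (norm_pos_iff.2 hz) 0
  have L := cc_lim h1 (fun j => z ^ j) (by
    refine s.congr fun j => ?_
    rw [norm_zpow]; ring)
  simp only [finite_jtp h0 h1 hz, Finset.prod_mul_distrib] at L
  have M1 : Multipliable fun k : ℕ => 1 + z * Q ^ k :=
    (multipliable_pp h1 z 1 0 one_pos).congr fun k => by ring
  have M2 : Multipliable fun k : ℕ => 1 + z⁻¹ * Q ^ (k + 1) :=
    (multipliable_pp h1 z⁻¹ 1 1 one_pos).congr fun k => by ring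
  have R := M1.hasProd.tendsto_prod_nat.mul M2.hasProd.tendsto_prod_nat
  have U := tendsto_nhds_unique L R
  rw [mul_assoc, ← U, ← tsum_mul_left]
  refine tsum_congr fun j => ?_
  have := EC_ne h1
  field_simp

lemma jac (h0 : Q ≠ 0) (h1 : ‖Q‖ < 1) :
    ∑' j : ℤ, ((j : ℂ) * (-1) ^ j) * Q ^ tri j = - EC Q ^ 3 := by
  have s := summable_real ‖Q‖ 1 (norm_pos_iff.2 h0) h1 one_pos 1
  have L := cc_lim h1 (fun j => (j : ℂ) * (-1) ^ j) (by
    refine s.congr fun j => ?_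
    simp)
  have L2 := L.comp (tendsto_add_atTop_nat 1)
  simp only [Function.comp_def, finite_jac h0 h1] at L2
  have R := ((poch_tendsto h1).mul ((poch_tendsto h1).comp (tendsto_add_atTop_nat 1))).neg
  have U := tendsto_nhds_unique L2 R
  have e := EC_ne h1
  have : ∑' j : ℤ, ((j : ℂ) * (-1) ^ j) * Q ^ tri j
    = EC Q * ∑' j : ℤ, ((j : ℂ) * (-1) ^ j) * ((EC Q)⁻¹ * Q ^ tri j) := by
    rw [← tsum_mul_left]
    refine tsum_congr fun j => ?_
    field_simp
  rw [this, U]; ring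

end RK

namespace RK

variable {q : ℂ}

/-- theta series -/
noncomputable def th (m a : ℕ) (s q : ℂ) : ℂ := ∑' j : ℤ, s ^ j * q ^ ((m : ℤ) * tri j + a * j)

/-- product over an arithmetic progression -/
noncomputable def PP (m a : ℕ) (s q : ℂ) : ℂ := ∏' k : ℕ, (1 + s * q ^ (m * k + a))

lemma norm_pow_lt (h1 : ‖q‖ < 1) {m : ℕ} (hm : 0 < m) : ‖q ^ m‖ < 1 := by
  rw [norm_pow]; exact pow_lt_one₀ (norm_nonneg q) h1 (by omega)

lemma th_prod (h0 : q ≠ 0) (h1 : ‖q‖ < 1) {m a b : ℕ} {s : ℂ} (hm : 0 < m) (hab : a + b = m)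
    (hs : s * s = 1) : th m a s q = EC (q ^ m) * PP m a s q * PP m b s q := by
  have hs0 : s ≠ 0 := by rintro rfl; simp at hs
  have hsi : s⁻¹ = s := (eq_inv_of_mul_eq_one_left hs).symm
  have J := jtp (Q := q ^ m) (z := s * q ^ a) (pow_ne_zero _ h0) (norm_pow_lt h1 hm)
    (mul_ne_zero hs0 (pow_ne_zero _ h0))
  have e1 : th m a s q = ∑' j : ℤ, (s * q ^ a) ^ j * (q ^ m) ^ tri j := by
    refine tsum_congr fun j => ?_
    rw [mul_zpow, zpow_add₀ h0, zpow_mul, zpow_mul, zpow_natCast, zpow_natCast]; ring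
  rw [e1, J]
  congr 1
  · congr 1
    exact tprod_congr fun k => by rw [pow_add, pow_mul]; ring
  · refine tprod_congr fun k => ?_
    rw [mul_inv, hsi, ← hab]
    have : q ^ a ≠ 0 := pow_ne_zero _ h0
    field_simp
    ring

lemma PP_mult (h1 : ‖q‖ < 1) {m : ℕ} (a : ℕ) (s : ℂ) (hm : 0 < m) :
    Multipliable (fun k : ℕ => 1 + s * q ^ (m * k + a)) := multipliable_pp h1 s m a hm

lemma PP_ne (h1 : ‖q‖ < 1) {m a : ℕ} (hm : 0 < m) (ha : 0 < a) : PP m a (-1) q ≠ 0 := by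
  refine tprod_one_add_ne_zero_of_summable (fun k => ?_) (summ_pow h1 (-1) m a hm)
  have := one_sub_pow_ne h1 (m * k + a) (by omega)
  intro h; apply this; linear_combination h

lemma EC_pow (m : ℕ) : EC (q ^ m) = PP m m (-1) q :=
  tprod_congr fun k => by rw [← pow_mul]; ring

lemma PP_sub (m a d : ℕ) (s : ℂ) : PP m a s (q ^ d) = PP (d * m) (d * a) s q :=
  tprod_congr fun k => by rw [← pow_mul]; ring

lemma PP_sq (h1 : ‖q‖ < 1) {m : ℕ} (a : ℕ) (hm : 0 < m) :
    PP m a 1 q * PP m a (-1) q = PP (2 * m) (2 * a) (-1) q := by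
  unfold PP
  rw [← (PP_mult h1 a 1 hm).tprod_mul (PP_mult h1 a (-1) hm)]
  exact tprod_congr fun k => by ring

lemma PP_dis (h1 : ‖q‖ < 1) {m : ℕ} (a d : ℕ) [NeZero d] (s : ℂ) (hm : 0 < m) :
    PP m a s q = ∏ r : Fin d, PP (m * d) (a + m * r) s q := by
  have hd : 0 < d := Nat.pos_of_ne_zero (NeZero.ne d)
  have e := (((Nat.divModEquiv d).trans (Equiv.prodComm _ _)).symm.tprod_eq
    (fun k : ℕ => 1 + s * q ^ (m * k + a)))
  have hm2 := ((Nat.divModEquiv d).trans (Equiv.prodComm _ _)).symm.multipliable_iff.2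
    (PP_mult h1 a s hm)
  simp only [Function.comp_def] at hm2
  rw [PP, ← e, Multipliable.tprod_prod' hm2, tprod_fintype]
  · refine Finset.prod_congr rfl fun r _ => tprod_congr fun k => ?_
    simp [Nat.divModEquiv]
    left; congr 1; ring
  · intro r
    refine (PP_mult h1 (a + m * r) s (Nat.mul_pos hm hd)).congr fun k => ?_
    simp [Nat.divModEquiv]
    left; congr 1; ring

/-- the ten atoms -/
noncomputable def nn (q : ℂ) (j : ℕ) : ℂ := PP 10 j (-1) q

lemma nn_ne (h1 : ‖q‖ < 1) {j : ℕ} (hj : 0 < j) : nn q j ≠ 0 := PP_ne h1 (by norm_num) hj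

lemma nn_ten : EC (q ^ 10) = nn q 10 := EC_pow 10

lemma E1_eq (h1 : ‖q‖ < 1) : EC q = nn q 1 * nn q 2 * nn q 3 * nn q 4 * nn q 5 * nn q 6 * nn q 7
    * nn q 8 * nn q 9 * nn q 10 := by
  have := EC_pow (q := q) 1
  rw [pow_one] at this
  rw [this, PP_dis h1 1 10 (-1) one_pos]
  simp [Fin.prod_univ_succ, nn]
  ring

lemma E2_eq (h1 : ‖q‖ < 1) : EC (q ^ 2) = nn q 2 * nn q 4 * nn q 6 * nn q 8 * nn q 10 := by
  rw [EC_pow, PP_dis h1 2 5 (-1) two_pos]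
  simp [Fin.prod_univ_succ, nn]
  ring

lemma E5_eq (h1 : ‖q‖ < 1) : EC (q ^ 5) = nn q 5 * nn q 10 := by
  rw [EC_pow, PP_dis h1 5 2 (-1) (by norm_num)]
  simp [Fin.prod_univ_succ, nn]

lemma PP5_eq (h1 : ‖q‖ < 1) (a : ℕ) : PP 5 a (-1) q = nn q a * nn q (a + 5) := by
  rw [PP_dis h1 a 2 (-1) (by norm_num)]
  simp [Fin.prod_univ_succ, nn]

lemma PP2_eq (h1 : ‖q‖ < 1) : PP 2 1 (-1) q = nn q 1 * nn q 3 * nn q 5 * nn q 7 * nn q 9 := by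
  rw [PP_dis h1 1 5 (-1) two_pos]
  simp [Fin.prod_univ_succ, nn]
  ring

lemma PP5p_eq (h1 : ‖q‖ < 1) (a : ℕ) (ha : 0 < a) :
    PP 5 a 1 q = nn q (2 * a) / (nn q a * nn q (a + 5)) := by
  have h := PP_sq h1 a (m := 5) (by norm_num)
  rw [PP5_eq h1] at h
  have a1 := nn_ne h1 ha
  have a2 := nn_ne h1 (j := a + 5) (by omega)
  rw [eq_div_iff (mul_ne_zero a1 a2), h]; rfl

lemma K_eq (h0 : q ≠ 0) (h1 : ‖q‖ < 1) :
    th 5 1 (-1) q = nn q 5 * nn q 10 * (nn q 1 * nn q 6) * (nn q 4 * nn q 9) := by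
  rw [th_prod h0 h1 (b := 4) (by norm_num) (by norm_num) (by norm_num), PP5_eq h1, PP5_eq h1,
    E5_eq h1]

lemma H_eq (h0 : q ≠ 0) (h1 : ‖q‖ < 1) :
    th 5 2 (-1) q = nn q 5 * nn q 10 * (nn q 2 * nn q 7) * (nn q 3 * nn q 8) := by
  rw [th_prod h0 h1 (b := 3) (by norm_num) (by norm_num) (by norm_num), PP5_eq h1, PP5_eq h1,
    E5_eq h1]

lemma K2_eq (h0 : q ≠ 0) (h1 : ‖q‖ < 1) :
    th 5 1 (-1) (q ^ 2) = nn q 10 * nn q 2 * nn q 8 := by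
  rw [th_prod (pow_ne_zero 2 h0) (norm_pow_lt h1 two_pos) (b := 4) (by norm_num) (by norm_num)
    (by norm_num), PP_sub, PP_sub, ← pow_mul, EC_pow]; rfl

lemma H2_eq (h0 : q ≠ 0) (h1 : ‖q‖ < 1) :
    th 5 2 (-1) (q ^ 2) = nn q 10 * nn q 4 * nn q 6 := by
  rw [th_prod (pow_ne_zero 2 h0) (norm_pow_lt h1 two_pos) (b := 3) (by norm_num) (by norm_num)
    (by norm_num), PP_sub, PP_sub, ← pow_mul, EC_pow]; rfl

lemma th10_eq (h0 : q ≠ 0) (h1 : ‖q‖ < 1) (a b : ℕ) (hab : a + b = 10) :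
    th 10 a (-1) q = nn q 10 * nn q a * nn q b := by
  rw [th_prod h0 h1 (b := b) (by norm_num) hab (by norm_num), EC_pow]; rfl

lemma phi_eq (h0 : q ≠ 0) (h1 : ‖q‖ < 1) :
    th 2 1 (-1) q = EC q ^ 2 / EC (q ^ 2) := by
  have := EC_ne (norm_pow_lt h1 (m := 2) two_pos)
  rw [eq_div_iff this, th_prod h0 h1 (b := 1) (by norm_num) (by norm_num) (by norm_num), PP2_eq h1,
    E1_eq h1, E2_eq h1]
  ring

lemma psi_eq (h0 : q ≠ 0) (h1 : ‖q‖ < 1) :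
    th 1 0 1 q = 2 * EC (q ^ 2) ^ 2 / EC q := by
  have hE := EC_ne h1
  rw [eq_div_iff hE, th_prod h0 h1 (b := 1) (by norm_num) (by norm_num) (by norm_num)]
  have h2 : PP 1 0 1 q = 2 * PP 1 1 1 q := by
    have M : Multipliable (fun k : ℕ => 1 + (1 : ℂ) * q ^ (1 * (k + 1) + 0)) :=
      (PP_mult (m := 1) h1 1 1 one_pos).congr fun k => by
        rw [show 1 * (k + 1) + 0 = 1 * k + 1 by ring]
    have T := tprod_eq_zero_mul' (f := fun k : ℕ => 1 + (1 : ℂ) * q ^ (1 * k + 0)) M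
    unfold PP
    rw [T]
    norm_num
  have h3 := PP_sq h1 1 (m := 1) one_pos
  have h4 := EC_pow (q := q) 1
  have h5 := EC_pow (q := q) 2
  rw [pow_one] at h4
  rw [h2, pow_one, h5]
  simp only [mul_one] at h3
  rw [← h3, h4]
  ring

lemma thp_eq (h0 : q ≠ 0) (h1 : ‖q‖ < 1) :
    th 5 1 1 q * th 5 2 1 q = EC (q ^ 2) * EC (q ^ 5) ^ 3 / (EC q * EC (q ^ 10)) := by
  rw [th_prod h0 h1 (b := 4) (by norm_num) (by norm_num) (by norm_num),
    th_prod h0 h1 (b := 3) (by norm_num) (by norm_num) (by norm_num),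
    PP5p_eq h1 _ (by norm_num), PP5p_eq h1 _ (by norm_num), PP5p_eq h1 _ (by norm_num),
    PP5p_eq h1 _ (by norm_num), E1_eq h1, E2_eq h1, E5_eq h1, nn_ten]
  have a1 := nn_ne h1 (j := 1) (by norm_num)
  have a2 := nn_ne h1 (j := 2) (by norm_num)
  have a3 := nn_ne h1 (j := 3) (by norm_num)
  have a4 := nn_ne h1 (j := 4) (by norm_num)
  have a5 := nn_ne h1 (j := 5) (by norm_num)
  have a6 := nn_ne h1 (j := 6) (by norm_num)
  have a7 := nn_ne h1 (j := 7) (by norm_num)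
  have a8 := nn_ne h1 (j := 8) (by norm_num)
  have a9 := nn_ne h1 (j := 9) (by norm_num)
  have a10 := nn_ne h1 (j := 10) (by norm_num)
  norm_num
  field_simp

end RK

namespace RK

variable {q : ℂ}

/-- theta term -/
noncomputable def T (m a : ℕ) (s q : ℂ) (j : ℤ) : ℂ := s ^ j * q ^ ((m : ℤ) * tri j + a * j)

lemma th_def (m a : ℕ) (s q : ℂ) : th m a s q = ∑' j, T m a s q j := rfl

lemma T_summ (h0 : q ≠ 0) (h1 : ‖q‖ < 1) {m : ℕ} (hm : 0 < m) (a : ℕ) {s : ℂ} (hs : ‖s‖ = 1)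
    (p : ℕ) : Summable fun j : ℤ => ‖(j : ℂ) ^ p * T m a s q j‖ := by
  have hq : 0 < ‖q‖ := norm_pos_iff.2 h0
  have := summable_real (‖q‖ ^ m) (‖q‖ ^ a) (by positivity)
    (pow_lt_one₀ (norm_nonneg q) h1 (by omega)) (by positivity) p
  refine this.congr fun j => ?_
  have e : ‖(j : ℂ)‖ = |(j : ℝ)| := Complex.norm_intCast j
  rw [T, norm_mul, norm_mul, norm_pow, norm_zpow, norm_zpow, hs, e, zpow_add₀ hq.ne', zpow_mul,
    zpow_mul]
  simp

lemma T_summ0 (h0 : q ≠ 0) (h1 : ‖q‖ < 1) {m : ℕ} (hm : 0 < m) (a : ℕ) {s : ℂ} (hs : ‖s‖ = 1) :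
    Summable fun j : ℤ => ‖T m a s q j‖ := by
  simpa using T_summ h0 h1 hm a hs 0

lemma tsum_mul2 {f g : ℤ → ℂ} (hf : Summable fun j => ‖f j‖) (hg : Summable fun j => ‖g j‖) :
    (∑' j, f j) * ∑' j, g j = ∑' p : ℤ × ℤ, f p.1 * g p.2 :=
  tsum_mul_tsum_of_summable_norm hf hg

lemma summ_mul2 {f g : ℤ → ℂ} (hf : Summable fun j => ‖f j‖) (hg : Summable fun j => ‖g j‖) :
    Summable fun p : ℤ × ℤ => f p.1 * g p.2 :=
  summable_mul_of_summable_norm hf hg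

/-- multiplication by 2+i in the Gaussian lattice -/
def e5 (v : ℤ) : Fin 5 × (ℤ × ℤ) ≃ ℤ × ℤ where
  toFun p := ((p.1 : ℕ) + 2 * p.2.1 - p.2.2, p.2.1 + 2 * p.2.2 + v)
  invFun p := (⟨((p.1 - 2 * (p.2 - v)) % 5).toNat, by omega⟩,
    ((p.2 - v) + 2 * ((p.1 - 2 * (p.2 - v)) / 5), -((p.1 - 2 * (p.2 - v)) / 5)))
  left_inv := by
    rintro ⟨⟨r, hr⟩, c, d⟩
    simp only [Prod.mk.injEq, Fin.mk.injEq]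
    refine ⟨?_, ?_, ?_⟩ <;> omega
  right_inv := by
    rintro ⟨a, b⟩
    simp only [Prod.mk.injEq]
    constructor <;> omega

lemma split5 (v : ℤ) {g : ℤ × ℤ → ℂ} (hg : Summable g) :
    ∑' p, g p = ∑' p : ℤ × ℤ, g (0 + 2 * p.1 - p.2, p.1 + 2 * p.2 + v)
      + ∑' p : ℤ × ℤ, g (1 + 2 * p.1 - p.2, p.1 + 2 * p.2 + v)
      + ∑' p : ℤ × ℤ, g (2 + 2 * p.1 - p.2, p.1 + 2 * p.2 + v)
      + ∑' p : ℤ × ℤ, g (3 + 2 * p.1 - p.2, p.1 + 2 * p.2 + v)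
      + ∑' p : ℤ × ℤ, g (4 + 2 * p.1 - p.2, p.1 + 2 * p.2 + v) := by
  have h := (e5 v).summable_iff.2 hg
  simp only [Function.comp_def] at h
  rw [← (e5 v).tsum_eq, Summable.tsum_prod h, tsum_fintype, Fin.sum_univ_five]
  rfl

/-- the sublattice of index 2 -/
def e2 : Fin 2 × (ℤ × ℤ) ≃ ℤ × ℤ where
  toFun p := ((p.1 : ℕ) + p.2.1 + p.2.2, p.2.1 - p.2.2)
  invFun p := (⟨((p.1 - p.2) % 2).toNat, by omega⟩,
    (p.2 + (p.1 - p.2) / 2, (p.1 - p.2) / 2))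
  left_inv := by
    rintro ⟨⟨r, hr⟩, c, d⟩
    simp only [Prod.mk.injEq, Fin.mk.injEq]
    refine ⟨?_, ?_, ?_⟩ <;> omega
  right_inv := by
    rintro ⟨a, b⟩
    simp only [Prod.mk.injEq]
    constructor <;> omega

lemma split2 {g : ℤ × ℤ → ℂ} (hg : Summable g) :
    ∑' p, g p = ∑' p : ℤ × ℤ, g (0 + p.1 + p.2, p.1 - p.2)
      + ∑' p : ℤ × ℤ, g (1 + p.1 + p.2, p.1 - p.2) := by
  have h := e2.summable_iff.2 hg
  simp only [Function.comp_def] at h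
  rw [← e2.tsum_eq, Summable.tsum_prod h, tsum_fintype, Fin.sum_univ_two]
  rfl

/-- affine reindexings -/
def ed (u v : ℤ) (s t : ℤˣ) : ℤ × ℤ ≃ ℤ × ℤ where
  toFun p := (s * p.1 + u, t * p.2 + v)
  invFun p := (s * (p.1 - u), t * (p.2 - v))
  left_inv := by
    rintro ⟨a, b⟩
    rcases Int.units_eq_one_or s with rfl | rfl <;> rcases Int.units_eq_one_or t with rfl | rfl <;>
      simp
  right_inv := by
    rintro ⟨a, b⟩
    rcases Int.units_eq_one_or s with rfl | rfl <;> rcases Int.units_eq_one_or t with rfl | rfl <;>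
      simp

lemma re_d (f : ℤ × ℤ → ℂ) (s u t v : ℤ) (hs : s = 1 ∨ s = -1) (ht : t = 1 ∨ t = -1) :
    ∑' p, f p = ∑' p : ℤ × ℤ, f (s * p.1 + u, t * p.2 + v) := by
  rcases hs with rfl | rfl <;> rcases ht with rfl | rfl
  · exact ((ed u v 1 1).tsum_eq f).symm
  · exact ((ed u v 1 (-1)).tsum_eq f).symm
  · exact ((ed u v (-1) 1).tsum_eq f).symm
  · exact ((ed u v (-1) (-1)).tsum_eq f).symm

lemma re_s (f : ℤ × ℤ → ℂ) (s u t v : ℤ) (hs : s = 1 ∨ s = -1) (ht : t = 1 ∨ t = -1) :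
    ∑' p, f p = ∑' p : ℤ × ℤ, f (s * p.2 + u, t * p.1 + v) := by
  rw [re_d f s u t v hs ht, ← (Equiv.prodComm ℤ ℤ).tsum_eq]
  rfl

lemma negpow {x x' : ℤ} (h : (x - x') % 2 = 0) : (-1 : ℂ) ^ x = (-1) ^ x' := by
  have : Even (x - x') := Int.even_iff.2 h
  have h2 : (-1 : ℂ) ^ (x - x') = 1 := this.neg_one_zpow
  rw [show x = (x - x') + x' by ring, zpow_add₀ (by norm_num), h2, one_mul]

lemma negpow' {x x' : ℤ} (h : (x - x') % 2 = 1) : (-1 : ℂ) ^ x = -(-1) ^ x' := by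
  rw [negpow (x' := x' + 1) (by omega), zpow_add₀ (by norm_num)]; simp

lemma TT (h0 : q ≠ 0) (m a m' a' : ℕ) (j k : ℤ) :
    T m a (-1) q j * T m' a' (-1) q k
      = (-1) ^ (j + k) * q ^ (((m : ℤ) * tri j + a * j) + (m' * tri k + a' * k)) := by
  rw [T, T, zpow_add₀ (show (-1 : ℂ) ≠ 0 by norm_num), zpow_add₀ h0 ((m : ℤ) * tri j + a * j)]; ring

lemma TT1 (h0 : q ≠ 0) (m a m' a' : ℕ) (j k : ℤ) :
    T m a 1 q j * T m' a' 1 q k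
      = q ^ (((m : ℤ) * tri j + a * j) + (m' * tri k + a' * k)) := by
  rw [T, T, one_zpow, one_zpow, zpow_add₀ h0 ((m : ℤ) * tri j + a * j)]; ring

lemma T_pow5 (m a : ℕ) (s : ℂ) (j : ℤ) :
    T m a s (q ^ 5) j = T (5 * m) (5 * a) s q j := by
  rw [T, T, ← zpow_natCast q 5, ← zpow_mul]; congr 2; push_cast; ring

lemma th_pow5 (m a : ℕ) (s : ℂ) :
    th m a s (q ^ 5) = th (5 * m) (5 * a) s q := tsum_congr fun j => T_pow5 m a s j

lemma eq_of_two {x y : ℤ} (h : 2 * x = 2 * y) : x = y := by omega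

lemma cls_d (f F : ℤ × ℤ → ℂ) (s u t v : ℤ) (hs : s = 1 ∨ s = -1) (ht : t = 1 ∨ t = -1)
    (h : ∀ x y, f (s * x + u, t * y + v) = F (x, y)) : ∑' p, f p = ∑' p, F p := by
  rw [re_d f s u t v hs ht]
  exact tsum_congr fun p => h p.1 p.2

lemma cls_s (f F : ℤ × ℤ → ℂ) (s u t v : ℤ) (hs : s = 1 ∨ s = -1) (ht : t = 1 ∨ t = -1)
    (h : ∀ x y, f (s * y + u, t * x + v) = F (x, y)) : ∑' p, f p = ∑' p, F p := by
  rw [re_s f s u t v hs ht]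
  exact tsum_congr fun p => h p.1 p.2

lemma expo {m a n b m' a' n' b' c x y x' y' : ℤ}
    (e : m * (x * (x - 1)) + 2 * a * x + n * (y * (y - 1)) + 2 * b * y
      = 2 * c + m' * (x' * (x' - 1)) + 2 * a' * x' + n' * (y' * (y' - 1)) + 2 * b' * y') :
    (m * tri x + a * x) + (n * tri y + b * y)
      = c + ((m' * tri x' + a' * x') + (n' * tri y' + b' * y')) := by
  apply eq_of_two
  linear_combination e + m * two_tri x + n * two_tri y - m' * two_tri x' - n' * two_tri y'

lemma TTe (h0 : q ≠ 0) {m a n b m' a' n' b' : ℕ} (c : ℕ) {x y x' y' : ℤ}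
    (hp : (x + y - (x' + y')) % 2 = 0)
    (e : (m : ℤ) * (x * (x - 1)) + 2 * a * x + n * (y * (y - 1)) + 2 * b * y
      = 2 * c + m' * (x' * (x' - 1)) + 2 * a' * x' + n' * (y' * (y' - 1)) + 2 * b' * y') :
    T m a (-1) q x * T n b (-1) q y = q ^ c * (T m' a' (-1) q x' * T n' b' (-1) q y') := by
  rw [TT h0, TT h0, expo e, negpow hp, zpow_add₀ h0 c, zpow_natCast]; ring

lemma TTo (h0 : q ≠ 0) {m a n b m' a' n' b' : ℕ} (c : ℕ) {x y x' y' : ℤ}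
    (hp : (x + y - (x' + y')) % 2 = 1)
    (e : (m : ℤ) * (x * (x - 1)) + 2 * a * x + n * (y * (y - 1)) + 2 * b * y
      = 2 * c + m' * (x' * (x' - 1)) + 2 * a' * x' + n' * (y' * (y' - 1)) + 2 * b' * y') :
    T m a (-1) q x * T n b (-1) q y = -q ^ c * (T m' a' (-1) q x' * T n' b' (-1) q y') := by
  rw [TT h0, TT h0, expo e, negpow' hp, zpow_add₀ h0 c, zpow_natCast]; ring

lemma TTp (h0 : q ≠ 0) {m a n b m' a' n' b' : ℕ} (c : ℕ) {x y x' y' : ℤ}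
    (e : (m : ℤ) * (x * (x - 1)) + 2 * a * x + n * (y * (y - 1)) + 2 * b * y
      = 2 * c + m' * (x' * (x' - 1)) + 2 * a' * x' + n' * (y' * (y' - 1)) + 2 * b' * y') :
    T m a 1 q x * T n b 1 q y = q ^ c * (T m' a' 1 q x' * T n' b' 1 q y') := by
  rw [TT1 h0, TT1 h0, expo e, zpow_add₀ h0 c, zpow_natCast]

lemma m1n : ‖(-1 : ℂ)‖ = 1 := by simp
lemma p1n : ‖(1 : ℂ)‖ = 1 := by simp

/-- pair term -/
noncomputable def gT (m a n b : ℕ) (s q : ℂ) (p : ℤ × ℤ) : ℂ := T m a s q p.1 * T n b s q p.2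

lemma th_mul (h0 : q ≠ 0) (h1 : ‖q‖ < 1) {m n : ℕ} (hm : 0 < m) (hn : 0 < n) (a b : ℕ) {s : ℂ}
    (hs : ‖s‖ = 1) : th m a s q * th n b s q = ∑' p, gT m a n b s q p :=
  tsum_mul2 (T_summ0 h0 h1 hm a hs) (T_summ0 h0 h1 hn b hs)

lemma gT_summ (h0 : q ≠ 0) (h1 : ‖q‖ < 1) {m n : ℕ} (hm : 0 < m) (hn : 0 < n) (a b : ℕ) {s : ℂ}
    (hs : ‖s‖ = 1) : Summable (gT m a n b s q) :=
  summ_mul2 (T_summ0 h0 h1 hm a hs) (T_summ0 h0 h1 hn b hs)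

lemma I1 (h0 : q ≠ 0) (h1 : ‖q‖ < 1) :
    th 2 1 (-1) q ^ 2 = th 2 1 (-1) (q ^ 5) ^ 2 - 4 * q * (th 10 1 (-1) q * th 10 3 (-1) q) := by
  rw [sq, sq, th_pow5, th_mul h0 h1 two_pos two_pos 1 1 m1n,
    th_mul h0 h1 (by norm_num) (by norm_num) _ _ m1n,
    th_mul h0 h1 (by norm_num) (by norm_num) _ _ m1n, split5 0 (gT_summ h0 h1 two_pos two_pos 1 1 m1n)]
  have hF : ∑' p : ℤ × ℤ, -q ^ 1 * gT 10 1 10 3 (-1) q p = -q * ∑' p, gT 10 1 10 3 (-1) q p := by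
    rw [tsum_mul_left, pow_one]
  have hG : ∑' p : ℤ × ℤ, q ^ 0 * gT (5 * 2) (5 * 1) (5 * 2) (5 * 1) (-1) q p
      = ∑' p, gT (5 * 2) (5 * 1) (5 * 2) (5 * 1) (-1) q p := by
    simp only [pow_zero, one_mul]
  have r0 : ∑' p : ℤ × ℤ, gT 2 1 2 1 (-1) q (0 + 2 * p.1 - p.2, p.1 + 2 * p.2 + 0) = ∑' p, gT (5 * 2) (5 * 1) (5 * 2) (5 * 1) (-1) q p :=
    (cls_d _ (fun p => q ^ 0 * gT (5 * 2) (5 * 1) (5 * 2) (5 * 1) (-1) q p) 1 0 1 0 (by simp) (by simp)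
      (fun x y => TTe h0 0 (by omega) (by push_cast; ring))).trans hG
  have r1 : ∑' p : ℤ × ℤ, gT 2 1 2 1 (-1) q (1 + 2 * p.1 - p.2, p.1 + 2 * p.2 + 0) = -q * ∑' p, gT 10 1 10 3 (-1) q p :=
    (cls_d _ (fun p => -q ^ 1 * gT 10 1 10 3 (-1) q p) (-1) 0 1 0 (by simp) (by simp)
      (fun x y => TTo h0 1 (by omega) (by push_cast; ring))).trans hF
  have r2 : ∑' p : ℤ × ℤ, gT 2 1 2 1 (-1) q (2 + 2 * p.1 - p.2, p.1 + 2 * p.2 + 0) = -q * ∑' p, gT 10 1 10 3 (-1) q p :=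
    (cls_s _ (fun p => -q ^ 1 * gT 10 1 10 3 (-1) q p) 1 (-1) 1 0 (by simp) (by simp)
      (fun x y => TTo h0 1 (by omega) (by push_cast; ring))).trans hF
  have r3 : ∑' p : ℤ × ℤ, gT 2 1 2 1 (-1) q (3 + 2 * p.1 - p.2, p.1 + 2 * p.2 + 0) = -q * ∑' p, gT 10 1 10 3 (-1) q p :=
    (cls_s _ (fun p => -q ^ 1 * gT 10 1 10 3 (-1) q p) (-1) (-1) (-1) 1 (by simp) (by simp)
      (fun x y => TTo h0 1 (by omega) (by push_cast; ring))).trans hF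
  have r4 : ∑' p : ℤ × ℤ, gT 2 1 2 1 (-1) q (4 + 2 * p.1 - p.2, p.1 + 2 * p.2 + 0) = -q * ∑' p, gT 10 1 10 3 (-1) q p :=
    (cls_d _ (fun p => -q ^ 1 * gT 10 1 10 3 (-1) q p) 1 (-2) (-1) 1 (by simp) (by simp)
      (fun x y => TTo h0 1 (by omega) (by push_cast; ring))).trans hF
  rw [r0, r1, r2, r3, r4]
  ring

lemma I2 (h0 : q ≠ 0) (h1 : ‖q‖ < 1) :
    th 1 0 1 q ^ 2 = q * th 1 0 1 (q ^ 5) ^ 2 + 4 * (th 5 1 1 q * th 5 2 1 q) := by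
  rw [sq, sq, th_pow5, th_mul h0 h1 one_pos one_pos 0 0 p1n,
    th_mul h0 h1 (by norm_num) (by norm_num) _ _ p1n,
    th_mul h0 h1 (by norm_num) (by norm_num) _ _ p1n,
    split5 (-1) (gT_summ h0 h1 one_pos one_pos 0 0 p1n)]
  have hF : ∑' p : ℤ × ℤ, q ^ 0 * gT 5 1 5 2 1 q p = ∑' p, gT 5 1 5 2 1 q p := by
    simp only [pow_zero, one_mul]
  have hG : ∑' p : ℤ × ℤ, q ^ 1 * gT (5 * 1) (5 * 0) (5 * 1) (5 * 0) 1 q p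
      = q * ∑' p, gT (5 * 1) (5 * 0) (5 * 1) (5 * 0) 1 q p := by
    rw [tsum_mul_left, pow_one]
  have r0 : ∑' p : ℤ × ℤ, gT 1 0 1 0 1 q (0 + 2 * p.1 - p.2, p.1 + 2 * p.2 + -1) = q * ∑' p, gT (5 * 1) (5 * 0) (5 * 1) (5 * 0) 1 q p :=
    (cls_d _ (fun p => q ^ 1 * gT (5 * 1) (5 * 0) (5 * 1) (5 * 0) 1 q p) 1 0 1 0 (by simp) (by simp)
      (fun x y => TTp h0 1 (by push_cast; ring))).trans hG
  have r1 : ∑' p : ℤ × ℤ, gT 1 0 1 0 1 q (1 + 2 * p.1 - p.2, p.1 + 2 * p.2 + -1) = ∑' p, gT 5 1 5 2 1 q p :=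
    (cls_s _ (fun p => q ^ 0 * gT 5 1 5 2 1 q p) 1 0 (-1) 1 (by simp) (by simp)
      (fun x y => TTp h0 0 (by push_cast; ring))).trans hF
  have r2 : ∑' p : ℤ × ℤ, gT 1 0 1 0 1 q (2 + 2 * p.1 - p.2, p.1 + 2 * p.2 + -1) = ∑' p, gT 5 1 5 2 1 q p :=
    (cls_d _ (fun p => q ^ 0 * gT 5 1 5 2 1 q p) (-1) 0 (-1) 1 (by simp) (by simp)
      (fun x y => TTp h0 0 (by push_cast; ring))).trans hF
  have r3 : ∑' p : ℤ × ℤ, gT 1 0 1 0 1 q (3 + 2 * p.1 - p.2, p.1 + 2 * p.2 + -1) = ∑' p, gT 5 1 5 2 1 q p :=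
    (cls_d _ (fun p => q ^ 0 * gT 5 1 5 2 1 q p) 1 (-1) 1 1 (by simp) (by simp)
      (fun x y => TTp h0 0 (by push_cast; ring))).trans hF
  have r4 : ∑' p : ℤ × ℤ, gT 1 0 1 0 1 q (4 + 2 * p.1 - p.2, p.1 + 2 * p.2 + -1) = ∑' p, gT 5 1 5 2 1 q p :=
    (cls_s _ (fun p => q ^ 0 * gT 5 1 5 2 1 q p) (-1) (-1) 1 1 (by simp) (by simp)
      (fun x y => TTp h0 0 (by push_cast; ring))).trans hF
  rw [r0, r1, r2, r3, r4]
  ring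

end RK

namespace RK

variable {q : ℂ}

lemma MX1 (h0 : q ≠ 0) {m a n b m' a' n' b' : ℕ} (c : ℕ) (ε : ℤ) {x y x' y' : ℤ}
    (hp : (x + ε - (x' + y')) % 2 = 0)
    (e : (m : ℤ) * (x * (x - 1)) + 2 * a * x + n * (y * (y - 1)) + 2 * b * y
      = 2 * c + m' * (x' * (x' - 1)) + 2 * a' * x' + n' * (y' * (y' - 1)) + 2 * b' * y') :
    T m a (-1) q x * T n b 1 q y
      = (-1) ^ ε * q ^ c * (T m' a' (-1) q x' * T n' b' (-1) q y') := by
  have h2 : (-1 : ℂ) ^ x = (-1) ^ ε * (-1) ^ (x' + y') := by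
    rw [← zpow_add₀ (by norm_num)]; exact negpow (by omega)
  have h3 : T m a (-1) q x * T n b 1 q y
      = (-1) ^ x * q ^ (((m : ℤ) * tri x + a * x) + (n * tri y + b * y)) := by
    rw [T, T, one_zpow, zpow_add₀ h0 ((m : ℤ) * tri x + a * x)]; ring
  rw [h3, TT h0, expo e, zpow_add₀ h0 c, zpow_natCast, h2]; ring

/-- mixed pair term -/
noncomputable def hT (m a n b : ℕ) (q : ℂ) (p : ℤ × ℤ) : ℂ := T m a (-1) q p.1 * T n b 1 q p.2

/-- mixed pair term -/
noncomputable def hT' (m a n b : ℕ) (q : ℂ) (p : ℤ × ℤ) : ℂ := T n b 1 q p.1 * T m a (-1) q p.2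

lemma I3a (h0 : q ≠ 0) (h1 : ‖q‖ < 1) :
    th 5 1 (-1) q * th 5 2 1 q
      = th 10 3 (-1) q * th 10 4 (-1) q - q * (th 10 1 (-1) q * th 10 2 (-1) q) := by
  have s1 := T_summ0 h0 h1 (m := 5) (by norm_num) 1 m1n
  have s2 := T_summ0 h0 h1 (m := 5) (by norm_num) 2 p1n
  have e : th 5 1 (-1) q * th 5 2 1 q = ∑' p, hT 5 1 5 2 q p := tsum_mul2 s1 s2
  have sm : Summable (hT 5 1 5 2 q) := summ_mul2 s1 s2
  rw [e, th_mul h0 h1 (by norm_num) (by norm_num) _ _ m1n,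
    th_mul h0 h1 (by norm_num) (by norm_num) _ _ m1n, split2 sm]
  have hF : ∑' p : ℤ × ℤ, (-1) ^ (0 : ℤ) * q ^ 0 * gT 10 3 10 4 (-1) q p
      = ∑' p, gT 10 3 10 4 (-1) q p := by
    simp
  have hG : ∑' p : ℤ × ℤ, (-1) ^ (1 : ℤ) * q ^ 1 * gT 10 1 10 2 (-1) q p
      = -q * ∑' p, gT 10 1 10 2 (-1) q p := by
    rw [tsum_mul_left]; simp
  have r0 : ∑' p : ℤ × ℤ, hT 5 1 5 2 q (0 + p.1 + p.2, p.1 - p.2)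
      = ∑' p, gT 10 3 10 4 (-1) q p :=
    (cls_d _ (fun p => (-1) ^ (0 : ℤ) * q ^ 0 * gT 10 3 10 4 (-1) q p) 1 0 1 0 (by simp) (by simp)
      (fun x y => MX1 h0 0 0 (by omega) (by push_cast; ring))).trans hF
  have r1 : ∑' p : ℤ × ℤ, hT 5 1 5 2 q (1 + p.1 + p.2, p.1 - p.2)
      = -q * ∑' p, gT 10 1 10 2 (-1) q p :=
    (cls_s _ (fun p => (-1) ^ (1 : ℤ) * q ^ 1 * gT 10 1 10 2 (-1) q p) (-1) 0 (-1) 0 (by simp)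
      (by simp) (fun x y => MX1 h0 1 1 (by omega) (by push_cast; ring))).trans hG
  rw [r0, r1]
  ring

lemma MX2 (h0 : q ≠ 0) {m a n b m' a' n' b' : ℕ} (c : ℕ) {x y x' y' : ℤ}
    (hp : (y - (x' + y')) % 2 = 0)
    (e : (m : ℤ) * (x * (x - 1)) + 2 * a * x + n * (y * (y - 1)) + 2 * b * y
      = 2 * c + m' * (x' * (x' - 1)) + 2 * a' * x' + n' * (y' * (y' - 1)) + 2 * b' * y') :
    T m a 1 q x * T n b (-1) q y
      = q ^ c * (T m' a' (-1) q x' * T n' b' (-1) q y') := by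
  have h2 : (-1 : ℂ) ^ y = (-1) ^ (x' + y') := negpow (by omega)
  have h3 : T m a 1 q x * T n b (-1) q y
      = (-1) ^ y * q ^ (((m : ℤ) * tri x + a * x) + (n * tri y + b * y)) := by
    rw [T, T, one_zpow, zpow_add₀ h0 ((m : ℤ) * tri x + a * x)]; ring
  rw [h3, TT h0, expo e, zpow_add₀ h0 c, zpow_natCast, h2]; ring

lemma I3b (h0 : q ≠ 0) (h1 : ‖q‖ < 1) :
    th 5 1 1 q * th 5 2 (-1) q
      = th 10 3 (-1) q * th 10 4 (-1) q + q * (th 10 1 (-1) q * th 10 2 (-1) q) := by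
  have s1 := T_summ0 h0 h1 (m := 5) (by norm_num) 1 p1n
  have s2 := T_summ0 h0 h1 (m := 5) (by norm_num) 2 m1n
  have e : th 5 1 1 q * th 5 2 (-1) q = ∑' p, hT' 5 2 5 1 q p := tsum_mul2 s1 s2
  have sm : Summable (hT' 5 2 5 1 q) := summ_mul2 s1 s2
  rw [e, th_mul h0 h1 (by norm_num) (by norm_num) _ _ m1n,
    th_mul h0 h1 (by norm_num) (by norm_num) _ _ m1n, split2 sm]
  have hF : ∑' p : ℤ × ℤ, q ^ 0 * gT 10 3 10 4 (-1) q p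
      = ∑' p, gT 10 3 10 4 (-1) q p := by
    simp
  have hG : ∑' p : ℤ × ℤ, q ^ 1 * gT 10 1 10 2 (-1) q p
      = q * ∑' p, gT 10 1 10 2 (-1) q p := by
    rw [tsum_mul_left]; simp
  have r0 : ∑' p : ℤ × ℤ, hT' 5 2 5 1 q (0 + p.1 + p.2, p.1 - p.2)
      = ∑' p, gT 10 3 10 4 (-1) q p :=
    (cls_d _ (fun p => q ^ 0 * gT 10 3 10 4 (-1) q p) 1 0 1 0 (by simp) (by simp)
      (fun x y => MX2 h0 0 (by omega) (by push_cast; ring))).trans hF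
  have r1 : ∑' p : ℤ × ℤ, hT' 5 2 5 1 q (1 + p.1 + p.2, p.1 - p.2)
      = q * ∑' p, gT 10 1 10 2 (-1) q p :=
    (cls_s _ (fun p => q ^ 1 * gT 10 1 10 2 (-1) q p) (-1) 0 (-1) 0 (by simp)
      (by simp) (fun x y => MX2 h0 1 (by omega) (by push_cast; ring))).trans hG
  rw [r0, r1]

/-- q times the derivative of the theta series -/
noncomputable def Dth (m a : ℕ) (s q : ℂ) : ℂ :=
  ∑' j : ℤ, (((m : ℤ) * tri j + a * j : ℤ) : ℂ) * T m a s q j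

/-- weighted term -/
noncomputable def wT (w : ℤ → ℤ → ℤ) (m a n b : ℕ) (q : ℂ) (p : ℤ × ℤ) : ℂ :=
  (w p.1 p.2 : ℂ) * (T m a (-1) q p.1 * T n b (-1) q p.2)

/-- weight: eight times the weight on the lattice -/
def w8 (c d : ℤ) : ℤ :=
  3 * (2 * c - 1) ^ 2 - 3 * (2 * d - 1) ^ 2 + 8 * ((2 * c - 1) * (2 * d - 1))

/-- weight on the target -/
def wt (a b : ℤ) : ℤ := 8 * (1 + 5 * ((5 * tri a + a) - (5 * tri b + 2 * b)))

lemma wt_eq (a b : ℤ) : wt a b = 8 + 20 * (5 * (a * (a - 1)) + 2 * a - (5 * (b * (b - 1)) + 4 * b)) := by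
  rw [wt]; linear_combination 100 * two_tri a - 100 * two_tri b

lemma T_summq (h0 : q ≠ 0) (h1 : ‖q‖ < 1) {m : ℕ} (hm : 0 < m) (a : ℕ) {s : ℂ} (hs : ‖s‖ = 1)
    {w : ℤ → ℂ} (α β γ : ℂ) (hw : ∀ j : ℤ, w j = α * (j : ℂ) ^ 2 + β * j + γ) :
    Summable fun j : ℤ => ‖w j * T m a s q j‖ := by
  have i2 := ((T_summ h0 h1 hm a hs 2).of_norm.mul_left α)
  have i1 := ((T_summ h0 h1 hm a hs 1).of_norm.mul_left β)
  have i0 := ((T_summ h0 h1 hm a hs 0).of_norm.mul_left γ)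
  refine (((i2.add i1).add i0).congr fun j => ?_).norm
  rw [hw]; ring

lemma two_tri_C (j : ℤ) : (2 : ℂ) * (tri j : ℂ) = j * (j - 1) := by exact_mod_cast two_tri j

lemma Dth_summ (h0 : q ≠ 0) (h1 : ‖q‖ < 1) {m : ℕ} (hm : 0 < m) (a : ℕ) {s : ℂ} (hs : ‖s‖ = 1) :
    Summable fun j : ℤ => ‖(((m : ℤ) * tri j + a * j : ℤ) : ℂ) * T m a s q j‖ := by
  refine T_summq h0 h1 hm a hs (m / 2) (a - m / 2) 0 fun j => ?_
  push_cast
  linear_combination (m / 2 : ℂ) * two_tri_C j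

lemma wT_even (h0 : q ≠ 0) {m a n b m' a' n' b' : ℕ} {w w' : ℤ → ℤ → ℤ} {x y x' y' : ℤ}
    (hw : w x y = w' x' y')
    (hp : (x + y - (x' + y')) % 2 = 0)
    (e : (m : ℤ) * (x * (x - 1)) + 2 * a * x + n * (y * (y - 1)) + 2 * b * y
      = 2 * (0 : ℕ) + m' * (x' * (x' - 1)) + 2 * a' * x' + n' * (y' * (y' - 1)) + 2 * b' * y') :
    wT w m a n b q (x, y) = wT w' m' a' n' b' q (x', y') := by
  simp only [wT]
  rw [hw, TTe h0 0 hp e]; simp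

lemma wT_odd (h0 : q ≠ 0) {m a n b m' a' n' b' : ℕ} {w w' : ℤ → ℤ → ℤ} {x y x' y' : ℤ}
    (hw : w x y = -w' x' y')
    (hp : (x + y - (x' + y')) % 2 = 1)
    (e : (m : ℤ) * (x * (x - 1)) + 2 * a * x + n * (y * (y - 1)) + 2 * b * y
      = 2 * (0 : ℕ) + m' * (x' * (x' - 1)) + 2 * a' * x' + n' * (y' * (y' - 1)) + 2 * b' * y') :
    wT w m a n b q (x, y) = wT w' m' a' n' b' q (x', y') := by
  simp only [wT]
  rw [hw, TTo h0 0 hp e]; simp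

lemma w8_sum (h0 : q ≠ 0) (h1 : ‖q‖ < 1) : HasSum (wT w8 1 0 1 0 q) (32 * EC q ^ 6) := by
  have s0 := T_summ0 h0 h1 (m := 1) one_pos 0 m1n
  have s1 : Summable fun j : ℤ => ‖(2 * (j : ℂ) - 1) * T 1 0 (-1) q j‖ :=
    T_summq h0 h1 one_pos 0 m1n 0 2 (-1) fun j => by ring
  have s2 : Summable fun j : ℤ => ‖(2 * (j : ℂ) - 1) ^ 2 * T 1 0 (-1) q j‖ :=
    T_summq h0 h1 one_pos 0 m1n 4 (-4) 1 fun j => by ring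
  have a0 : ∑' j, T 1 0 (-1) q j = 0 := by
    have e := (Equiv.subLeft (1 : ℤ)).tsum_eq (T 1 0 (-1) q)
    have e2 : ∀ j : ℤ, T 1 0 (-1) q (Equiv.subLeft (1 : ℤ) j) = - T 1 0 (-1) q j := by
      intro j
      rw [Equiv.subLeft_apply, T, T, negpow' (x' := j) (by omega),
        show tri (1 - j) = tri j from eq_of_two (by rw [two_tri, two_tri]; ring)]
      simp
    simp only [e2, tsum_neg] at e
    linear_combination (-1 / 2 : ℂ) * e
  have a1 : ∑' j : ℤ, (2 * (j : ℂ) - 1) * T 1 0 (-1) q j = -2 * EC q ^ 3 := by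
    have sj : Summable fun j : ℤ => (j : ℂ) * T 1 0 (-1) q j := by
      simpa using (T_summ h0 h1 one_pos 0 m1n 1).of_norm
    have J := jac h0 h1
    have : ∀ j : ℤ, (2 * (j : ℂ) - 1) * T 1 0 (-1) q j
        = 2 * ((j : ℂ) * T 1 0 (-1) q j) - T 1 0 (-1) q j := fun j => by ring
    simp only [this]
    rw [(sj.mul_left 2).tsum_sub s0.of_norm, a0, tsum_mul_left]
    have e3 : ∑' j : ℤ, (j : ℂ) * T 1 0 (-1) q j = - EC q ^ 3 := by
      rw [← J]; exact tsum_congr fun j => by rw [T]; simp; ring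
    rw [e3]; ring
  have h20 := ((summ_mul2 s2 s0).hasSum)
  have h02 := ((summ_mul2 s0 s2).hasSum)
  have h11 := ((summ_mul2 s1 s1).hasSum)
  rw [← tsum_mul2 s2 s0, a0, mul_zero] at h20
  rw [← tsum_mul2 s0 s2, a0, zero_mul] at h02
  rw [← tsum_mul2 s1 s1, a1] at h11
  have := ((h20.mul_left 3).sub (h02.mul_left 3)).add (h11.mul_left 8)
  rw [show 32 * EC q ^ 6 = 3 * 0 - 3 * 0 + 8 * (-2 * EC q ^ 3 * (-2 * EC q ^ 3)) by ring]
  refine this.congr_fun ?_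
  intro p
  simp only [wT, w8]
  push_cast
  ring

lemma wt_sum (h0 : q ≠ 0) (h1 : ‖q‖ < 1) : ∑' p, wT wt 5 1 5 2 q p
    = 8 * (th 5 1 (-1) q * th 5 2 (-1) q +
      5 * (Dth 5 1 (-1) q * th 5 2 (-1) q - th 5 1 (-1) q * Dth 5 2 (-1) q)) := by
  have sK := T_summ0 h0 h1 (m := 5) (by norm_num) 1 m1n
  have sH := T_summ0 h0 h1 (m := 5) (by norm_num) 2 m1n
  have dK := Dth_summ h0 h1 (m := 5) (by norm_num) 1 m1n
  have dH := Dth_summ h0 h1 (m := 5) (by norm_num) 2 m1n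
  have i1 := (summ_mul2 sK sH).hasSum
  have i2 := (summ_mul2 dK sH).hasSum
  have i3 := (summ_mul2 sK dH).hasSum
  rw [← tsum_mul2 sK sH] at i1
  rw [← tsum_mul2 dK sH] at i2
  rw [← tsum_mul2 sK dH] at i3
  have := (i1.add ((i2.sub i3).mul_left 5)).mul_left 8
  rw [th_def, th_def, Dth, Dth, ← this.tsum_eq]
  refine tsum_congr fun p => ?_
  simp only [wT, wt]
  push_cast
  ring

lemma I4 (h0 : q ≠ 0) (h1 : ‖q‖ < 1) : th 5 1 (-1) q * th 5 2 (-1) q +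
      5 * (Dth 5 1 (-1) q * th 5 2 (-1) q - th 5 1 (-1) q * Dth 5 2 (-1) q) = EC q ^ 6 := by
  have hs := w8_sum h0 h1
  have hsum := hs.tsum_eq
  rw [split5 0 hs.summable] at hsum
  have r0 : ∑' p : ℤ × ℤ, wT w8 1 0 1 0 q (0 + 2 * p.1 - p.2, p.1 + 2 * p.2 + 0) = ∑' p, wT wt 5 1 5 2 q p :=
    cls_d _ _ 1 0 1 0 (by simp) (by simp)
      (fun x y => wT_even h0 (by rw [wt_eq, w8]; ring) (by omega) (by push_cast; ring))
  have r1 : ∑' p : ℤ × ℤ, wT w8 1 0 1 0 q (1 + 2 * p.1 - p.2, p.1 + 2 * p.2 + 0) = ∑' p, wT wt 5 1 5 2 q p :=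
    cls_s _ _ (-1) 0 1 0 (by simp) (by simp)
      (fun x y => wT_odd h0 (by rw [wt_eq, w8]; ring) (by omega) (by push_cast; ring))
  have r3 : ∑' p : ℤ × ℤ, wT w8 1 0 1 0 q (3 + 2 * p.1 - p.2, p.1 + 2 * p.2 + 0) = ∑' p, wT wt 5 1 5 2 q p :=
    cls_s _ _ 1 (-1) (-1) 1 (by simp) (by simp)
      (fun x y => wT_odd h0 (by rw [wt_eq, w8]; ring) (by omega) (by push_cast; ring))
  have r4 : ∑' p : ℤ × ℤ, wT w8 1 0 1 0 q (4 + 2 * p.1 - p.2, p.1 + 2 * p.2 + 0) = ∑' p, wT wt 5 1 5 2 q p :=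
    cls_d _ _ (-1) (-1) (-1) 1 (by simp) (by simp)
      (fun x y => wT_even h0 (by rw [wt_eq, w8]; ring) (by omega) (by push_cast; ring))
  have r2 : ∑' p : ℤ × ℤ, wT w8 1 0 1 0 q (2 + 2 * p.1 - p.2, p.1 + 2 * p.2 + 0)
      = ∑' p : ℤ × ℤ, wT (fun x y => - w8 x y) 1 0 1 0 q (2 + 2 * p.1 - p.2, p.1 + 2 * p.2 + 0) :=
    cls_s _ _ 1 (-1) 1 1 (by simp) (by simp)
      (fun x y => wT_even h0 (by rw [w8, w8]; ring) (by omega) (by push_cast; ring))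
  have r2' : ∑' p : ℤ × ℤ, wT w8 1 0 1 0 q (2 + 2 * p.1 - p.2, p.1 + 2 * p.2 + 0) = 0 := by
    have e : ∀ p, wT (fun x y => - w8 x y) 1 0 1 0 q p = - wT w8 1 0 1 0 q p := fun p => by
      simp [wT]
    simp only [e, tsum_neg] at r2
    linear_combination (1 / 2 : ℂ) * r2
  rw [r0, r1, r2', r3, r4, wt_sum h0 h1] at hsum
  linear_combination (1 / 32 : ℂ) * hsum

end RK

namespace RK

variable {q : ℂ}

lemma E_ne (h1 : ‖q‖ < 1) (m : ℕ) (hm : 0 < m) : EC (q ^ m) ≠ 0 := EC_ne (norm_pow_lt h1 hm)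

lemma th1013 (h0 : q ≠ 0) (h1 : ‖q‖ < 1) : th 10 1 (-1) q * th 10 3 (-1) q
    = EC (q ^ 10) ^ 3 * EC q / (EC (q ^ 2) * EC (q ^ 5)) := by
  have e2 := E_ne h1 2 (by norm_num)
  have e5 := E_ne h1 5 (by norm_num)
  rw [eq_div_iff (mul_ne_zero e2 e5), th10_eq h0 h1 1 9 rfl, th10_eq h0 h1 3 7 rfl, E1_eq h1,
    E2_eq h1, E5_eq h1, nn_ten]
  ring

/-- X0 -/
noncomputable def X0 (q : ℂ) : ℂ := EC (q ^ 2) * EC (q ^ 5) ^ 5 / (q * EC q * EC (q ^ 10) ^ 5)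
/-- X1 -/
noncomputable def X1 (q : ℂ) : ℂ := EC q ^ 3 * EC (q ^ 5) / (q * EC (q ^ 2) * EC (q ^ 10) ^ 3)
/-- X2 -/
noncomputable def X2 (q : ℂ) : ℂ := EC (q ^ 2) ^ 4 * EC (q ^ 5) ^ 2 / (q * EC q ^ 2 * EC (q ^ 10) ^ 4)

lemma R1 (h0 : q ≠ 0) (h1 : ‖q‖ < 1) : X1 q = X0 q - 4 := by
  have i := I1 h0 h1
  rw [th1013 h0 h1, phi_eq h0 h1, phi_eq (pow_ne_zero 5 h0) (norm_pow_lt h1 (by norm_num)),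
    ← pow_mul] at i
  norm_num at i
  have e1 := EC_ne h1
  have e2 := E_ne h1 2 (by norm_num)
  have e5 := E_ne h1 5 (by norm_num)
  have e10 := E_ne h1 10 (by norm_num)
  rw [X1, X0]
  generalize EC (q ^ 2) = b at *
  generalize EC (q ^ 5) = c at *
  generalize EC (q ^ 10) = d at *
  generalize EC q = a at *
  field_simp at i ⊢
  linear_combination i

lemma R2 (h0 : q ≠ 0) (h1 : ‖q‖ < 1) : X2 q = X0 q + 1 := by
  have i := I2 h0 h1
  rw [thp_eq h0 h1, psi_eq h0 h1, psi_eq (pow_ne_zero 5 h0) (norm_pow_lt h1 (by norm_num)),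
    ← pow_mul] at i
  norm_num at i
  have e1 := EC_ne h1
  have e2 := E_ne h1 2 (by norm_num)
  have e5 := E_ne h1 5 (by norm_num)
  have e10 := E_ne h1 10 (by norm_num)
  rw [X2, X0]
  generalize EC (q ^ 2) = b at *
  generalize EC (q ^ 5) = c at *
  generalize EC (q ^ 10) = d at *
  generalize EC q = a at *
  field_simp at i ⊢
  linear_combination i / 4

/-- Rogers-Ramanujan type quotient -/
noncomputable def rr (q : ℂ) : ℂ := th 5 1 (-1) q / th 5 2 (-1) q
/-- Ramanujan's k -/
noncomputable def kk (q : ℂ) : ℂ := q * rr q * rr (q ^ 2) ^ 2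

lemma KH (h0 : q ≠ 0) (h1 : ‖q‖ < 1) : th 5 1 (-1) q * th 5 2 (-1) q = EC q * EC (q ^ 5) := by
  rw [K_eq h0 h1, H_eq h0 h1, E1_eq h1, E5_eq h1]; ring

lemma K_ne (h0 : q ≠ 0) (h1 : ‖q‖ < 1) : th 5 1 (-1) q ≠ 0 := by
  intro h
  have := KH h0 h1
  rw [h, zero_mul] at this
  exact mul_ne_zero (EC_ne h1) (E_ne h1 5 (by norm_num)) this.symm

lemma H_ne (h0 : q ≠ 0) (h1 : ‖q‖ < 1) : th 5 2 (-1) q ≠ 0 := by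
  intro h
  have := KH h0 h1
  rw [h, mul_zero] at this
  exact mul_ne_zero (EC_ne h1) (E_ne h1 5 (by norm_num)) this.symm

lemma kk_ne (h0 : q ≠ 0) (h1 : ‖q‖ < 1) : kk q ≠ 0 := by
  have h2 : ‖q ^ 2‖ < 1 := norm_pow_lt h1 two_pos
  have h02 := pow_ne_zero 2 h0
  exact mul_ne_zero (mul_ne_zero h0 (div_ne_zero (K_ne h0 h1) (H_ne h0 h1)))
    (pow_ne_zero 2 (div_ne_zero (K_ne h02 h2) (H_ne h02 h2)))

lemma kX0 (h0 : q ≠ 0) (h1 : ‖q‖ < 1) : 1 - kk q ^ 2 = kk q * X0 q := by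
  have e1 := EC_ne h1
  have e10 := E_ne h1 10 (by norm_num)
  have e5 := E_ne h1 5 (by norm_num)
  have hA : th 10 3 (-1) q * th 10 4 (-1) q ≠ 0 := by
    rw [th10_eq h0 h1 3 7 rfl, th10_eq h0 h1 4 6 rfl]
    have : ∀ j : ℕ, 0 < j → nn q j ≠ 0 := fun j hj => nn_ne h1 hj
    simp [this]
  have hk : kk q * (th 10 3 (-1) q * th 10 4 (-1) q) = q * (th 10 1 (-1) q * th 10 2 (-1) q) := by
    have : ∀ j : ℕ, 0 < j → nn q j ≠ 0 := fun j hj => nn_ne h1 hj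
    have n2 := this 2 (by norm_num)
    have n3 := this 3 (by norm_num)
    have n4 := this 4 (by norm_num)
    have n5 := this 5 (by norm_num)
    have n6 := this 6 (by norm_num)
    have n7 := this 7 (by norm_num)
    have n8 := this 8 (by norm_num)
    have n10 := this 10 (by norm_num)
    rw [kk, rr, rr, K_eq h0 h1, H_eq h0 h1, K2_eq h0 h1, H2_eq h0 h1, th10_eq h0 h1 3 7 rfl,
      th10_eq h0 h1 4 6 rfl, th10_eq h0 h1 1 9 rfl, th10_eq h0 h1 2 8 rfl]
    field_simp
  have hAB : (th 10 3 (-1) q * th 10 4 (-1) q) * (q * (th 10 1 (-1) q * th 10 2 (-1) q))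
      * EC (q ^ 5) = q * EC q * EC (q ^ 10) ^ 4 := by
    rw [th10_eq h0 h1 3 7 rfl,
      th10_eq h0 h1 4 6 rfl, th10_eq h0 h1 1 9 rfl, th10_eq h0 h1 2 8 rfl, E1_eq h1, E5_eq h1,
      nn_ten]
    ring
  have i3a := I3a h0 h1
  have i3b := I3b h0 h1
  have kh := KH h0 h1
  have tp := thp_eq h0 h1
  rw [← hk] at i3a i3b hAB
  generalize th 10 3 (-1) q * th 10 4 (-1) q = A at *
  have hm : A ^ 2 * (1 - kk q ^ 2) * EC (q ^ 10) = EC (q ^ 2) * EC (q ^ 5) ^ 4 := by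
    have : A ^ 2 * (1 - kk q ^ 2) = (th 5 1 (-1) q * th 5 2 (-1) q) * (th 5 1 1 q * th 5 2 1 q) := by
      rw [show (th 5 1 (-1) q * th 5 2 (-1) q) * (th 5 1 1 q * th 5 2 1 q)
        = (th 5 1 (-1) q * th 5 2 1 q) * (th 5 1 1 q * th 5 2 (-1) q) by ring, i3a, i3b]
      ring
    rw [this, kh, tp]
    field_simp
  have hX : X0 q * (q * EC q * EC (q ^ 10) ^ 5) = EC (q ^ 2) * EC (q ^ 5) ^ 5 := by
    rw [X0]; field_simp
  have hne : A ^ 2 * EC (q ^ 10) * EC (q ^ 5) ≠ 0 :=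
    mul_ne_zero (mul_ne_zero (pow_ne_zero 2 hA) e10) e5
  apply mul_left_cancel₀ hne
  linear_combination EC (q ^ 5) * hm - hX - X0 q * EC (q ^ 10) * hAB

lemma kX1 (h0 : q ≠ 0) (h1 : ‖q‖ < 1) : 1 - 4 * kk q - kk q ^ 2 = kk q * X1 q := by
  rw [R1 h0 h1]; linear_combination kX0 h0 h1

lemma kX2 (h0 : q ≠ 0) (h1 : ‖q‖ < 1) : 1 + kk q - kk q ^ 2 = kk q * X2 q := by
  rw [R2 h0 h1]; linear_combination kX0 h0 h1

lemma X2_ne (h0 : q ≠ 0) (h1 : ‖q‖ < 1) : X2 q ≠ 0 := by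
  have e1 := EC_ne h1
  have e2 := E_ne h1 2 (by norm_num)
  have e10 := E_ne h1 10 (by norm_num)
  have e5 := E_ne h1 5 (by norm_num)
  rw [X2]
  simp [*]

/-- the antiderivative -/
noncomputable def FF (q : ℂ) : ℂ :=
  (1 - 2 * kk q) * (q * EC q ^ 2 * EC (q ^ 10) ^ 4 / (EC (q ^ 2) ^ 4 * EC (q ^ 5) ^ 2))

lemma FF_eq (h0 : q ≠ 0) (h1 : ‖q‖ < 1) :
    FF q = kk q * (1 - 2 * kk q) / (1 + kk q - kk q ^ 2) := by
  rw [kX2 h0 h1, FF, X2]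
  have := kk_ne h0 h1
  have e1 := EC_ne h1
  have e2 := E_ne h1 2 (by norm_num)
  have e10 := E_ne h1 10 (by norm_num)
  have e5 := E_ne h1 5 (by norm_num)
  field_simp

lemma Y_eq (h0 : q ≠ 0) (h1 : ‖q‖ < 1) :
    (EC q ^ 5 / EC (q ^ 5) + 4 * (EC (q ^ 2) ^ 5 / EC (q ^ 10))) / 5 * X1 q / X2 q ^ 2
      = q * EC q ^ 8 * EC (q ^ 10) ^ 3 / EC (q ^ 2) ^ 7 := by
  have i1 := R1 h0 h1
  have i2 := R2 h0 h1
  have i : X1 q + 4 * X2 q = 5 * X0 q := by rw [i1, i2]; ring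
  clear i1 i2
  have e1 := EC_ne h1
  have e2 := E_ne h1 2 (by norm_num)
  have e10 := E_ne h1 10 (by norm_num)
  have e5 := E_ne h1 5 (by norm_num)
  have hy : (EC q ^ 5 / EC (q ^ 5) + 4 * (EC (q ^ 2) ^ 5 / EC (q ^ 10))) / 5
      = EC q * EC (q ^ 2) ^ 2 * EC (q ^ 5) ^ 3 / EC (q ^ 10) ^ 2 := by
    rw [X1, X2, X0] at i
    generalize EC (q ^ 2) = b at *
    generalize EC (q ^ 5) = c at *
    generalize EC (q ^ 10) = d at *
    generalize EC q = a at *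
    field_simp at i ⊢
    linear_combination i
  rw [hy, X1, X2]
  field_simp

end RK

namespace RK

open PowerSeries

variable {q : ℂ}

/-- f is represented by the power series c on the punctured unit disk -/
def Rep (c : PowerSeries ℂ) (f : ℂ → ℂ) : Prop :=
  ∀ q : ℂ, q ≠ 0 → ‖q‖ < 1 → HasSum (fun n : ℕ => coeff n c * q ^ n) (f q)

/-- evaluation -/
noncomputable def ev (c : PowerSeries ℂ) (q : ℂ) : ℂ := ∑' n : ℕ, coeff n c * q ^ n

lemma ev_zero (c : PowerSeries ℂ) : ev c 0 = coeff 0 c := by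
  rw [ev, tsum_eq_single 0]
  · simp
  · intro n hn; simp [hn]

lemma Rep.hs {c : PowerSeries ℂ} {f : ℂ → ℂ} (h : Rep c f) (h1 : ‖q‖ < 1) :
    HasSum (fun n : ℕ => coeff n c * q ^ n) (ev c q) := by
  by_cases h0 : q = 0
  · subst h0
    rw [ev_zero]
    have := hasSum_single (f := fun n : ℕ => coeff n c * (0 : ℂ) ^ n) 0
      (fun n hn => by simp [hn])
    simpa using this
  · exact (h q h0 h1).summable.hasSum

lemma Rep.ev_eq {c : PowerSeries ℂ} {f : ℂ → ℂ} (h : Rep c f) (h0 : q ≠ 0) (h1 : ‖q‖ < 1) :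
    ev c q = f q := (h q h0 h1).tsum_eq

lemma rep_of_all {c : PowerSeries ℂ} {f : ℂ → ℂ}
    (h : ∀ q : ℂ, ‖q‖ < 1 → HasSum (fun n : ℕ => coeff n c * q ^ n) (f q)) : Rep c f :=
  fun q _ h1 => h q h1

lemma Rep.congr {c : PowerSeries ℂ} {f g : ℂ → ℂ} (h : Rep c f)
    (hg : ∀ q : ℂ, q ≠ 0 → ‖q‖ < 1 → f q = g q) : Rep c g :=
  fun q h0 h1 => by rw [← hg q h0 h1]; exact h q h0 h1

lemma Rep.summable_norm {c : PowerSeries ℂ} {f : ℂ → ℂ} (h : Rep c f) (h1 : ‖q‖ < 1) :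
    Summable fun n : ℕ => ‖coeff n c * q ^ n‖ := (h.hs h1).summable.norm

lemma Rep.add {c d : PowerSeries ℂ} {f g : ℂ → ℂ} (hf : Rep c f) (hg : Rep d g) :
    Rep (c + d) (fun q => f q + g q) := fun q h0 h1 =>
  ((hf q h0 h1).add (hg q h0 h1)).congr_fun fun n => by simp [add_mul]

lemma Rep.sub {c d : PowerSeries ℂ} {f g : ℂ → ℂ} (hf : Rep c f) (hg : Rep d g) :
    Rep (c - d) (fun q => f q - g q) := fun q h0 h1 =>
  ((hf q h0 h1).sub (hg q h0 h1)).congr_fun fun n => by simp [sub_mul]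

lemma Rep.mul {c d : PowerSeries ℂ} {f g : ℂ → ℂ} (hf : Rep c f) (hg : Rep d g) :
    Rep (c * d) (fun q => f q * g q) := by
  intro q h0 h1
  have sf := hf.summable_norm h1
  have sg := hg.summable_norm h1
  have := tsum_mul_tsum_eq_tsum_sum_antidiagonal_of_summable_norm sf sg
  rw [(hf q h0 h1).tsum_eq, (hg q h0 h1).tsum_eq] at this
  have sm := (summable_norm_sum_mul_antidiagonal_of_summable_norm sf sg).of_norm.hasSum
  rw [← this] at sm
  refine sm.congr_fun fun n => ?_
  rw [coeff_mul, Finset.sum_mul]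
  refine Finset.sum_congr rfl fun p hp => ?_
  rw [← Finset.HasAntidiagonal.mem_antidiagonal.1 hp, pow_add]
  ring

lemma rep_C (z : ℂ) : Rep (C z) (fun _ => z) := by
  intro q h0 h1
  have := hasSum_single (f := fun n : ℕ => coeff n (C z) * q ^ n) 0
    (fun n hn => by simp [coeff_C, hn])
  simpa using this

lemma rep_X : Rep (X : PowerSeries ℂ) (fun q => q) := by
  intro q h0 h1
  have := hasSum_single (f := fun n : ℕ => coeff n (X : PowerSeries ℂ) * q ^ n) 1
    (fun n hn => by simp [coeff_X, hn])
  simpa using this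

lemma Rep.pow {c : PowerSeries ℂ} {f : ℂ → ℂ} (hf : Rep c f) (n : ℕ) :
    Rep (c ^ n) (fun q => f q ^ n) := by
  induction n with
  | zero => simpa using rep_C 1
  | succ n ih => simp only [pow_succ]; exact ih.mul hf

lemma Rep.hasFP {c : PowerSeries ℂ} {f : ℂ → ℂ} (hf : Rep c f) :
    HasFPowerSeriesAt (ev c) (FormalMultilinearSeries.ofScalars ℂ fun n => coeff n c) 0 := by
  rw [hasFPowerSeriesAt_iff]
  filter_upwards [Metric.ball_mem_nhds (0 : ℂ) one_pos] with z hz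
  rw [mem_ball_zero_iff] at hz
  simp only [FormalMultilinearSeries.coeff_ofScalars, zero_add, smul_eq_mul]
  exact (hf.hs hz).congr_fun fun n => by ring

lemma Rep.unique {c d : PowerSeries ℂ} {f : ℂ → ℂ} (hc : Rep c f) (hd : Rep d f) : c = d := by
  have e0 : ∀ᶠ z in 𝓝[≠] (0 : ℂ), ev c z = ev d z := by
    filter_upwards [self_mem_nhdsWithin, nhdsWithin_le_nhds (Metric.ball_mem_nhds (0 : ℂ) one_pos)]
      with z hz hz1
    rw [mem_ball_zero_iff] at hz1
    rw [hc.ev_eq hz hz1, hd.ev_eq hz hz1]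
  have e1 : ev c =ᶠ[𝓝 0] ev d :=
    (hc.hasFP.analyticAt.frequently_eq_iff_eventually_eq hd.hasFP.analyticAt).1 e0.frequently
  have := (hc.hasFP.congr e1).eq_formalMultilinearSeries hd.hasFP
  ext n
  have h := congrArg (fun p => FormalMultilinearSeries.coeff p n) this
  simpa [FormalMultilinearSeries.coeff_ofScalars] using h

lemma Rep.bound {c : PowerSeries ℂ} {f : ℂ → ℂ} (hf : Rep c f) (h1 : ‖q‖ < 1) :
    ∃ (u : ℕ → ℝ) (r : ℝ), Summable u ∧ ‖q‖ < r ∧ r < 1 ∧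
      ∀ (n : ℕ) (w : ℂ), w ∈ Metric.ball (0 : ℂ) r → ‖coeff n c * w ^ n‖ ≤ u n := by
  obtain ⟨r, hr, hr1⟩ := exists_between h1
  have hr0 : 0 ≤ r := (norm_nonneg q).trans hr.le
  refine ⟨fun n => ‖coeff n c * (r : ℂ) ^ n‖, r, hf.summable_norm ?_, hr, hr1, ?_⟩
  · rw [Complex.norm_real, Real.norm_of_nonneg hr0]; exact hr1
  · intro n w hw
    rw [mem_ball_zero_iff] at hw
    show ‖coeff n c * w ^ n‖ ≤ ‖coeff n c * (r : ℂ) ^ n‖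
    rw [norm_mul, norm_mul, norm_pow, norm_pow, Complex.norm_real, Real.norm_of_nonneg hr0]
    gcongr

lemma Rep.diff {c : PowerSeries ℂ} {f : ℂ → ℂ} (hf : Rep c f) (h1 : ‖q‖ < 1) :
    DifferentiableAt ℂ (ev c) q := by
  obtain ⟨u, r, hu, hq, hr, hb⟩ := hf.bound h1
  exact (Complex.differentiableOn_tsum_of_summable_norm hu (fun i => by fun_prop)
    Metric.isOpen_ball hb).differentiableAt
    (Metric.isOpen_ball.mem_nhds (by rwa [mem_ball_zero_iff]))

lemma Rep.deriv_hs {c : PowerSeries ℂ} {f : ℂ → ℂ} (hf : Rep c f) (h1 : ‖q‖ < 1) :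
    HasSum (fun n : ℕ => (n : ℂ) * coeff n c * q ^ n) (q * deriv (ev c) q) := by
  obtain ⟨u, r, hu, hq, hr, hb⟩ := hf.bound h1
  have := (Complex.hasSum_deriv_of_summable_norm hu (fun i => by fun_prop)
    Metric.isOpen_ball hb (by rwa [mem_ball_zero_iff])).mul_left q
  refine this.congr_fun fun n => ?_
  rw [deriv_const_mul_field, deriv_pow_field]
  rcases n with _ | n
  · simp
  · simp [pow_succ]; ring

lemma Rep.ev_eventually {c : PowerSeries ℂ} {f : ℂ → ℂ} (hf : Rep c f) (h0 : q ≠ 0) (h1 : ‖q‖ < 1) :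
    f =ᶠ[𝓝 q] ev c := by
  filter_upwards [isOpen_ne.mem_nhds h0,
    Metric.isOpen_ball.mem_nhds (show q ∈ Metric.ball (0 : ℂ) 1 by rwa [mem_ball_zero_iff])] with z hz hz1
  rw [mem_ball_zero_iff] at hz1
  exact (hf.ev_eq hz hz1).symm

lemma Rep.inv {c : PowerSeries ℂ} {f : ℂ → ℂ} (hf : Rep c f) (hc : coeff 0 c ≠ 0)
    (hne : ∀ q : ℂ, q ≠ 0 → ‖q‖ < 1 → f q ≠ 0) : Rep c⁻¹ (fun q => (f q)⁻¹) := by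
  have hev : ∀ q : ℂ, ‖q‖ < 1 → ev c q ≠ 0 := by
    intro q h1
    by_cases h0 : q = 0
    · rw [h0, ev_zero]; exact hc
    · rw [hf.ev_eq h0 h1]; exact hne q h0 h1
  have hd : DifferentiableOn ℂ (fun q => (ev c q)⁻¹) (Metric.ball 0 ((1 : NNReal) : ℝ)) := by
    intro q hq
    have hq : ‖q‖ < 1 := by simpa using hq
    exact ((hf.diff hq).inv (hev q hq)).differentiableWithinAt
  let d : PowerSeries ℂ := PowerSeries.mk fun n =>
    (n.factorial : ℂ)⁻¹ * iteratedDeriv n (fun q => (ev c q)⁻¹) 0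
  have hd : Rep d (fun q => (f q)⁻¹) := by
    intro q h0 h1
    have := Complex.hasSum_taylorSeries_on_ball hd (z := q) (by simpa using h1)
    simp only [hf.ev_eq h0 h1] at this
    refine this.congr_fun fun n => ?_
    simp [d]; ring
  have h1 : c * d = 1 := by
    refine ((hf.mul hd).congr fun q h0 h1 => ?_).unique (f := fun _ => 1) (by simpa using rep_C 1)
    exact mul_inv_cancel₀ (hne q h0 h1)
  have : d = c⁻¹ := by
    rw [PowerSeries.eq_inv_iff_mul_eq_one (by simpa using hc), mul_comm, h1]
  rw [← this]; exact hd

/-- represented by an integral power series -/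
def RepZ (c : PowerSeries ℤ) (f : ℂ → ℂ) : Prop := Rep (PowerSeries.map (Int.castRingHom ℂ) c) f

lemma RepZ.mul {c d : PowerSeries ℤ} {f g : ℂ → ℂ} (hf : RepZ c f) (hg : RepZ d g) :
    RepZ (c * d) (fun q => f q * g q) := by
  rw [RepZ, _root_.map_mul]; exact Rep.mul hf hg

lemma RepZ.sub {c d : PowerSeries ℤ} {f g : ℂ → ℂ} (hf : RepZ c f) (hg : RepZ d g) :
    RepZ (c - d) (fun q => f q - g q) := by
  rw [RepZ, _root_.map_sub]; exact Rep.sub hf hg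

lemma RepZ.pow {c : PowerSeries ℤ} {f : ℂ → ℂ} (hf : RepZ c f) (n : ℕ) :
    RepZ (c ^ n) (fun q => f q ^ n) := by
  rw [RepZ, _root_.map_pow]; exact Rep.pow hf n

lemma repZ_C (z : ℤ) : RepZ (C z) (fun _ => z) := by
  rw [RepZ, PowerSeries.map_C]; exact rep_C _

lemma repZ_X : RepZ X (fun q => q) := by
  rw [RepZ, PowerSeries.map_X]; exact rep_X

lemma RepZ.unique {c d : PowerSeries ℤ} {f : ℂ → ℂ} (hc : RepZ c f) (hd : RepZ d f) : c = d := by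
  have := Rep.unique hc hd
  ext n
  have h := congrArg (coeff n) this
  simpa using h

lemma RepZ.inv {c : PowerSeries ℤ} {f : ℂ → ℂ} (hf : RepZ c f) (hc : coeff 0 c = 1)
    (hne : ∀ q : ℂ, q ≠ 0 → ‖q‖ < 1 → f q ≠ 0) :
    RepZ (PowerSeries.invOfUnit c 1) (fun q => (f q)⁻¹) := by
  have h := Rep.inv hf (by simp at hc; simp [hc]) hne
  have e : PowerSeries.map (Int.castRingHom ℂ) (PowerSeries.invOfUnit c 1)
      = (PowerSeries.map (Int.castRingHom ℂ) c)⁻¹ := by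
    rw [PowerSeries.eq_inv_iff_mul_eq_one (by rw [← coeff_zero_eq_constantCoeff_apply, coeff_map, hc]; simp), ← _root_.map_mul, mul_comm,
      PowerSeries.mul_invOfUnit c 1 (by simpa using hc), _root_.map_one]
  rw [RepZ, e]; exact h

end RK

namespace RK

open PowerSeries

variable {q : ℂ}

/-- integral theta series -/
noncomputable def thS (m a : ℕ) : PowerSeries ℤ := PowerSeries.mk fun n =>
  ∑ j ∈ (Finset.Icc (-(n : ℤ)) n).filter (fun j => (m : ℤ) * tri j + a * j = n), (-1) ^ j.natAbs

lemma exp_ge {m a : ℕ} (ha : 0 < a) (ham : a < m) (j : ℤ) : |j| ≤ (m : ℤ) * tri j + a * j := by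
  have h := two_tri j
  have ha' : (1 : ℤ) ≤ a := by exact_mod_cast ha
  have ham' : (a : ℤ) + 1 ≤ m := by exact_mod_cast ham
  rcases le_or_gt 0 j with hj | hj
  · rw [abs_of_nonneg hj]
    have : 0 ≤ tri j := by
      rcases eq_or_lt_of_le hj with h' | h'
      · rw [← h']; decide
      · nlinarith
    nlinarith
  · rw [abs_of_neg hj]
    have ht : -j ≤ tri j := by nlinarith
    nlinarith

lemma negone_abs (j : ℤ) : (((-1) ^ j.natAbs : ℤ) : ℂ) = (-1) ^ j := by
  push_cast
  rcases Int.natAbs_eq j with h | h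
  · conv_rhs => rw [h, zpow_natCast]
  · conv_rhs => rw [h, zpow_neg, zpow_natCast, ← inv_pow]
    norm_num

lemma thfib {m a : ℕ} (ha : 0 < a) (ham : a < m) (w : ℕ → ℂ)
    (hs : Summable fun j : ℤ => w ((m : ℤ) * tri j + a * j).toNat * T m a (-1) q j) :
    HasSum (fun n : ℕ => w n * (coeff n (thS m a) : ℤ) * q ^ n)
      (∑' j : ℤ, w ((m : ℤ) * tri j + a * j).toNat * T m a (-1) q j) := by
  refine (hs.hasSum.tsum_fiberwise fun j : ℤ => ((m : ℤ) * tri j + a * j).toNat).congr_fun ?_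
  intro n
  have hset : (fun j : ℤ => ((m : ℤ) * tri j + a * j).toNat) ⁻¹' {n}
      = ((Finset.Icc (-(n : ℤ)) n).filter (fun j => (m : ℤ) * tri j + a * j = n) : Finset ℤ) := by
    ext j
    have := exp_ge ha ham j
    have h2 := abs_le.1 this
    have h3 := abs_nonneg j
    simp only [Set.mem_preimage, Set.mem_singleton_iff, Finset.coe_filter, Finset.mem_Icc,
      Set.mem_ofPred_eq]
    omega
  rw [hset, Finset.tsum_subtype' _ (fun j : ℤ => w ((m : ℤ) * tri j + a * j).toNat * T m a (-1) q j),
    thS, coeff_mk]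
  push_cast
  rw [Finset.mul_sum, Finset.sum_mul]
  refine Finset.sum_congr rfl fun j hj => ?_
  have hj := (Finset.mem_filter.1 hj).2
  have := negone_abs j
  push_cast at this
  rw [T, hj, this, Int.toNat_natCast, zpow_natCast]
  ring

lemma th_rep {m a : ℕ} (ha : 0 < a) (ham : a < m) : RepZ (thS m a) (th m a (-1)) := by
  intro q h0 h1
  have s := (T_summ0 h0 h1 (by omega : 0 < m) a m1n).of_norm
  have := thfib (q := q) ha ham (fun _ => 1) (by simpa using s)
  simpa [th_def] using this

lemma th_deriv {m a : ℕ} (ha : 0 < a) (ham : a < m) (h0 : q ≠ 0) (h1 : ‖q‖ < 1) :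
    HasDerivAt (th m a (-1)) (Dth m a (-1) q / q) q := by
  have r := th_rep ha ham
  have s := (Dth_summ h0 h1 (by omega : 0 < m) a m1n).of_norm
  have e : ∀ j : ℤ, ((((m : ℤ) * tri j + a * j).toNat : ℕ) : ℂ)
      = (((m : ℤ) * tri j + a * j : ℤ) : ℂ) := by
    intro j
    have := exp_ge ha ham j
    have h3 := abs_nonneg j
    rw [← Int.cast_natCast, Int.toNat_of_nonneg (by omega)]
  have f := thfib (q := q) ha ham (fun n => (n : ℂ)) (by simp only [e]; exact s)
  simp only [e] at f
  have g := r.deriv_hs h1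
  have : Dth m a (-1) q = q * deriv (ev (PowerSeries.map (Int.castRingHom ℂ) (thS m a))) q := by
    refine HasSum.unique f ?_
    simpa using g
  rw [this, mul_div_cancel_left₀ _ h0]
  exact (r.diff h1).hasDerivAt.congr_of_eventuallyEq (r.ev_eventually h0 h1)

lemma EC_th (h0 : q ≠ 0) (h1 : ‖q‖ < 1) (m : ℕ) (hm : 0 < m) :
    th (3 * m) m (-1) q = EC (q ^ m) := by
  rw [th_prod h0 h1 (b := 2 * m) (by omega) (by omega) (by norm_num), EC_pow, EC_pow,
    PP_dis h1 m 3 (-1) hm]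
  simp only [Fin.prod_univ_three]
  simp only [Fin.val_zero, Fin.val_one, Fin.val_two]
  rw [show m * 3 = 3 * m by ring, show m + m * 0 = m by ring, show m + m * 1 = 2 * m by ring,
    show m + m * 2 = 3 * m by ring]
  ring

lemma EC_rep (m : ℕ) (hm : 0 < m) : RepZ (thS (3 * m) m) (fun q => EC (q ^ m)) :=
  (th_rep hm (by omega)).congr fun _ h0 h1 => EC_th h0 h1 m hm

lemma thS_zero {m a : ℕ} : coeff 0 (thS m a) = 1 := by
  rw [thS, coeff_mk]
  simp [Finset.filter_singleton, tri]

lemma th_sq (m a : ℕ) (s : ℂ) : th m a s (q ^ 2) = th (2 * m) (2 * a) s q := by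
  refine tsum_congr fun j => ?_
  rw [← zpow_natCast q 2, ← zpow_mul]; congr 2; push_cast; ring

lemma FF_rep : ∃ c : PowerSeries ℤ, RepZ c FF := by
  have hK := th_rep (m := 5) (a := 1) (by norm_num) (by norm_num)
  have hH := th_rep (m := 5) (a := 2) (by norm_num) (by norm_num)
  have hK2 : RepZ (thS (2 * 5) (2 * 1)) (fun q => th 5 1 (-1) (q ^ 2)) :=
    (th_rep (m := 2 * 5) (a := 2 * 1) (by norm_num) (by norm_num)).congr fun _ _ _ => (th_sq _ _ _).symm
  have hH2 : RepZ (thS (2 * 5) (2 * 2)) (fun q => th 5 2 (-1) (q ^ 2)) :=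
    (th_rep (m := 2 * 5) (a := 2 * 2) (by norm_num) (by norm_num)).congr fun _ _ _ => (th_sq _ _ _).symm
  have hHi := hH.inv thS_zero fun q h0 h1 => H_ne h0 h1
  have hH2i := hH2.inv thS_zero fun q h0 h1 => H_ne (pow_ne_zero 2 h0) (norm_pow_lt h1 two_pos)
  have hk := (repZ_X.mul (hK.mul hHi)).mul ((hK2.mul hH2i).pow 2)
  have e1 := EC_rep 1 one_pos
  have e2 := (EC_rep 2 two_pos).inv thS_zero fun q h0 h1 => E_ne h1 2 two_pos
  have e5 := (EC_rep 5 (by norm_num)).inv thS_zero fun q h0 h1 => E_ne h1 5 (by norm_num)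
  have e10 := EC_rep 10 (by norm_num)
  have := ((repZ_C 1).sub ((repZ_C 2).mul hk)).mul
    (repZ_X.mul (((e1.pow 2).mul (e10.pow 4)).mul ((e2.pow 4).mul (e5.pow 2))))
  refine ⟨_, Rep.congr this ?_⟩
  intro q h0 h1
  simp only [FF, kk, rr, pow_one]
  push_cast
  field_simp

lemma rr_logderiv (h0 : q ≠ 0) (h1 : ‖q‖ < 1) :
    HasDerivAt rr (rr q * ((EC q ^ 5 / EC (q ^ 5) - 1) / 5) / q) q := by
  have dK := th_deriv (m := 5) (a := 1) (by norm_num) (by norm_num) h0 h1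
  have dH := th_deriv (m := 5) (a := 2) (by norm_num) (by norm_num) h0 h1
  have hK := K_ne h0 h1
  have hH := H_ne h0 h1
  have d := dK.div dH hH
  have i := I4 h0 h1
  have kh := KH h0 h1
  have e1 := EC_ne h1
  have e5 := E_ne h1 5 (by norm_num)
  have : EC q ^ 5 / EC (q ^ 5) = EC q ^ 6 / (th 5 1 (-1) q * th 5 2 (-1) q) := by
    rw [kh]; field_simp
  refine d.congr_deriv ?_
  rw [this, ← i, rr]
  field_simp
  ring

lemma kk_logderiv (h0 : q ≠ 0) (h1 : ‖q‖ < 1) :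
    HasDerivAt kk
      (kk q * ((EC q ^ 5 / EC (q ^ 5) + 4 * (EC (q ^ 2) ^ 5 / EC (q ^ 10))) / 5) / q) q := by
  have d1 := rr_logderiv h0 h1
  have d2 := rr_logderiv (pow_ne_zero 2 h0) (norm_pow_lt h1 (m := 2) two_pos)
  have d3 : HasDerivAt (fun q : ℂ => rr (q ^ 2)) _ q :=
    HasDerivAt.comp (h := fun q : ℂ => q ^ 2) q d2 (hasDerivAt_pow 2 q)
  have d := ((hasDerivAt_id q).mul d1).mul (d3.pow 2)
  refine d.congr_deriv ?_
  rw [kk, ← pow_mul]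
  norm_num
  field_simp
  ring

lemma FF_deriv (h0 : q ≠ 0) (h1 : ‖q‖ < 1) :
    HasDerivAt FF ((q * EC q ^ 8 * EC (q ^ 10) ^ 3 / EC (q ^ 2) ^ 7) / q) q := by
  have d := kk_logderiv h0 h1
  have hk := kk_ne h0 h1
  have hX := X2_ne h0 h1
  have k2 := kX2 h0 h1
  have k1 := kX1 h0 h1
  have hne : 1 + kk q - kk q ^ 2 ≠ 0 := by rw [k2]; exact mul_ne_zero hk hX
  have d2 := (d.mul ((d.const_mul 2).const_sub 1)).div ((d.const_add 1).sub (d.pow 2)) hne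
  have ee : FF =ᶠ[𝓝 q] fun q => kk q * (1 - 2 * kk q) / (1 + kk q - kk q ^ 2) := by
    filter_upwards [isOpen_ne.mem_nhds h0,
      Metric.isOpen_ball.mem_nhds (show q ∈ Metric.ball (0 : ℂ) 1 by rwa [mem_ball_zero_iff])]
      with z hz hz1
    rw [mem_ball_zero_iff] at hz1
    exact FF_eq hz hz1
  refine HasDerivAt.congr_of_eventuallyEq (HasDerivAt.congr_deriv d2 ?_) ee
  rw [← Y_eq h0 h1]
  simp only [Pi.sub_apply, Pi.pow_apply, Pi.mul_apply]
  generalize (EC q ^ 5 / EC (q ^ 5) + 4 * (EC (q ^ 2) ^ 5 / EC (q ^ 10))) / 5 = Y at *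
  rw [k2]
  have e1 : X1 q = (1 - 4 * kk q - kk q ^ 2) / kk q := by rw [k1]; field_simp
  have e2 : X2 q = (1 + kk q - kk q ^ 2) / kk q := by rw [k2]; field_simp
  rw [e1, e2]
  generalize kk q = k at *
  field_simp
  ring

end RK

namespace RK

open PowerSeries

variable {q : ℂ}

lemma poly_id {R : Type*} [CommRing R] (x : R) :
    x * (1 - x - x ^ 2) ^ 8 * 1 ^ 3 - (1 - x ^ 2 - x ^ 4) ^ 7 * (x - 8 * x ^ 2 + 27 * x ^ 3 - 56 * x ^ 4)
      = x ^ 5 * ((105) * x ^ 0 + (-224) * x ^ 1 + (-273) * x ^ 2 + (720) * x ^ 3 + (-265) * x ^ 4 + (120) * x ^ 5 + (1421) * x ^ 6 + (-2688) * x ^ 7 + (-525) * x ^ 8 + (1400) * x ^ 9 + (-2030) * x ^ 10 + (4088) * x ^ 11 + (861) * x ^ 12 + (-2240) * x ^ 13 + (2065) * x ^ 14 + (-4200) * x ^ 15 + (-427) * x ^ 16 + (1176) * x ^ 17 + (-1330) * x ^ 18 + (2800) * x ^ 19 + (-175) * x ^ 20 + (280) * x ^ 21 + (385) * x ^ 22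 + (-840) * x ^ 23 + (190) * x ^ 24 + (-400) * x ^ 25 + (27) * x ^ 26 + (-56) * x ^ 27) := by
  ring

lemma low1 : (X : PowerSeries ℤ) ^ 5 ∣ thS (3 * 1) 1 - (1 - X - X ^ 2) := by
  rw [PowerSeries.X_pow_dvd_iff]
  intro n hn
  rw [_root_.map_sub, sub_eq_zero, thS, coeff_mk]
  interval_cases n <;> simp only [_root_.map_sub, coeff_X, coeff_X_pow, coeff_one] <;> decide

lemma low2 : (X : PowerSeries ℤ) ^ 5 ∣ thS (3 * 2) 2 - (1 - X ^ 2 - X ^ 4) := by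
  rw [PowerSeries.X_pow_dvd_iff]
  intro n hn
  rw [_root_.map_sub, sub_eq_zero, thS, coeff_mk]
  interval_cases n <;> simp only [_root_.map_sub, coeff_X_pow, coeff_one] <;> decide

lemma low10 : (X : PowerSeries ℤ) ^ 5 ∣ thS (3 * 10) 10 - 1 := by
  rw [PowerSeries.X_pow_dvd_iff]
  intro n hn
  rw [_root_.map_sub, sub_eq_zero, thS, coeff_mk]
  interval_cases n <;> simp only [coeff_one] <;> decide

lemma low_d (e1 e2 e10 d : PowerSeries ℤ) (h1 : X ^ 5 ∣ e1 - (1 - X - X ^ 2))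
    (h2 : X ^ 5 ∣ e2 - (1 - X ^ 2 - X ^ 4)) (h10 : X ^ 5 ∣ e10 - 1) (hc : coeff 0 e2 = 1)
    (h : e2 ^ 7 * d = X * e1 ^ 8 * e10 ^ 3) :
    X ^ 5 ∣ d - (X - 8 * X ^ 2 + 27 * X ^ 3 - 56 * X ^ 4) := by
  rw [← Ideal.mem_span_singleton, ← Ideal.Quotient.mk_eq_mk_iff_sub_mem] at *
  set φ := Ideal.Quotient.mk (Ideal.span {(X : PowerSeries ℤ) ^ 5}) with hφ
  have hu : IsUnit e2 := by
    rw [PowerSeries.isUnit_iff_constantCoeff, ← coeff_zero_eq_constantCoeff_apply, hc]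
    exact isUnit_one
  have hu2 : IsUnit (φ e2 ^ 7) := (hu.map φ).pow 7
  apply hu2.mul_left_cancel
  rw [← _root_.map_pow, ← _root_.map_mul, h]
  simp only [_root_.map_mul, _root_.map_pow, h1, h2, h10]
  have := congrArg φ (poly_id (X : PowerSeries ℤ))
  rw [_root_.map_sub, _root_.map_mul φ (X ^ 5)] at this
  have h5 : φ (X ^ 5) = 0 := by
    rw [hφ, Ideal.Quotient.eq_zero_iff_mem]; exact Ideal.mem_span_singleton_self _
  rw [h5, zero_mul, sub_eq_zero] at this
  simpa only [_root_.map_mul, _root_.map_pow] using this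

lemma EC_ofReal {q : ℝ} (h0 : 0 < q) (h1 : q < 1) : ((eulerE q : ℝ) : ℂ) = EC (q : ℂ) := by
  have hm : Multipliable (fun j : ℕ => 1 - q ^ (j + 1)) := by
    have : Summable fun j : ℕ => ‖-q ^ (j + 1)‖ := by
      simp only [norm_neg, norm_pow, Real.norm_eq_abs, abs_of_pos h0]
      exact (summable_nat_add_iff 1).2 (summable_geometric_of_lt_one h0.le h1)
    exact (multipliable_one_add_of_summable this).congr fun j => by ring
  have := hm.map_tprod Complex.ofRealHom Complex.continuous_ofReal
  simp only [Complex.ofRealHom_eq_coe] at this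
  rw [eulerE, this, EC]
  push_cast
  rfl

noncomputable def GG (q : ℂ) : ℂ := q * EC q ^ 8 * EC (q ^ 10) ^ 3 / EC (q ^ 2) ^ 7

lemma GG_hs {c : PowerSeries ℤ} (hc : RepZ c FF) (h0 : q ≠ 0) (h1 : ‖q‖ < 1) :
    HasSum (fun n : ℕ => (n : ℂ) * (coeff n c : ℤ) * q ^ n) (GG q) := by
  have h := Rep.deriv_hs hc h1
  have hd := ((FF_deriv h0 h1).congr_of_eventuallyEq (Rep.ev_eventually hc h0 h1).symm).deriv
  rw [hd, mul_div_cancel₀ _ h0] at h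
  simpa [GG] using h

lemma GG_low {c : PowerSeries ℤ} (hc : RepZ c FF) :
    X ^ 5 ∣ PowerSeries.mk (fun n => (n : ℤ) * coeff n c)
      - (X - 8 * X ^ 2 + 27 * X ^ 3 - 56 * X ^ 4) := by
  have hd : RepZ (PowerSeries.mk (fun n => (n : ℤ) * coeff n c)) GG := by
    intro q h0 h1
    have := GG_hs hc h0 h1
    simpa using this
  have e1 := EC_rep 1 one_pos
  have e2 := EC_rep 2 two_pos
  have e10 := EC_rep 10 (by norm_num)
  refine low_d _ _ _ _ low1 low2 low10 thS_zero ?_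
  refine RepZ.unique ((e2.pow 7).mul hd) ?_
  refine Rep.congr ((repZ_X.mul (e1.pow 8)).mul (e10.pow 3)) ?_
  intro q h0 h1
  have := E_ne h1 2 two_pos
  simp only [GG, pow_one]
  field_simp

lemma low_vals {c : PowerSeries ℤ} (hc : RepZ c FF) :
    coeff 1 c = 1 ∧ coeff 2 c = -4 ∧ coeff 3 c = 9 ∧ coeff 4 c = -14 := by
  have h := PowerSeries.X_pow_dvd_iff.1 (GG_low hc)
  have e8 : (8 : PowerSeries ℤ) = C 8 := by simp
  have e27 : (27 : PowerSeries ℤ) = C 27 := by simp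
  have e56 : (56 : PowerSeries ℤ) = C 56 := by simp
  rw [e8, e27, e56] at h
  have a1 := h 1 (by norm_num)
  have a2 := h 2 (by norm_num)
  have a3 := h 3 (by norm_num)
  have a4 := h 4 (by norm_num)
  simp only [_root_.map_sub, _root_.map_add, coeff_mk, coeff_C_mul, coeff_X, coeff_X_pow] at a1 a2 a3 a4
  norm_num at a1 a2 a3 a4
  refine ⟨?_, ?_, ?_, ?_⟩ <;> omega

end RK


theorem stmt_9 :
    ∃ a : ℕ → ℤ,
      (∀ q : ℝ, 0 < q → q < 1 →
        Summable (fun n : ℕ => |(n : ℝ) * (a n : ℝ) * q ^ n|) ∧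
        q * eulerE q ^ 8 * eulerE (q ^ 10) ^ 3 / eulerE (q ^ 2) ^ 7
          = ∑' n : ℕ, (n : ℝ) * (a n : ℝ) * q ^ n) ∧
      a 1 = 1 ∧ a 2 = -4 ∧ a 3 = 9 ∧ a 4 = -14 := by
  obtain ⟨c, hc⟩ := RK.FF_rep
  refine ⟨fun n => PowerSeries.coeff n c, ?_, RK.low_vals hc⟩
  intro q h0 h1
  have hq0 : (q : ℂ) ≠ 0 := by exact_mod_cast h0.ne'
  have hq1 : ‖(q : ℂ)‖ < 1 := by
    rw [Complex.norm_real, Real.norm_eq_abs, abs_of_pos h0]; exact h1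
  have h := RK.GG_hs hc hq0 hq1
  have hG : RK.GG (q : ℂ)
      = ((q * eulerE q ^ 8 * eulerE (q ^ 10) ^ 3 / eulerE (q ^ 2) ^ 7 : ℝ) : ℂ) := by
    rw [RK.GG]
    push_cast
    rw [RK.EC_ofReal h0 h1, RK.EC_ofReal (pow_pos h0 10) (pow_lt_one₀ h0.le h1 (by norm_num)),
      RK.EC_ofReal (pow_pos h0 2) (pow_lt_one₀ h0.le h1 (by norm_num))]
    push_cast
    rfl
  rw [hG] at h
  have h2 : HasSum (fun n : ℕ => (n : ℝ) * ((PowerSeries.coeff n c : ℤ) : ℝ) * q ^ n)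
      (q * eulerE q ^ 8 * eulerE (q ^ 10) ^ 3 / eulerE (q ^ 2) ^ 7) := by
    rw [← Complex.hasSum_ofReal]
    simpa using h
  exact ⟨h2.summable.abs, h2.tsum_eq.symm⟩
end
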